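/- arXiv:1902.03822 — 3 statements merged into one kernel-verified Lean document; each statement's English description precedes it below -/
import Mathlib

section
/- There is a fixed finitely generated submonoid of the one-relator group G = Gp⟨a, t | a(tat⁻¹) = (tat⁻¹)a⟩ whose membership problem within G is undecidable: there exists a submonoid S of G such that S.FG holds and the predicate on words l : List (Fin 2 × Bool) given by π(l) ∈ S is not ComputablePred. -/
/-- The relator `a t a t⁻¹ a⁻¹ t a⁻¹ t⁻¹` (i.e. `a(tat⁻¹)=(tat⁻¹)a`), with `a = of 0`, `t = of 1`. -/
def oneRel : FreeGroup (Fin 2) :=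
  FreeGroup.of 0 * FreeGroup.of 1 * FreeGroup.of 0 * (FreeGroup.of 1)⁻¹ *
    (FreeGroup.of 0)⁻¹ * FreeGroup.of 1 * (FreeGroup.of 0)⁻¹ * (FreeGroup.of 1)⁻¹

/-- The one-relator group `G = Gp⟨a,t | a(tat⁻¹)=(tat⁻¹)a⟩`. -/
abbrev G : Type := PresentedGroup {oneRel}

/-- Evaluation of words: the letter `(i, true)` goes to the image of `FreeGroup.of i` in `G`
and `(i, false)` to its inverse. -/
def π (l : List (Fin 2 × Bool)) : G := PresentedGroup.mk {oneRel} (FreeGroup.mk l)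


open scoped Pointwise

namespace OneRelSub

/-- Rational subsets of a monoid. -/
inductive Rat' {M : Type} [Monoid M] : Set M → Prop
  | empty : Rat' ∅
  | single (g : M) : Rat' {g}
  | union {X Y : Set M} : Rat' X → Rat' Y → Rat' (X ∪ Y)
  | mul {X Y : Set M} : Rat' X → Rat' Y → Rat' (X * Y)
  | star {X : Set M} : Rat' X → Rat' (Submonoid.closure X : Set M)

/-- The generator attached to a transition. -/
def gen {M K : Type} [Group M] [Group K] (f : M →* K) (L : ℕ → K) (τ : ℕ × M × ℕ) : K :=
  L τ.1 * f τ.2.1 * (L τ.2.2)⁻¹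

/-- Thompson construction together with an extension property for invariants. -/
theorem thompson {M K H : Type} [Group M] [Group K] [Group H] (f : M →* K) (L : ℕ → K)
    (φ : M →* H) {X : Set M} (hX : Rat' X) :
    ∀ s e N : ℕ, s < N → e < N → ∃ N' ≥ N, ∃ T : Set (ℕ × M × ℕ), T.Finite ∧
      (∀ τ ∈ T, τ.1 < N' ∧ τ.2.2 < N') ∧
      (∀ w ∈ X, L s * f w * (L e)⁻¹ ∈ Submonoid.closure (gen f L '' T)) ∧
      ∀ U0 : ℕ → Set H, (∀ w ∈ X, ∀ h, φ w * h ∈ U0 s → h ∈ U0 e) →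
        ∃ U : ℕ → Set H, (∀ i < N, U i = U0 i) ∧
          ∀ τ ∈ T, ∀ h, φ τ.2.1 * h ∈ U τ.1 → h ∈ U τ.2.2 := by
  induction hX with
  | empty =>
    intro s e N hs he
    exact ⟨N, le_rfl, ∅, Set.finite_empty, by simp, by simp, fun U0 _ => ⟨U0, by simp, by simp⟩⟩
  | single g =>
    intro s e N hs he
    refine ⟨N, le_rfl, {(s, g, e)}, Set.finite_singleton _, by simp [hs, he], ?_, ?_⟩
    · rintro w rfl
      exact Submonoid.subset_closure (by simp [gen])
    · intro U0 h
      exact ⟨U0, by simp, by simpa using h⟩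
  | @union X Y hX hY ihX ihY =>
    intro s e N hs he
    obtain ⟨N1, hN1, T1, fT1, bT1, cT1, dT1⟩ := ihX s e N hs he
    obtain ⟨N2, hN2, T2, fT2, bT2, cT2, dT2⟩ := ihY s e N1 (by omega) (by omega)
    refine ⟨N2, by omega, T1 ∪ T2, fT1.union fT2, ?_, ?_, ?_⟩
    · rintro τ (h | h)
      · have := bT1 τ h; omega
      · exact bT2 τ h
    · rintro w (h | h)
      · exact Submonoid.closure_mono (Set.image_mono Set.subset_union_left) (cT1 w h)
      · exact Submonoid.closure_mono (Set.image_mono Set.subset_union_right) (cT2 w h)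
    · intro U0 hU
      obtain ⟨U1, e1, i1⟩ := dT1 U0 (fun w hw => hU w (Or.inl hw))
      obtain ⟨U2, e2, i2⟩ := dT2 U1 (fun w hw => by
        rw [e1 s hs, e1 e he]; exact hU w (Or.inr hw))
      refine ⟨U2, fun i hi => by rw [e2 i (by omega), e1 i hi], ?_⟩
      rintro τ (h | h)
      · have := bT1 τ h
        rw [e2 _ this.1, e2 _ this.2]; exact i1 τ h
      · exact i2 τ h
  | @mul X Y hX hY ihX ihY =>
    intro s e N hs he
    obtain ⟨N1, hN1, T1, fT1, bT1, cT1, dT1⟩ := ihX s N (N + 1) (by omega) (by omega)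
    obtain ⟨N2, hN2, T2, fT2, bT2, cT2, dT2⟩ := ihY N e N1 (by omega) (by omega)
    refine ⟨N2, by omega, T1 ∪ T2, fT1.union fT2, ?_, ?_, ?_⟩
    · rintro τ (h | h)
      · have := bT1 τ h; omega
      · exact bT2 τ h
    · rintro _ ⟨x, hx, y, hy, rfl⟩
      have h1 := Submonoid.closure_mono (Set.image_mono Set.subset_union_left) (cT1 x hx)
        (t := gen f L '' (T1 ∪ T2))
      have h2 := Submonoid.closure_mono (Set.image_mono Set.subset_union_right) (cT2 y hy)
        (t := gen f L '' (T1 ∪ T2))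
      have := mul_mem h1 h2
      simpa [mul_assoc] using this
    · intro U0 hU
      obtain ⟨U1, e1, i1⟩ := dT1 (Function.update U0 N {h | ∃ x ∈ X, φ x * h ∈ U0 s}) (by
        intro w hw h hh
        rw [Function.update_of_ne (by omega)] at hh
        rw [Function.update_self]
        exact ⟨w, hw, hh⟩)
      have e1' : ∀ i < N, U1 i = U0 i := fun i hi => by
        rw [e1 i (by omega), Function.update_of_ne (by omega)]
      have e1'' : U1 N = {h | ∃ x ∈ X, φ x * h ∈ U0 s} := by
        rw [e1 N (by omega), Function.update_self]
      obtain ⟨U2, e2, i2⟩ := dT2 U1 (by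
        intro w hw h hh
        rw [e1''] at hh
        obtain ⟨x, hx, hh⟩ := hh
        rw [e1' e he]
        apply hU (x * w) ⟨x, hx, w, hw, rfl⟩
        rwa [map_mul, mul_assoc])
      refine ⟨U2, fun i hi => by rw [e2 i (by omega), e1' i hi], ?_⟩
      rintro τ (h | h)
      · have := bT1 τ h
        rw [e2 _ this.1, e2 _ this.2]; exact i1 τ h
      · exact i2 τ h
  | @star X hX ihX =>
    intro s e N hs he
    obtain ⟨N1, hN1, T1, fT1, bT1, cT1, dT1⟩ := ihX N N (N + 1) (by omega) (by omega)
    refine ⟨N1, by omega, T1 ∪ {(s, 1, N), (N, 1, e)}, fT1.union (by simp), ?_, ?_, ?_⟩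
    · rintro τ (h | h | h)
      · exact bT1 τ h
      · subst h; simp; omega
      · have h : τ = _ := h
        subst h; simp; omega
    · intro w hw
      set C := Submonoid.closure (gen f L '' (T1 ∪ {(s, 1, N), (N, 1, e)})) with hC
      have h1 : L s * (L N)⁻¹ ∈ C :=
        Submonoid.subset_closure ⟨(s, 1, N), by simp, by simp [gen]⟩
      have h2 : L N * (L e)⁻¹ ∈ C :=
        Submonoid.subset_closure ⟨(N, 1, e), by simp, by simp [gen]⟩
      have h3 : L N * f w * (L N)⁻¹ ∈ C := by
        induction hw using Submonoid.closure_induction with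
        | mem x hx => exact Submonoid.closure_mono (Set.image_mono Set.subset_union_left) (cT1 x hx)
        | one => simp
        | mul x y _ _ hx hy => simpa [mul_assoc] using mul_mem hx hy
      simpa [mul_assoc] using mul_mem h1 (mul_mem h3 h2)
    · intro U0 hU
      obtain ⟨U1, e1, i1⟩ := dT1
        (Function.update U0 N {h | ∃ x ∈ Submonoid.closure X, φ x * h ∈ U0 s}) (by
        intro w hw h hh
        rw [Function.update_self] at hh ⊢
        obtain ⟨x, hx, hh⟩ := hh
        exact ⟨x * w, mul_mem hx (Submonoid.subset_closure hw), by rwa [map_mul, mul_assoc]⟩)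
      have e1' : ∀ i < N, U1 i = U0 i := fun i hi => by
        rw [e1 i (by omega), Function.update_of_ne (by omega)]
      have e1'' : U1 N = {h | ∃ x ∈ Submonoid.closure X, φ x * h ∈ U0 s} := by
        rw [e1 N (by omega), Function.update_self]
      refine ⟨U1, e1', ?_⟩
      rintro τ (h | h | h)
      · exact i1 τ h
      · subst h
        intro h hh
        simp only at hh ⊢
        rw [e1' s hs] at hh
        rw [e1'']
        exact ⟨1, one_mem _, by simpa using hh⟩
      · have h : τ = _ := h
        subst h
        intro h hh
        simp only at hh ⊢
        rw [e1' e he]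
        rw [e1''] at hh
        obtain ⟨x, hx, hh⟩ := hh
        exact hU x hx h (by simpa using hh)

/-- Block-diagonal permutation. -/
def permA {X : Type} (F : ℤ → Equiv.Perm X) : Equiv.Perm (ℤ × X) where
  toFun p := (p.1, F p.1 p.2)
  invFun p := (p.1, (F p.1).symm p.2)
  left_inv p := by simp
  right_inv p := by simp

/-- Shift permutation. -/
def permT (X : Type) : Equiv.Perm (ℤ × X) where
  toFun p := (p.1 - 1, p.2)
  invFun p := (p.1 + 1, p.2)
  left_inv p := by simp
  right_inv p := by simp

theorem permA_apply {X : Type} (F : ℤ → Equiv.Perm X) (p : ℤ × X) :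
    permA F p = (p.1, F p.1 p.2) := rfl

theorem permA_inv_apply {X : Type} (F : ℤ → Equiv.Perm X) (p : ℤ × X) :
    (permA F)⁻¹ p = (p.1, (F p.1)⁻¹ p.2) := rfl

theorem permT_apply {X : Type} (p : ℤ × X) : permT X p = (p.1 - 1, p.2) := rfl

theorem permT_inv_apply {X : Type} (p : ℤ × X) : (permT X)⁻¹ p = (p.1 + 1, p.2) := rfl

theorem exists_hom {X : Type} (F : ℤ → Equiv.Perm X) (hF : ∀ i, Commute (F i) (F (i + 1))) :
    ∃ Φ : G →* Equiv.Perm (ℤ × X), Φ (PresentedGroup.of 0) = permA F ∧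
      Φ (PresentedGroup.of 1) = permT X := by
  refine ⟨PresentedGroup.toGroup (f := ![permA F, permT X]) ?_, ?_, ?_⟩
  · rintro r rfl
    simp only [oneRel, map_mul, map_inv, FreeGroup.lift_apply_of, Matrix.cons_val_zero,
      Matrix.cons_val_one]
    ext1 p
    simp only [Equiv.Perm.mul_apply, permA_apply, permA_inv_apply, permT_apply, permT_inv_apply,
      Equiv.Perm.one_apply]
    obtain ⟨i, x⟩ := p
    have h := hF i
    have h2 : F i * F (i + 1) * (F i)⁻¹ * (F (i + 1))⁻¹ = 1 := by
      rw [h.eq]; group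
    have h3 := congrArg (fun g => g x) h2
    simp only [Equiv.Perm.mul_apply, Equiv.Perm.one_apply] at h3
    refine Prod.ext (by simp) ?_
    simpa using h3
  · simp [PresentedGroup.toGroup.of]
  · simp [PresentedGroup.toGroup.of]

/-- The conjugate `t^j a t^{-j}`. -/
def A (j : ℕ) : G :=
  (PresentedGroup.of 1 : G) ^ j * PresentedGroup.of 0 * ((PresentedGroup.of 1 : G) ^ j)⁻¹

theorem permT_pow {X : Type} (j : ℕ) (p : ℤ × X) : (permT X ^ j) p = (p.1 - j, p.2) := by
  induction j generalizing p with
  | zero => simp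
  | succ j ih => rw [pow_succ, Equiv.Perm.mul_apply, permT_apply, ih]; ext <;> simp; ring

theorem permT_pow_inv {X : Type} (j : ℕ) (p : ℤ × X) : (permT X ^ j)⁻¹ p = (p.1 + j, p.2) := by
  rw [Equiv.Perm.inv_eq_iff_eq, permT_pow]; simp

theorem hom_A {X : Type} (F : ℤ → Equiv.Perm X) (Φ : G →* Equiv.Perm (ℤ × X))
    (h0 : Φ (PresentedGroup.of 0) = permA F) (h1 : Φ (PresentedGroup.of 1) = permT X)
    (j : ℕ) (x : X) : Φ (A j) (0, x) = (0, F j x) := by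
  simp [A, h0, h1, Equiv.Perm.mul_apply, permT_pow, permT_pow_inv, permA_apply, -map_pow, map_pow Φ]

theorem hom_A_inv {X : Type} (F : ℤ → Equiv.Perm X) (Φ : G →* Equiv.Perm (ℤ × X))
    (h0 : Φ (PresentedGroup.of 0) = permA F) (h1 : Φ (PresentedGroup.of 1) = permT X)
    (j : ℕ) (x : X) : Φ (A j)⁻¹ (0, x) = (0, (F j)⁻¹ x) := by
  rw [map_inv, Equiv.Perm.inv_eq_iff_eq, hom_A F Φ h0 h1]; simp

theorem A_comm (j : ℕ) : A j * A (j + 1) = A (j + 1) * A j := by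
  have h0 : (PresentedGroup.of 0 : G) * PresentedGroup.of 1 * PresentedGroup.of 0 *
      (PresentedGroup.of 1)⁻¹ * (PresentedGroup.of 0)⁻¹ * PresentedGroup.of 1 *
      (PresentedGroup.of 0)⁻¹ * (PresentedGroup.of 1)⁻¹ = 1 :=
    PresentedGroup.one_of_mem (rels := {oneRel}) (x := oneRel) rfl
  have h : A 0 * A 1 * (A 0)⁻¹ * (A 1)⁻¹ = 1 := by
    rw [← h0]
    simp only [A]
    group
  have h' : A 0 * A 1 = A 1 * A 0 := by
    rw [mul_inv_eq_one, mul_inv_eq_iff_eq_mul] at h; exact h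
  have e1 : A j = (PresentedGroup.of 1 : G) ^ j * A 0 * ((PresentedGroup.of 1 : G) ^ j)⁻¹ := by
    simp [A]
  have e2 : A (j + 1) = (PresentedGroup.of 1 : G) ^ j * A 1 * ((PresentedGroup.of 1 : G) ^ j)⁻¹ := by
    simp only [A]; rw [pow_succ]; group
  rw [e1, e2]
  calc _ = (PresentedGroup.of 1 : G) ^ j * (A 0 * A 1) * ((PresentedGroup.of 1 : G) ^ j)⁻¹ := by group
    _ = _ := by rw [h']; group

/-- Images of the four path letters. -/
def e4 : Fin 4 → FreeGroup Bool × FreeGroup Bool :=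
  ![(FreeGroup.of true, 1), (1, FreeGroup.of true), (FreeGroup.of false, 1),
    (1, FreeGroup.of false)]

abbrev H2 : Type := FreeGroup Bool × FreeGroup Bool

def φ : FreeGroup (Fin 4) →* H2 := FreeGroup.lift e4

def ι : FreeGroup (Fin 4) →* G := FreeGroup.lift fun i => A i

/-- Extension of `e4` to all integers. -/
def eZ (i : ℤ) : H2 :=
  if i = 0 then e4 0 else if i = 1 then e4 1 else if i = 2 then e4 2 else if i = 3 then e4 3 else 1

theorem eZ_comm (i : ℤ) : Commute (eZ i) (eZ (i + 1)) := by
  unfold eZ Commute SemiconjBy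
  split_ifs <;> first | omega | simp [e4]

theorem eZ_fin (i : Fin 4) : eZ (i : ℕ) = e4 i := by
  fin_cases i <;> simp [eZ]

def lmul (g : H2) : Equiv.Perm (H2 × ℤ) where
  toFun p := (g * p.1, p.2)
  invFun p := (g⁻¹ * p.1, p.2)
  left_inv p := by simp
  right_inv p := by simp

open Classical in
noncomputable def ind (U : Set H2) (h : H2) : ℤ := if h ∈ U then 1 else 0

noncomputable def shear (U : Set H2) : Equiv.Perm (H2 × ℤ) where
  toFun p := (p.1, p.2 + ind U p.1)
  invFun p := (p.1, p.2 - ind U p.1)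
  left_inv p := by simp
  right_inv p := by simp

theorem lmul_apply (g : H2) (p : H2 × ℤ) : lmul g p = (g * p.1, p.2) := rfl
theorem lmul_inv_apply (g : H2) (p : H2 × ℤ) : (lmul g)⁻¹ p = (g⁻¹ * p.1, p.2) := rfl
theorem shear_apply (U : Set H2) (p : H2 × ℤ) : shear U p = (p.1, p.2 + ind U p.1) := rfl
theorem shear_inv_apply (U : Set H2) (p : H2 × ℤ) :
    (shear U)⁻¹ p = (p.1, p.2 - ind U p.1) := rfl

noncomputable def FU (U : ℕ → Set H2) (i : ℤ) : Equiv.Perm (H2 × ℤ) :=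
  if i < 4 then lmul (eZ i) else if i = 4 then 1 else shear (U (i - 5).toNat)

theorem FU_comm (U : ℕ → Set H2) (i : ℤ) : Commute (FU U i) (FU U (i + 1)) := by
  have hl : ∀ g g' : H2, Commute g g' → Commute (lmul g) (lmul g') := by
    intro g g' h
    ext1 p
    simp only [Equiv.Perm.mul_apply, lmul_apply, ← mul_assoc, h.eq]
  have hs : ∀ U V : Set H2, Commute (shear U) (shear V) := by
    intro U V
    ext1 p
    simp only [Equiv.Perm.mul_apply, shear_apply]
    ext <;> simp; ring
  unfold FU
  split_ifs <;> first | omega | exact hl _ _ (eZ_comm _) | exact hs _ _ | exact Commute.one_left _ |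
    exact Commute.one_right _

theorem exists_submonoid {X : Set (FreeGroup (Fin 4))} (hX : Rat' X) :
    ∃ S : Submonoid G, S.FG ∧ (∀ w ∈ X, A 5 * ι w * (A 6)⁻¹ ∈ S) ∧
      ∀ w, A 5 * ι w * (A 6)⁻¹ ∈ S → ∃ x ∈ X, φ x = φ w := by
  obtain ⟨N, hN, T, fT, bT, cT, dT⟩ :=
    thompson ι (fun j => A (5 + j)) φ hX 0 1 2 (by omega) (by omega)
  refine ⟨Submonoid.closure (gen ι (fun j => A (5 + j)) '' T),
    ⟨(fT.image (gen ι (fun j => A (5 + j)))).toFinset, by simp⟩, cT, ?_⟩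
  intro w hw
  obtain ⟨U, hU, hT⟩ := dT (fun i => if i = 0 then {1} else {h | ∃ x ∈ X, φ x * h = 1}) (by
    intro w hw h hh
    simpa using ⟨w, hw, by simpa using hh⟩)
  obtain ⟨Φ, h0, h1⟩ := exists_hom (FU U) (FU_comm U)
  have hι : ∀ (w : FreeGroup (Fin 4)) (p : H2 × ℤ), Φ (ι w) (0, p) = (0, (φ w * p.1, p.2)) := by
    intro w
    have hlow : ∀ i : Fin 4, FU U ((i : ℕ) : ℤ) = lmul (e4 i) := by
      intro i
      have := i.2
      rw [FU, if_pos (by omega), eZ_fin]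
    induction w using FreeGroup.induction_on with
    | C1 => simp
    | of i =>
      intro p
      simp only [ι, φ, FreeGroup.lift_apply_of, hom_A _ Φ h0 h1, hlow, lmul_apply]
    | inv_of i _ =>
      intro p
      simp only [ι, φ, map_inv, FreeGroup.lift_apply_of]
      rw [← map_inv, hom_A_inv _ Φ h0 h1, hlow, lmul_inv_apply]
    | mul x y hx hy =>
      intro p
      simp [hx, hy, mul_assoc]
  have hhigh : ∀ j : ℕ, FU U ((5 + j : ℕ) : ℤ) = shear (U j) := by
    intro j
    rw [FU, if_neg (by omega), if_neg (by omega)]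
    congr 2
    omega
  have hgen : ∀ p w q x, Φ (A (5 + p) * ι w * (A (5 + q))⁻¹) (0, x) =
      (0, (φ w * x.1, x.2 - ind (U q) x.1 + ind (U p) (φ w * x.1))) := by
    intro p w q x
    simp only [map_mul, Equiv.Perm.mul_apply]
    rw [hom_A_inv _ Φ h0 h1, hι, hom_A _ Φ h0 h1, hhigh, hhigh, shear_inv_apply, shear_apply]
  have hS : ∀ g ∈ Submonoid.closure (gen ι (fun j => A (5 + j)) '' T), ∀ x : H2 × ℤ,
      ∃ y : H2 × ℤ, Φ g (0, x) = (0, y) ∧ y.2 ≤ x.2 := by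
    intro g hg
    induction hg using Submonoid.closure_induction with
    | mem g hg =>
      obtain ⟨τ, hτ, rfl⟩ := hg
      intro x
      refine ⟨_, hgen _ _ _ x, ?_⟩
      have := hT τ hτ x.1
      simp only [ind]
      split_ifs <;> first | omega | (exfalso; tauto)
    | one => exact fun x => ⟨x, by simp, le_rfl⟩
    | mul g g' _ _ hg hg' =>
      intro x
      obtain ⟨y, hy, hy'⟩ := hg' x
      obtain ⟨z, hz, hz'⟩ := hg y
      exact ⟨z, by simp [hy, hz], by omega⟩
  obtain ⟨y, hy, hy'⟩ := hS _ hw ((φ w)⁻¹, 0)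
  have := hgen 0 w 1 ((φ w)⁻¹, 0)
  rw [show A 5 * ι w * (A 6)⁻¹ = A (5 + 0) * ι w * (A (5 + 1))⁻¹ from rfl, this] at hy
  simp only [Prod.mk.injEq, true_and] at hy
  subst hy
  rw [hU 0 (by omega), hU 1 (by omega)] at hy'
  simp only [ind] at hy'
  by_contra hcon
  simp at hy'
  split_ifs at hy' with h
  · apply hcon
    obtain ⟨x, hx, hxx⟩ := h
    exact ⟨x, hx, by rwa [mul_inv_eq_one] at hxx⟩
  · omega

end OneRelSub

namespace OneRelSub

def θ : FreeGroup (Fin 4) →* G × H2 := ι.prod φ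

def gl (i : Fin 4) : G × H2 := (A i, e4 i)

theorem θ_of (i : Fin 4) : θ (FreeGroup.of i) = gl i := by
  simp [θ, gl, ι, φ]

theorem gl_comm01 : Commute (gl 0) (gl 1) := by
  apply Prod.ext
  · exact A_comm 0
  · simp [gl, e4]

theorem gl_comm12 : Commute (gl 1) (gl 2) := by
  apply Prod.ext
  · exact A_comm 1
  · simp [gl, e4]

theorem gl_comm23 : Commute (gl 2) (gl 3) := by
  apply Prod.ext
  · exact A_comm 2
  · simp [gl, e4]

def blk (p : ℕ × ℕ) : G × H2 := gl 0 * (gl 1 ^ p.1 * gl 2 ^ p.2) * gl 3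

def bw : FreeMonoid (ℕ × ℕ) →* G × H2 := FreeMonoid.lift blk

def chain : List (ℕ × ℕ) → ℕ → ℕ → Prop
  | [], x, y => x = y
  | p :: l, x, y => x = p.1 ∧ chain l p.2 y

theorem chain_append (l l' : List (ℕ × ℕ)) (x z : ℕ) :
    chain (l ++ l') x z ↔ ∃ y, chain l x y ∧ chain l' y z := by
  induction l generalizing x with
  | nil => simp [chain]
  | cons p l ih => simp [chain, ih, and_assoc]

theorem chain_mul (l l' : FreeMonoid (ℕ × ℕ)) (x z : ℕ) :
    chain (l * l').toList x z ↔ ∃ y, chain l.toList x y ∧ chain l'.toList y z := by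
  rw [FreeMonoid.toList_mul, chain_append]

/-- Relations on `ℕ` realised by rational sets of block sequences. -/
def Realizable (R : ℕ → ℕ → Prop) : Prop :=
  ∃ (B : Set (FreeMonoid (ℕ × ℕ))) (X : Set (FreeGroup (Fin 4))), Rat' X ∧ θ '' X = bw '' B ∧
    ∀ x y, R x y ↔ ∃ l ∈ B, chain l.toList x y

theorem Realizable.empty : Realizable fun _ _ => False :=
  ⟨∅, ∅, Rat'.empty, by simp, by simp⟩

theorem Realizable.union {R R' : ℕ → ℕ → Prop} (h : Realizable R) (h' : Realizable R') :
    Realizable fun x y => R x y ∨ R' x y := by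
  obtain ⟨B, X, hX, e, hB⟩ := h
  obtain ⟨B', X', hX', e', hB'⟩ := h'
  refine ⟨B ∪ B', X ∪ X', hX.union hX', by rw [Set.image_union, Set.image_union, e, e'], ?_⟩
  intro x y
  simp only [hB, hB', Set.mem_union, or_and_right, exists_or]

theorem Realizable.comp {R R' : ℕ → ℕ → Prop} (h : Realizable R) (h' : Realizable R') :
    Realizable fun x z => ∃ y, R x y ∧ R' y z := by
  obtain ⟨B, X, hX, e, hB⟩ := h
  obtain ⟨B', X', hX', e', hB'⟩ := h'
  refine ⟨B * B', X * X', hX.mul hX', by rw [Set.image_mul, Set.image_mul, e, e'], ?_⟩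
  intro x z
  simp only [hB, hB']
  constructor
  · rintro ⟨y, ⟨l, hl, h1⟩, l', hl', h2⟩
    exact ⟨l * l', ⟨l, hl, l', hl', rfl⟩, (chain_mul _ _ _ _).2 ⟨y, h1, h2⟩⟩
  · rintro ⟨_, ⟨l, hl, l', hl', rfl⟩, h⟩
    obtain ⟨y, h1, h2⟩ := (chain_mul _ _ _ _).1 h
    exact ⟨y, ⟨l, hl, h1⟩, l', hl', h2⟩

theorem Realizable.star {R : ℕ → ℕ → Prop} (h : Realizable R) :
    Realizable (Relation.ReflTransGen R) := by
  obtain ⟨B, X, hX, e, hB⟩ := h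
  refine ⟨Submonoid.closure B, _, hX.star, ?_, ?_⟩
  · rw [← Submonoid.coe_map, ← Submonoid.coe_map, MonoidHom.map_mclosure, MonoidHom.map_mclosure, e]
  intro x y
  constructor
  · intro h
    induction h with
    | refl => exact ⟨1, one_mem _, rfl⟩
    | tail _ h2 ih =>
      obtain ⟨l, hl, h⟩ := ih
      obtain ⟨l', hl', h'⟩ := (hB _ _).1 h2
      exact ⟨l * l', mul_mem hl (Submonoid.subset_closure hl'), (chain_mul _ _ _ _).2 ⟨_, h, h'⟩⟩
  · rintro ⟨l, hl, h⟩
    induction hl using Submonoid.closure_induction generalizing x y with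
    | mem l hl => exact Relation.ReflTransGen.single ((hB _ _).2 ⟨l, hl, h⟩)
    | one =>
      have : x = y := h
      rw [this]
    | mul l l' _ _ h1 h2 =>
      obtain ⟨z, hz, hz'⟩ := (chain_mul _ _ _ _).1 h
      exact (h1 _ _ hz).trans (h2 _ _ hz')

theorem Realizable.aff (p r q s : ℕ) :
    Realizable fun x y => ∃ m, x = p * m + r ∧ y = q * m + s := by
  have key : ∀ m, blk (p * m + r, q * m + s) =
      gl 0 * (gl 1 ^ p * gl 2 ^ q) ^ m * (gl 1 ^ r * gl 2 ^ s * gl 3) := by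
    intro m
    have c : Commute (gl 1 ^ p) (gl 2 ^ q) := (gl_comm12.pow_left p).pow_right q
    have c' : Commute (gl 2 ^ (q * m)) (gl 1 ^ r) := ((gl_comm12.pow_left r).pow_right (q * m)).symm
    rw [c.mul_pow, blk]
    simp only [pow_add, ← pow_mul]
    have : gl 1 ^ (p * m) * gl 1 ^ r * (gl 2 ^ (q * m) * gl 2 ^ s) =
        gl 1 ^ (p * m) * gl 2 ^ (q * m) * (gl 1 ^ r * gl 2 ^ s) := by
      rw [mul_assoc, ← mul_assoc (gl 1 ^ r), ← c'.eq]; simp only [mul_assoc]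
    rw [this]; simp only [mul_assoc]
  refine ⟨{l | ∃ m, l = FreeMonoid.of (p * m + r, q * m + s)},
    {FreeGroup.of 0} * ((Submonoid.closure {FreeGroup.of 1 ^ p * FreeGroup.of 2 ^ q} :
      Submonoid (FreeGroup (Fin 4))) : Set (FreeGroup (Fin 4))) * {FreeGroup.of 1 ^ r * FreeGroup.of 2 ^ s * FreeGroup.of 3},
    ((Rat'.single _).mul (Rat'.single _).star).mul (Rat'.single _), ?_, ?_⟩
  · ext g
    constructor
    · rintro ⟨_, ⟨_, ⟨_, rfl, w, hw, rfl⟩, _, rfl, rfl⟩, rfl⟩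
      obtain ⟨m, rfl⟩ := Submonoid.mem_closure_singleton.1 hw
      refine ⟨_, ⟨m, rfl⟩, ?_⟩
      simp only [bw, FreeMonoid.lift_eval_of, key, map_mul, map_pow, θ_of]
    · rintro ⟨_, ⟨m, rfl⟩, rfl⟩
      refine ⟨_, ⟨_, ⟨_, rfl, _, Submonoid.mem_closure_singleton.2 ⟨m, rfl⟩, rfl⟩, _, rfl, rfl⟩, ?_⟩
      simp only [bw, FreeMonoid.lift_eval_of, key, map_mul, map_pow, θ_of]
  · intro x y
    constructor
    · rintro ⟨m, rfl, rfl⟩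
      exact ⟨_, ⟨m, rfl⟩, by simp [chain]⟩
    · rintro ⟨_, ⟨m, rfl⟩, h⟩
      simp [chain] at h
      exact ⟨m, h.1, h.2.symm⟩

def pos (l : List Bool) : FreeGroup Bool := FreeGroup.mk (l.map fun b => (b, true))

theorem pos_append (l l' : List Bool) : pos (l ++ l') = pos l * pos l' := by
  simp [pos, FreeGroup.mul_mk]

theorem pos_single (b : Bool) : pos [b] = FreeGroup.of b := rfl

theorem pos_replicate (b : Bool) (n : ℕ) : pos (List.replicate n b) = FreeGroup.of b ^ n := by
  induction n with
  | zero => rfl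
  | succ n ih => rw [List.replicate_succ', pos_append, ih, pos_single, pow_succ]

theorem pos_inj {l l' : List Bool} (h : pos l = pos l') : l = l' := by
  have hred : ∀ l : List Bool, FreeGroup.reduce (l.map fun b => (b, true)) =
      l.map fun b => (b, true) := by
    intro l
    apply FreeGroup.IsReduced.reduce_eq
    rw [FreeGroup.IsReduced, List.isChain_map]
    induction l with
    | nil => simp
    | cons a l ih => cases l <;> simp_all
  have h2 := congrArg FreeGroup.toWord h
  simp only [pos, FreeGroup.toWord_mk, hred] at h2
  exact List.map_injective_iff.2 (fun a b h => by simpa using h) h2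

def pac : List (ℕ × ℕ) → List Bool
  | [] => []
  | p :: l => true :: (List.replicate p.2 false ++ pac l)

def pbd : List (ℕ × ℕ) → List Bool
  | [] => []
  | p :: l => List.replicate p.1 true ++ false :: pbd l

theorem bw_snd (l : List (ℕ × ℕ)) : (bw (FreeMonoid.ofList l)).2 = (pos (pac l), pos (pbd l)) := by
  induction l with
  | nil => rfl
  | cons p l ih =>
    rw [FreeMonoid.ofList_cons, map_mul, Prod.snd_mul, ih, pac, pbd]
    rw [← List.singleton_append, pos_append, pos_append, pos_append,
      ← List.singleton_append (l := pbd l), pos_append, pos_single, pos_single, pos_replicate,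
      pos_replicate]
    simp [bw, blk, gl, e4, mul_assoc]

theorem replicate_append_inj {x j : ℕ} {l l' : List Bool}
    (h : List.replicate x true ++ false :: l = List.replicate j true ++ false :: l') :
    x = j ∧ l = l' := by
  induction x generalizing j with
  | zero => cases j <;> simp_all [List.replicate_succ]
  | succ x ih =>
    cases j with
    | zero => simp [List.replicate_succ] at h
    | succ j =>
      simp [List.replicate_succ] at h
      have := ih h
      simp [this]

theorem combin (vs : List Bool) : ∀ (l : List (ℕ × ℕ)) (y j : ℕ),
    List.replicate y false ++ pac l = vs → pbd l = List.replicate j true ++ vs.map not →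
    chain l (j + y) 0 := by
  induction vs with
  | nil =>
    intro l y j h1 h2
    cases l with
    | nil =>
      cases y <;> cases j <;> simp_all [pbd, pac, chain, List.replicate_succ]
    | cons p l => simp [pac] at h1
  | cons b vs ih =>
    intro l y j h1 h2
    cases b with
    | false =>
      cases y with
      | zero =>
        cases l <;> simp [pac] at h1
      | succ y =>
        have := ih l y (j + 1) (by simpa [List.replicate_succ] using h1) (by
          rw [h2, List.replicate_succ']; simp)
        rwa [show j + (y + 1) = j + 1 + y by ring]
    | true =>
      cases y with
      | succ y => simp [List.replicate_succ] at h1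
      | zero =>
        cases l with
        | nil => simp [pac] at h1
        | cons p l =>
          simp [pac] at h1
          rw [pbd] at h2
          obtain ⟨e1, e2⟩ := replicate_append_inj (by simpa using h2)
          have := ih l p.2 0 h1 (by simpa using e2)
          exact ⟨by omega, by simpa using this⟩

theorem complete_aux {K : Type} [Group K] (a P B C d : K) (h1 : Commute a P) (h2 : Commute B C)
    (h3 : Commute C d) : a * (P * C) * d * (B * ((B * C)⁻¹ * (a * d)⁻¹)) = P := by
  have e1 : B * ((B * C)⁻¹ * (a * d)⁻¹) = C⁻¹ * (a * d)⁻¹ := by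
    rw [h2.eq]; group
  have e2 : d * C⁻¹ = C⁻¹ * d := h3.symm.inv_right.eq
  rw [e1]
  calc a * (P * C) * d * (C⁻¹ * (a * d)⁻¹) = a * P * C * (d * C⁻¹) * d⁻¹ * a⁻¹ := by group
    _ = a * P * a⁻¹ := by rw [e2]; group
    _ = P := by rw [h1.eq]; group

theorem complete (l : List (ℕ × ℕ)) : ∀ x, chain l x 0 →
    ∃ e ∈ Submonoid.closure {(gl 0 * gl 3)⁻¹, (gl 1 * gl 2)⁻¹},
      bw (FreeMonoid.ofList l) * e = gl 1 ^ x := by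
  induction l with
  | nil =>
    rintro x rfl
    exact ⟨1, one_mem _, by simp⟩
  | cons p l ih =>
    obtain ⟨x, y⟩ := p
    rintro _ ⟨rfl, h⟩
    obtain ⟨e, he, h⟩ := ih _ h
    refine ⟨e * ((gl 1 * gl 2)⁻¹ ^ y * (gl 0 * gl 3)⁻¹), mul_mem he (mul_mem
      (pow_mem (Submonoid.subset_closure (by simp)) _) (Submonoid.subset_closure (by simp))), ?_⟩
    rw [FreeMonoid.ofList_cons, map_mul, mul_assoc, ← mul_assoc _ e, h, inv_pow,
      gl_comm12.mul_pow]
    simp only [bw, FreeMonoid.lift_eval_of, blk] at *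
    exact complete_aux _ _ _ _ _ (gl_comm01.pow_right _) ((gl_comm12.pow_left y).pow_right y)
      (gl_comm23.pow_left y)

theorem realize_submonoid {R : ℕ → ℕ → Prop} (h : Realizable R) :
    ∃ S : Submonoid G, S.FG ∧ ∀ n, A 5 * A 1 ^ n * (A 6)⁻¹ ∈ S ↔ R n 0 := by
  obtain ⟨B, X, hX, e, hB⟩ := h
  obtain ⟨S, hS, h1, h2⟩ := exists_submonoid (hX.mul
    ((Rat'.single (FreeGroup.of 0 * FreeGroup.of 3)⁻¹).union
      (Rat'.single (FreeGroup.of 1 * FreeGroup.of 2)⁻¹)).star)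
  refine ⟨S, hS, fun n => ?_⟩
  have hn : A 1 ^ n = ι (FreeGroup.of 1 ^ n) := by simp [ι]
  rw [hB]
  constructor
  · intro h
    rw [hn] at h
    obtain ⟨_, ⟨x, hx, e', he', rfl⟩, hxe⟩ := h2 _ h
    obtain ⟨l, hl, hlx⟩ : θ x ∈ bw '' B := e ▸ ⟨x, hx, rfl⟩
    refine ⟨l, hl, ?_⟩
    have hv : ∃ vs : List Bool, φ e' = (pos vs, pos (vs.map not))⁻¹ := by
      clear hxe
      induction he' using Submonoid.closure_induction with
      | mem g hg =>
        rcases hg with rfl | rfl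
        · exact ⟨[true], by simp [φ, e4, pos_single]⟩
        · exact ⟨[false], by simp [φ, e4, pos_single]⟩
      | one => exact ⟨[], by simp [show pos [] = 1 from rfl, ← Prod.one_eq_mk]⟩
      | mul a b _ _ ha hb =>
        obtain ⟨v, hv⟩ := ha
        obtain ⟨v', hv'⟩ := hb
        exact ⟨v' ++ v, by simp [hv, hv', pos_append]⟩
    obtain ⟨vs, hv⟩ := hv
    have hx2 : φ x = (pos (pac l.toList), pos (pbd l.toList)) := by
      rw [← bw_snd, FreeMonoid.ofList_toList, hlx]; rfl
    simp only [map_mul, map_pow] at hxe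
    rw [hx2, hv, mul_inv_eq_iff_eq_mul] at hxe
    have hb : φ (FreeGroup.of 1) = (1, FreeGroup.of true) := by simp [φ, e4]
    rw [hb] at hxe
    simp only [Prod.pow_mk, one_pow, Prod.mk_mul_mk, one_mul, Prod.mk.injEq, ← pos_replicate,
      ← pos_append] at hxe
    simpa using combin vs l.toList 0 n (by simpa using pos_inj hxe.1) (pos_inj hxe.2)
  · rintro ⟨l, hl, hc⟩
    obtain ⟨e', he', hc⟩ := complete _ _ hc
    obtain ⟨x, hx, hxl⟩ : bw l ∈ θ '' X := e ▸ ⟨l, hl, rfl⟩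
    have : e' ∈ (Submonoid.closure ({(FreeGroup.of 0 * FreeGroup.of 3)⁻¹} ∪
        {(FreeGroup.of 1 * FreeGroup.of 2)⁻¹})).map θ := by
      rw [MonoidHom.map_mclosure, Set.image_union, Set.image_singleton, Set.image_singleton]
      simp only [map_inv, map_mul, θ_of]
      exact he'
    obtain ⟨w, hw, rfl⟩ := this
    have h3 := h1 (x * w) ⟨x, hx, w, hw, rfl⟩
    have h4 : θ (x * w) = gl 1 ^ n := by
      rw [map_mul, hxl, ← hc]; simp
    have h5 : ι (x * w) = A 1 ^ n := by
      have := congrArg Prod.fst h4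
      simpa [θ, gl] using this
    rwa [h5] at h3

end OneRelSub

namespace OneRelSub

abbrev V : Type := ℕ →₀ ℕ

noncomputable def pr (i : ℕ) : ℕ := Nat.nth Nat.Prime i

theorem pr_prime (i : ℕ) : (pr i).Prime := Nat.prime_nth_prime i

theorem pr_inj {i j : ℕ} (h : pr i = pr j) : i = j :=
  Nat.nth_injective Nat.infinite_setOf_prime h

noncomputable def enc (v : V) : ℕ := v.prod fun i e => pr i ^ e

theorem enc_add (v w : V) : enc (v + w) = enc v * enc w :=
  Finsupp.prod_add_index' (by simp) (by intros; rw [pow_add])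

theorem enc_single (i n : ℕ) : enc (Finsupp.single i n) = pr i ^ n :=
  Finsupp.prod_single_index (by simp)

theorem enc_zero : enc 0 = 1 := Finsupp.prod_zero_index

theorem exists_sub {v : V} {i : ℕ} (h : v i ≠ 0) : ∃ v' : V, v = v' + Finsupp.single i 1 := by
  refine ⟨v - Finsupp.single i 1, ?_⟩
  rw [tsub_add_cancel_of_le]
  rw [Finsupp.single_le_iff]
  omega

theorem dvd_enc (v : V) (i : ℕ) : pr i ∣ enc v ↔ v i ≠ 0 := by
  constructor
  · intro h
    obtain ⟨j, hj, hd⟩ := (pr_prime i).prime.exists_mem_finset_dvd h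
    have h1 := (pr_prime i).dvd_of_dvd_pow hd
    have h2 := pr_inj ((Nat.prime_dvd_prime_iff_eq (pr_prime i) (pr_prime j)).1 h1)
    rw [h2]
    exact Finsupp.mem_support_iff.1 hj
  · intro h
    obtain ⟨v', rfl⟩ := exists_sub h
    rw [enc_add, enc_single, pow_one]
    exact dvd_mul_left _ _

theorem enc_eq_one {v : V} : enc v = 1 ↔ v = 0 := by
  constructor
  · intro h
    ext i
    by_contra hi
    have := (dvd_enc v i).2 hi
    rw [h] at this
    exact (pr_prime i).one_lt.ne' (Nat.dvd_one.1 this)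
  · rintro rfl; exact enc_zero

/-- Relations on register states that are realizable. -/
def VProg (R : V → V → Prop) : Prop :=
  ∃ R' : ℕ → ℕ → Prop, Realizable R' ∧ ∀ v y, R' (enc v) y ↔ ∃ v', y = enc v' ∧ R v v'

def seq (R R' : V → V → Prop) : V → V → Prop := fun v w => ∃ u, R v u ∧ R' u w

def dec (i : ℕ) : V → V → Prop := fun v v' => v = v' + Finsupp.single i 1

def add (w : V) : V → V → Prop := fun v v' => v' = v + w

def isz (i : ℕ) : V → V → Prop := fun v v' => v i = 0 ∧ v' = v

def loop (i : ℕ) (P : V → V → Prop) : V → V → Prop :=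
  seq (Relation.ReflTransGen (seq (dec i) P)) (isz i)

theorem VProg.seq {R R' : V → V → Prop} (h : VProg R) (h' : VProg R') : VProg (seq R R') := by
  obtain ⟨Q, hQ, e⟩ := h
  obtain ⟨Q', hQ', e'⟩ := h'
  refine ⟨_, hQ.comp hQ', ?_⟩
  intro v y
  constructor
  · rintro ⟨z, h1, h2⟩
    obtain ⟨v', rfl, h3⟩ := (e _ _).1 h1
    obtain ⟨v'', rfl, h4⟩ := (e' _ _).1 h2
    exact ⟨v'', rfl, v', h3, h4⟩
  · rintro ⟨v'', rfl, v', h3, h4⟩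
    exact ⟨enc v', (e _ _).2 ⟨_, rfl, h3⟩, (e' _ _).2 ⟨_, rfl, h4⟩⟩

theorem VProg.star {R : V → V → Prop} (h : VProg R) : VProg (Relation.ReflTransGen R) := by
  obtain ⟨Q, hQ, e⟩ := h
  refine ⟨_, hQ.star, ?_⟩
  intro v y
  constructor
  · intro h
    induction h with
    | refl => exact ⟨v, rfl, .refl⟩
    | tail _ h ih =>
      obtain ⟨u, rfl, hu⟩ := ih
      obtain ⟨v', rfl, h3⟩ := (e _ _).1 h
      exact ⟨v', rfl, hu.tail h3⟩
  · rintro ⟨v', rfl, h⟩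
    induction h with
    | refl => exact .refl
    | tail _ h ih => exact ih.tail ((e _ _).2 ⟨_, rfl, h⟩)

theorem VProg.add (w : V) : VProg (add w) := by
  refine ⟨_, Realizable.aff 1 0 (enc w) 0, ?_⟩
  intro v y
  simp only [OneRelSub.add, exists_eq_right, enc_add]
  constructor
  · rintro ⟨m, h1, rfl⟩
    rw [h1]; ring
  · rintro rfl
    exact ⟨enc v, by ring, by ring⟩

theorem VProg.dec (i : ℕ) : VProg (dec i) := by
  refine ⟨_, Realizable.aff (pr i) 0 1 0, ?_⟩
  intro v y
  simp only [OneRelSub.dec]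
  constructor
  · rintro ⟨m, h1, h2⟩
    have : v i ≠ 0 := (dvd_enc v i).1 ⟨m, by simpa using h1⟩
    obtain ⟨v', rfl⟩ := exists_sub this
    refine ⟨v', ?_, rfl⟩
    rw [enc_add, enc_single, pow_one, add_zero, mul_comm] at h1
    have := Nat.eq_of_mul_eq_mul_left (pr_prime i).pos h1
    omega
  · rintro ⟨v', rfl, rfl⟩
    exact ⟨enc v', by rw [enc_add, enc_single]; ring, by ring⟩

theorem Realizable.exists_lt {R : ℕ → ℕ → ℕ → Prop} (h : ∀ r, Realizable (R r)) (n : ℕ) :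
    Realizable fun x y => ∃ r < n, R r x y := by
  induction n with
  | zero => simpa using Realizable.empty
  | succ n ih =>
    convert ih.union (h n) using 3 with x y
    constructor
    · rintro ⟨r, hr, h⟩
      rcases Nat.lt_succ_iff_lt_or_eq.1 hr with h' | rfl
      · exact Or.inl ⟨r, h', h⟩
      · exact Or.inr h
    · rintro (⟨r, hr, h⟩ | h)
      · exact ⟨r, by omega, h⟩
      · exact ⟨n, by omega, h⟩

theorem VProg.isz (i : ℕ) : VProg (isz i) := by
  refine ⟨_, Realizable.exists_lt
    (fun r => Realizable.aff (pr i) (r + 1) (pr i) (r + 1)) (pr i - 1), ?_⟩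
  intro v y
  simp only [OneRelSub.isz]
  have h0 := (dvd_enc v i).not
  rw [not_not] at h0
  have hp := (pr_prime i).pos
  constructor
  · rintro ⟨r, hr, m, h1, h2⟩
    refine ⟨v, by rw [h1, h2], ?_, rfl⟩
    rw [← h0, h1]
    intro hd
    have := (Nat.dvd_add_right (dvd_mul_right _ _)).1 hd
    have := Nat.le_of_dvd (by omega) this
    omega
  · rintro ⟨v', rfl, hz, rfl⟩
    have hd := h0.2 hz
    have h1 : enc v' % pr i ≠ 0 := fun h => hd (Nat.dvd_of_mod_eq_zero h)
    have h2 := Nat.mod_lt (enc v') hp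
    have h3 := Nat.div_add_mod (enc v') (pr i)
    exact ⟨enc v' % pr i - 1, by omega, enc v' / pr i, by omega, by omega⟩

theorem VProg.loop (i : ℕ) {P : V → V → Prop} (h : VProg P) : VProg (loop i P) :=
  ((VProg.dec i).seq h).star.seq (VProg.isz i)

/-- `R` is deterministic at `v` with result `u`. -/
def Det (R : V → V → Prop) (v u : V) : Prop := ∀ v', R v v' ↔ v' = u

theorem Det.seq {R R' : V → V → Prop} {v u w : V} (h : Det R v u) (h' : Det R' u w) :
    Det (seq R R') v w := by
  intro v'
  simp only [OneRelSub.seq, h _, exists_eq_left, h' _]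

theorem Det.add (v w : V) : Det (add w) v (v + w) := fun _ => Iff.rfl

theorem loop_unfold (i : ℕ) (P : V → V → Prop) (v w : V) :
    loop i P v w ↔ (v i = 0 ∧ w = v) ∨ ∃ u u', dec i v u ∧ P u u' ∧ loop i P u' w := by
  constructor
  · rintro ⟨z, h1, h2⟩
    rcases Relation.ReflTransGen.cases_head h1 with rfl | ⟨c, ⟨u, hu, hu'⟩, hc⟩
    · exact Or.inl h2
    · exact Or.inr ⟨u, c, hu, hu', z, hc, h2⟩
  · rintro (h | ⟨u, c, hu, hu', z, hc, h2⟩)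
    · exact ⟨v, .refl, h⟩
    · exact ⟨z, .head ⟨u, hu, hu'⟩ hc, h2⟩

theorem Det.loop (i : ℕ) {P : V → V → Prop} (n : ℕ) : ∀ (s : ℕ → V), (∀ k, s k i = 0) →
    (∀ k c, Det P (s k + Finsupp.single i c) (s (k + 1) + Finsupp.single i c)) →
    Det (loop i P) (s 0 + Finsupp.single i n) (s n) := by
  induction n with
  | zero =>
    intro s hs hP w
    rw [loop_unfold]
    simp only [Finsupp.single_zero, add_zero]
    constructor
    · rintro (h | ⟨u, u', h, -⟩)
      · exact h.2
      · have h1 := DFunLike.congr_fun h i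
        simp [hs] at h1
    · intro h
      exact Or.inl ⟨hs 0, h⟩
  | succ n ih =>
    intro s hs hP w
    rw [loop_unfold]
    have ih' := ih (fun k => s (k + 1)) (fun k => hs _) (fun k c => hP _ c)
    constructor
    · rintro (h | ⟨u, u', h, h1, h2⟩)
      · have h1 := h.1
        simp at h1
      · have hu : u = s 0 + Finsupp.single i n := by
          rw [OneRelSub.dec, Finsupp.single_add, ← add_assoc] at h
          exact (add_right_cancel h).symm
        subst hu
        have := (hP 0 n _).1 h1
        subst this
        exact (ih' _).1 h2
    · rintro rfl
      refine Or.inr ⟨s 0 + Finsupp.single i n, _, ?_, (hP 0 n _).2 rfl, (ih' _).2 rfl⟩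
      rw [OneRelSub.dec, Finsupp.single_add, ← add_assoc]

theorem Det.move (i : ℕ) (u w : V) (n : ℕ) (hu : u i = 0) (hw : w i = 0) :
    Det (OneRelSub.loop i (OneRelSub.add w)) (u + Finsupp.single i n) (u + n • w) := by
  have := Det.loop i (P := OneRelSub.add w) n (fun k => u + k • w) (by simp [hu, hw]) (by
    intro k c
    convert Det.add _ _ using 1
    rw [add_smul, one_smul]; abel)
  simpa using this

theorem Det.clear (i : ℕ) (u : V) (n : ℕ) (hu : u i = 0) :
    Det (OneRelSub.loop i (OneRelSub.add 0)) (u + Finsupp.single i n) u := by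
  simpa using Det.move i u 0 n hu rfl

theorem copy (src dst N : ℕ) (h1 : src < N) (h2 : dst < N) : ∃ R, VProg R ∧
    ∀ v : V, v N = 0 → Det R v (v + Finsupp.single dst (v src)) := by
  refine ⟨seq (loop src (add (Finsupp.single N 1)))
    (loop N (add (Finsupp.single src 1 + Finsupp.single dst 1))),
    ((VProg.add _).loop _).seq ((VProg.add _).loop _), ?_⟩
  intro v hv
  have hN : N ≠ src := by omega
  have hN' : N ≠ dst := by omega
  have e1 : v.erase src + Finsupp.single src (v src) = v := Finsupp.erase_add_single _ _
  have d1 := Det.move src (v.erase src) (Finsupp.single N 1) (v src) (by simp)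
    (by simp [Finsupp.single_apply, hN])
  have d2 := Det.move N (v.erase src) (Finsupp.single src 1 + Finsupp.single dst 1) (v src)
    (by rw [Finsupp.erase_ne hN, hv]) (by simp [Finsupp.single_apply, hN.symm, hN'.symm])
  rw [e1] at d1
  rw [Finsupp.smul_single, smul_eq_mul, mul_one] at d1
  have := d1.seq d2
  rwa [smul_add, Finsupp.smul_single, Finsupp.smul_single, smul_eq_mul, mul_one, ← add_assoc,
    e1] at this

def Spec {n : ℕ} (f : List.Vector ℕ n → ℕ) : Prop :=
  ∀ (ins : Fin n → ℕ) (o N : ℕ), (∀ j, ins j < N) → o < N → ∃ R, VProg R ∧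
    ∀ v : V, (∀ i ≥ N, v i = 0) →
      Det R v (v + Finsupp.single o (f (List.Vector.ofFn fun j => v (ins j))))

theorem spec_zero : Spec (n := 0) fun _ => 0 := by
  intro ins o N _ _
  exact ⟨add 0, VProg.add 0, fun v _ => by simpa using Det.add v 0⟩

theorem spec_succ : Spec (n := 1) fun v => Nat.succ v.head := by
  intro ins o N h1 h2
  obtain ⟨R, hR, hd⟩ := copy (ins 0) o N (h1 0) h2
  refine ⟨seq R (add (Finsupp.single o 1)), hR.seq (VProg.add _), fun v hv => ?_⟩
  convert (hd v (hv N le_rfl)).seq (Det.add _ _) using 1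
  rw [add_assoc, ← Finsupp.single_add]
  rfl

theorem spec_get {n : ℕ} (i : Fin n) : Spec fun v => v.get i := by
  intro ins o N h1 h2
  obtain ⟨R, hR, hd⟩ := copy (ins i) o N (h1 i) h2
  exact ⟨R, hR, fun v hv => by simpa using hd v (hv N le_rfl)⟩

theorem clear_many (N : ℕ) (k : ℕ) : ∃ R, VProg R ∧ ∀ (u : V) (c : ℕ → ℕ), (∀ i ≥ N, u i = 0) →
    Det R (u + ∑ i ∈ Finset.range k, Finsupp.single (N + i) (c i)) u := by
  induction k with
  | zero => exact ⟨add 0, VProg.add 0, fun u c _ => by simpa using Det.add u 0⟩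
  | succ k ih =>
    obtain ⟨R, hR, hd⟩ := ih
    refine ⟨seq (loop (N + k) (add 0)) R, ((VProg.add _).loop _).seq hR, fun u c hu => ?_⟩
    refine Det.seq ?_ (hd u c hu)
    rw [Finset.sum_range_succ, ← add_assoc]
    apply Det.clear
    rw [Finsupp.add_apply, hu _ (by omega), Finsupp.finset_sum_apply, zero_add]
    apply Finset.sum_eq_zero
    intro x hx
    have := Finset.mem_range.1 hx
    rw [Finsupp.single_eq_of_ne (by omega)]

theorem spec_comp {m n : ℕ} {f : List.Vector ℕ n → ℕ} (g : Fin n → List.Vector ℕ m → ℕ)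
    (hf : Spec f) (hg : ∀ i, Spec (g i)) :
    Spec fun a => f (List.Vector.ofFn fun i => g i a) := by
  intro ins o N h1 h2
  let c : V → ℕ → ℕ := fun v i =>
    if h : i < n then g ⟨i, h⟩ (List.Vector.ofFn fun j => v (ins j)) else 0
  let w : V → ℕ → V := fun v k => ∑ i ∈ Finset.range k, Finsupp.single (N + i) (c v i)
  have hw : ∀ v k i, w v k i = if N ≤ i ∧ i < N + k then c v (i - N) else 0 := by
    intro v k i
    simp only [w, Finsupp.finset_sum_apply]
    split_ifs with h
    · rw [Finset.sum_eq_single (i - N)]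
      · rw [show N + (i - N) = i by omega, Finsupp.single_eq_same]
      · intro b _ hb
        rw [Finsupp.single_eq_of_ne (by omega)]
      · intro hb
        exact absurd (Finset.mem_range.2 (by omega)) hb
    · apply Finset.sum_eq_zero
      intro b hb
      have := Finset.mem_range.1 hb
      rw [Finsupp.single_eq_of_ne (by omega)]
  have stage : ∀ k ≤ n, ∃ R, VProg R ∧ ∀ v : V, (∀ i ≥ N, v i = 0) → Det R v (v + w v k) := by
    intro k
    induction k with
    | zero =>
      exact fun _ => ⟨add 0, VProg.add 0, fun v _ => by simpa [w] using Det.add v 0⟩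
    | succ k ih =>
      intro hk
      obtain ⟨R, hR, hd⟩ := ih (by omega)
      obtain ⟨R', hR', hd'⟩ := hg ⟨k, hk⟩ ins (N + k) (N + n)
        (fun j => by have := h1 j; omega) (by omega)
      refine ⟨seq R R', hR.seq hR', fun v hv => ?_⟩
      refine (hd v hv).seq ?_
      convert hd' (v + w v k) ?_ using 1
      · have hz : ∀ j, (v + w v k) (ins j) = v (ins j) := by
          intro j
          have := h1 j
          rw [Finsupp.add_apply, hw, if_neg (by omega), add_zero]
        simp only [hz]
        simp only [w]
        rw [Finset.sum_range_succ, ← add_assoc]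
        congr 2
        simp only [c]
        rw [dif_pos (show k < n from hk)]
      · intro i hi
        rw [Finsupp.add_apply, hw, if_neg (by omega), hv i (by omega)]
  obtain ⟨R1, hR1, hd1⟩ := stage n le_rfl
  obtain ⟨R2, hR2, hd2⟩ := hf (fun j => N + j) o (N + n) (fun j => by simp) (by omega)
  obtain ⟨R3, hR3, hd3⟩ := clear_many N n
  refine ⟨seq R1 (seq R2 R3), hR1.seq (hR2.seq hR3), fun v hv => ?_⟩
  refine (hd1 v hv).seq ((hd2 (v + w v n) ?_).seq ?_)
  · intro i hi
    rw [Finsupp.add_apply, hw, if_neg (by omega), hv i (by omega)]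
  · have hz : ∀ j : Fin n, (v + w v n) (N + j) =
        g j (List.Vector.ofFn fun j => v (ins j)) := by
      intro j
      rw [Finsupp.add_apply, hw, if_pos (by omega), hv _ (by omega)]
      simp [c]
    simp only [hz]
    convert hd3 (v + Finsupp.single o _) (c v) ?_ using 1
    · simp only [w]; abel
    · intro i hi
      rw [Finsupp.add_apply, hv i hi, Finsupp.single_eq_of_ne (by omega), add_zero]

theorem spec_prec {n : ℕ} {f : List.Vector ℕ n → ℕ} {g : List.Vector ℕ (n + 2) → ℕ}
    (hf : Spec f) (hg : Spec g) :
    Spec fun v : List.Vector ℕ (n + 1) =>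
      v.head.rec (f v.tail) fun y IH => g (y ::ᵥ IH ::ᵥ v.tail) := by
  intro ins o N h1 h2
  obtain ⟨R1, hR1, hd1⟩ := copy (ins 0) N (N + 4) (by have := h1 0; omega) (by omega)
  obtain ⟨R2, hR2, hd2⟩ := hf (fun j => ins j.succ) (N + 2) (N + 4)
    (fun j => by have := h1 j.succ; omega) (by omega)
  obtain ⟨R3, hR3, hd3⟩ := hg (Fin.cons (N + 1) (Fin.cons (N + 2) fun j => ins j.succ))
    (N + 3) (N + 4) (by
      intro j
      refine Fin.cases (by simp) (fun j => Fin.cases (by simp) (fun j => ?_) j) j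
      have := h1 j.succ
      simp; omega) (by omega)
  refine ⟨seq R1 (seq R2 (seq (loop N (seq R3 (seq (loop (N + 2) (add 0))
      (seq (loop (N + 3) (add (Finsupp.single (N + 2) 1))) (add (Finsupp.single (N + 1) 1))))))
      (seq (loop (N + 1) (add 0)) (loop (N + 2) (add (Finsupp.single o 1)))))),
    hR1.seq (hR2.seq (((hR3.seq (((VProg.add _).loop _).seq (((VProg.add _).loop _).seq
      (VProg.add _)))).loop _).seq (((VProg.add _).loop _).seq ((VProg.add _).loop _)))), ?_⟩
  intro v hv
  have hi : ∀ j, ins j < N := h1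
  set tl : List.Vector ℕ n := List.Vector.ofFn fun j => v (ins j.succ) with htl
  let F : ℕ → ℕ := fun k => Nat.rec (f tl) (fun y IH => g (y ::ᵥ IH ::ᵥ tl)) k
  have hgoal : ((List.Vector.ofFn fun j => v (ins j)).head.rec
      (f (List.Vector.ofFn fun j => v (ins j)).tail)
      fun y IH => g (y ::ᵥ IH ::ᵥ (List.Vector.ofFn fun j => v (ins j)).tail) : ℕ) =
      F (v (ins 0)) := by
    simp [F, htl, List.Vector.ofFn]
  simp only [hgoal]
  let s : ℕ → V := fun k => v + Finsupp.single (N + 1) k + Finsupp.single (N + 2) (F k)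
  have hvz : ∀ k, v (N + k) = 0 := fun k => hv _ (by omega)
  have hvz0 : v N = 0 := hv _ le_rfl
  refine (hd1 v (hvz _)).seq (Det.seq (u := s 0 + Finsupp.single N (v (ins 0))) ?_
    (Det.seq (u := s (v (ins 0))) ?_ (Det.seq
      (u := v + Finsupp.single (N + 2) (F (v (ins 0)))) ?_ ?_)))
  · convert hd2 (v + Finsupp.single N (v (ins 0))) ?_ using 1
    · have hz : ∀ j : Fin n, (v + Finsupp.single N (v (ins 0))) (ins j.succ) = v (ins j.succ) := by
        intro j
        have := hi j.succ
        rw [Finsupp.add_apply, Finsupp.single_eq_of_ne (by omega), add_zero]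
      have hF0 : F 0 = f tl := rfl
      simp only [hz, s, Finsupp.single_zero]
      rw [hF0, htl]
      abel
    · intro i hi
      rw [Finsupp.add_apply, hv i (by omega), Finsupp.single_eq_of_ne (by omega), add_zero]
  · apply Det.loop
    · intro k
      simp [s, hvz0]
    intro k c
    refine Det.seq (u := (v + Finsupp.single (N + 1) k + Finsupp.single N c +
      Finsupp.single (N + 3) (F (k + 1))) + Finsupp.single (N + 2) (F k)) ?_
      (Det.seq (Det.clear _ _ _ ?_) (Det.seq
        (u := v + Finsupp.single (N + 1) k + Finsupp.single N c +
          Finsupp.single (N + 2) (F (k + 1))) ?_ ?_))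
    · convert hd3 (s k + Finsupp.single N c) ?_ using 1
      · have hz : (List.Vector.ofFn fun j => (s k + Finsupp.single N c)
            ((Fin.cons (N + 1) (Fin.cons (N + 2) fun j => ins j.succ) : Fin (n + 2) → ℕ) j)) =
            (k ::ᵥ F k ::ᵥ tl) := by
          have hz : ∀ j : Fin n, (s k + Finsupp.single N c) (ins j.succ) = v (ins j.succ) := by
            intro j
            have := hi j.succ
            simp only [s, Finsupp.add_apply]
            rw [Finsupp.single_eq_of_ne (by omega), Finsupp.single_eq_of_ne (by omega),
              Finsupp.single_eq_of_ne (by omega)]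
            simp
          simp only [List.Vector.ofFn, Fin.cons_zero, Fin.cons_succ, hz]
          congr 1
          · simp [s, hvz]
          · congr 1
            simp [s, hvz]
        rw [hz]
        simp only [s]
        have : F (k + 1) = g (k ::ᵥ F k ::ᵥ tl) := rfl
        rw [this]
        abel
      · intro i hi
        simp only [s, Finsupp.add_apply]
        rw [hv i (by omega), Finsupp.single_eq_of_ne (by omega),
          Finsupp.single_eq_of_ne (by omega), Finsupp.single_eq_of_ne (by omega)]
        simp
    · simp [hvz]
    · convert Det.move (N + 3) _ _ _ ?_ ?_ using 1
      · rw [Finsupp.smul_single, smul_eq_mul, mul_one]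
      · simp [hvz]
      · simp
    · convert Det.add _ _ using 1
      simp only [s, Finsupp.single_add]
      abel
  · convert Det.clear (N + 1) _ (v (ins 0)) ?_ using 1
    · simp only [s]; abel
    · simp [hvz]
  · convert Det.move (N + 2) _ _ _ ?_ ?_ using 1
    · rw [Finsupp.smul_single, smul_eq_mul, mul_one]
    · simp [hvz]
    · rw [Finsupp.single_eq_of_ne (by omega)]

theorem spec_all {n : ℕ} {f : List.Vector ℕ n → ℕ} (h : Nat.Primrec' f) : Spec f := by
  induction h with
  | zero => exact spec_zero
  | succ => exact spec_succ
  | get i => exact spec_get i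
  | comp g _ _ hf hg => exact spec_comp g hf hg
  | prec _ _ hf hg => exact spec_prec hf hg

theorem star_add (w v v' : V) :
    Relation.ReflTransGen (add w) v v' ↔ ∃ k : ℕ, v' = v + k • w := by
  constructor
  · intro h
    induction h with
    | refl => exact ⟨0, by simp⟩
    | tail _ h ih =>
      obtain ⟨k, rfl⟩ := ih
      exact ⟨k + 1, by rw [h, add_smul, one_smul, add_assoc]⟩
  · rintro ⟨k, rfl⟩
    induction k with
    | zero => simpa using .refl
    | succ k ih => exact ih.tail (by rw [add, add_smul, one_smul, add_assoc])

theorem exists_realizable {g : ℕ → ℕ → ℕ} (hg : Primrec₂ g) :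
    ∃ R, Realizable R ∧ ∀ m, R (2 ^ m) 0 ↔ ∃ k, g m k = 1 := by
  obtain ⟨P, hP, hd⟩ := spec_all (Nat.Primrec'.prim_iff₂.2 hg) ![0, 1] 2 3
    (by intro j; fin_cases j <;> simp) (by omega)
  have hQ : VProg (seq (Relation.ReflTransGen (add (Finsupp.single 1 1))) (seq P
      (seq (loop 0 (add 0)) (seq (loop 1 (add 0)) (dec 2))))) :=
    (VProg.add _).star.seq (hP.seq (((VProg.add _).loop _).seq
      (((VProg.add _).loop _).seq (VProg.dec _))))
  have hdet : ∀ m k, Det (seq P (seq (loop 0 (add 0)) (loop 1 (add 0))))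
      (Finsupp.single 0 m + Finsupp.single 1 k) (Finsupp.single 2 (g m k)) := by
    intro m k
    refine Det.seq (hd _ ?_) (Det.seq (u := Finsupp.single 2 (g m k) + Finsupp.single 1 k) ?_ ?_)
    · intro i hi
      rw [Finsupp.add_apply, Finsupp.single_eq_of_ne (by omega), Finsupp.single_eq_of_ne (by omega), add_zero]
    · convert Det.clear 0 _ m ?_ using 1
      · have : g m k = g (List.Vector.ofFn fun j => (Finsupp.single 0 m + Finsupp.single 1 k : V)
            ((![0, 1] : Fin 2 → ℕ) j)).head (List.Vector.ofFn fun j =>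
            (Finsupp.single 0 m + Finsupp.single 1 k : V) ((![0, 1] : Fin 2 → ℕ) j)).tail.head := by
          simp [List.Vector.ofFn]
        beta_reduce
        rw [← this]
        abel
      · simp
    · exact Det.clear 1 _ k (by simp)
  obtain ⟨R, hR, hRe⟩ := hQ
  refine ⟨_, hR.comp (Realizable.aff 0 1 0 0), fun m => ?_⟩
  have h2 : 2 ^ m = enc (Finsupp.single 0 m) := by
    rw [enc_single, pr, Nat.nth_prime_zero_eq_two]
  constructor
  · rintro ⟨y, hy, _, h1, -⟩
    rw [h2, hRe] at hy
    obtain ⟨v', rfl, u, hu, u1, hu1, u2, hu2, u3, hu3, hu4⟩ := hy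
    obtain ⟨k, rfl⟩ := (star_add _ _ _).1 hu
    rw [Finsupp.smul_single, smul_eq_mul, mul_one] at hu1
    have := (hdet m k u3).1 ⟨u1, hu1, u2, hu2, hu3⟩
    have hv' : v' = 0 := enc_eq_one.1 (by omega)
    subst hv'
    refine ⟨k, ?_⟩
    rw [dec, this, zero_add] at hu4
    simpa using DFunLike.congr_fun hu4 2
  · rintro ⟨k, hk⟩
    refine ⟨1, ?_, 0, by simp, by simp⟩
    rw [h2, hRe]
    obtain ⟨u1, hu1, u2, hu2, hu3⟩ := (hdet m k _).2 rfl
    refine ⟨0, enc_zero.symm, _, (star_add _ _ _).2 ⟨k, rfl⟩, u1, ?_, u2, hu2, _, hu3, ?_⟩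
    · rwa [Finsupp.smul_single, smul_eq_mul, mul_one]
    · rw [dec, hk, zero_add]

end OneRelSub

namespace OneRelSub

theorem π_append (l l' : List (Fin 2 × Bool)) : π (l ++ l') = π l * π l' := by
  simp [π, ← FreeGroup.mul_mk]

theorem π_surj (g : G) : ∃ l, π l = g := by
  obtain ⟨x, rfl⟩ := PresentedGroup.mk_surjective _ g
  exact ⟨x.toWord, by rw [π, FreeGroup.mk_toWord]⟩

theorem π_replicate (n : ℕ) :
    π (List.replicate n ((0 : Fin 2), true)) = (PresentedGroup.of 0 : G) ^ n := by
  induction n with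
  | zero => simp [π, ← FreeGroup.one_eq_mk]
  | succ n ih => rw [List.replicate_succ', π_append, ih, pow_succ]; rfl

theorem A_pow (n : ℕ) : A 1 ^ n = (PresentedGroup.of 1 : G) * (PresentedGroup.of 0 : G) ^ n *
    (PresentedGroup.of 1 : G)⁻¹ := by
  simp [A, conj_pow]

open Nat.Partrec in
theorem main : ∃ S : Submonoid G, S.FG ∧
    ¬ ComputablePred (fun l : List (Fin 2 × Bool) => π l ∈ S) := by
  let g : ℕ → ℕ → ℕ := fun m k =>
    bif (Code.evaln k (Denumerable.ofNat Code m) 0).isSome then 1 else 0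
  have hg : Primrec₂ g := by
    refine Primrec.cond ?_ (Primrec.const 1) (Primrec.const 0)
    refine Primrec.option_isSome.comp (Code.primrec_evaln.comp (Primrec.pair (Primrec.pair
      Primrec.snd ((Primrec.ofNat Code).comp Primrec.fst)) (Primrec.const 0)))
  obtain ⟨R, hR, hRg⟩ := exists_realizable hg
  obtain ⟨S, hS, hSR⟩ := realize_submonoid hR
  refine ⟨S, hS, fun hc => ComputablePred.halting_problem 0 ?_⟩
  obtain ⟨pre, hpre⟩ := π_surj (A 5 * (PresentedGroup.of 1 : G))
  obtain ⟨post, hpost⟩ := π_surj ((PresentedGroup.of 1 : G)⁻¹ * (A 6)⁻¹)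
  let W : Code → List (Fin 2 × Bool) := fun c =>
    pre ++ ((List.range (2 ^ Encodable.encode c)).map fun _ => ((0 : Fin 2), true)) ++ post
  have hpow : Primrec fun m : ℕ => 2 ^ m := by
    have : Primrec fun m : ℕ => (Nat.rec 1 (fun _ x => 2 * x) m : ℕ) :=
      Primrec.nat_rec' Primrec.id (Primrec.const 1)
        (Primrec.nat_mul.comp (Primrec.const 2) (Primrec.snd.comp Primrec.snd)).to₂
    refine this.of_eq fun m => ?_
    induction m with
    | zero => rfl
    | succ m ih => rw [pow_succ, ← ih]; exact mul_comm _ _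
  have hW : Primrec W := by
    refine Primrec.list_append.comp (Primrec.list_append.comp (Primrec.const _) ?_)
      (Primrec.const _)
    exact Primrec.list_map (Primrec.list_range.comp (hpow.comp Primrec.encode))
      (Primrec.const _).to₂
  refine ComputablePred.computable_of_manyOneReducible ⟨W, hW.to_comp, fun c => ?_⟩ hc
  have h1 : π (W c) = A 5 * A 1 ^ (2 ^ Encodable.encode c) * (A 6)⁻¹ := by
    simp only [W]
    rw [π_append, π_append, hpre, hpost, List.map_const', List.length_range, π_replicate, A_pow]
    simp only [mul_assoc]
  rw [h1, hSR, hRg]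
  simp only [g, Denumerable.ofNat_encode]
  rw [Part.dom_iff_mem]
  constructor
  · rintro ⟨x, hx⟩
    obtain ⟨k, hk⟩ := Code.evaln_complete.1 hx
    refine ⟨k, ?_⟩
    rw [Option.mem_def] at hk
    simp [hk]
  · rintro ⟨k, hk⟩
    cases h : Code.evaln k c 0 with
    | none => simp [h] at hk
    | some x => exact ⟨x, Code.evaln_sound h⟩

end OneRelSub

theorem exists_fg_submonoid_undecidable_membership :
    ∃ S : Submonoid G, S.FG ∧ ¬ ComputablePred (fun l : List (Fin 2 × Bool) => π l ∈ S) :=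
  OneRelSub.main
end

section
/- The (uniform) submonoid membership problem for the one-relator group G = Gp⟨a, t | a(tat⁻¹) = (tat⁻¹)a⟩ is undecidable: the predicate on pairs (W, w) ∈ List (List (Fin 2 × Bool)) × List (Fin 2 × Bool) given by 'π(w) belongs to the submonoid Submonoid.closure {π(u) | u ∈ W} of G' is not ComputablePred. -/
namespace SM

/-- Register programs. `loop i P` is `while r_i ≠ 0 do (r_i := r_i - 1; P)`. -/
inductive Prog : Type
  | skip : Prog
  | inc : ℕ → Prog
  | seq : Prog → Prog → Prog
  | loop : ℕ → Prog → Prog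

open Function

/-- Big-step semantics. -/
inductive Exec : Prog → (ℕ → ℕ) → (ℕ → ℕ) → Prop
  | skip (v) : Exec .skip v v
  | inc (i v) : Exec (.inc i) v (update v i (v i + 1))
  | seq {P Q v u w} : Exec P v u → Exec Q u w → Exec (.seq P Q) v w
  | loop0 {i P v} : v i = 0 → Exec (.loop i P) v v
  | loopS {i P v x u w} : v i = x + 1 → Exec P (update v i x) u → Exec (.loop i P) u w →
      Exec (.loop i P) v w

theorem Exec.det {P v u} (h : Exec P v u) : ∀ {u'}, Exec P v u' → u = u' := by
  induction h with
  | skip v => intro u' h; cases h; rfl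
  | inc i v => intro u' h; cases h; rfl
  | seq _ _ ih1 ih2 =>
    intro u' h; cases h with
    | seq a b => have := ih1 a; subst this; exact ih2 b
  | loop0 h0 =>
    intro u' h; cases h with
    | loop0 _ => rfl
    | loopS h1 _ _ => omega
  | loopS h0 _ _ ih1 ih2 =>
    intro u' h; cases h with
    | loop0 h1 => omega
    | loopS h1 a b =>
      rw [h0] at h1
      obtain rfl := Nat.succ.inj h1
      have := ih1 a; subst this; exact ih2 b

theorem Exec.loop_inv {i P} (I : (ℕ → ℕ) → Prop)
    (hI : ∀ v x u, I v → v i = x + 1 → Exec P (update v i x) u → I u) {v w}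
    (h : Exec (.loop i P) v w) (hv : I v) : I w ∧ w i = 0 := by
  generalize hQ : Prog.loop i P = Q at h
  induction h with
  | skip v => cases hQ
  | inc i v => cases hQ
  | seq _ _ => cases hQ
  | loop0 h0 => cases hQ; exact ⟨hv, h0⟩
  | loopS h0 a b ih1 ih2 => cases hQ; exact ih2 (hI _ _ _ hv h0 a) rfl

theorem exec_loop {i P} (σ : ℕ → ℕ → ℕ) (hσ : ∀ x, σ x i = x)
    (h : ∀ x, Exec P (update (σ (x + 1)) i x) (σ x)) (x : ℕ) :
    Exec (.loop i P) (σ x) (σ 0) := by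
  induction x with
  | zero => exact .loop0 (hσ 0)
  | succ x ih => exact .loopS (hσ _) (h x) ih

/-- As `exec_loop`, for loops running over a range bounded by `N`. -/
theorem exec_loop' {i P} (σ : ℕ → ℕ → ℕ) (N : ℕ) (hσ : ∀ x, σ x i = x)
    (h : ∀ x, x < N → Exec P (update (σ (x + 1)) i x) (σ x)) (x : ℕ) (hx : x ≤ N) :
    Exec (.loop i P) (σ x) (σ 0) := by
  induction x with
  | zero => exact .loop0 (hσ 0)
  | succ x ih => exact .loopS (hσ _) (h x (by omega)) (ih (by omega))

theorem Exec.cast {P v u v' u'} (h : Exec P v u) (hv : v = v') (hu : u = u') : Exec P v' u' := by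
  subst hv; subst hu; exact h

/-- Set a register to zero. -/
def clear (i : ℕ) : Prog := .loop i .skip

theorem exec_clear (i v) : Exec (clear i) v (update v i 0) := by
  refine (exec_loop (fun x => update v i x) (by simp) (fun x => ?_) (v i)).cast (by simp) rfl
  simpa using Exec.skip _

/-- Add register `i` to register `j`, clearing `i`. -/
def move (i j : ℕ) : Prog := .loop i (.inc j)

theorem exec_move {i j} (h : i ≠ j) (v) :
    Exec (move i j) v (update (update v j (v j + v i)) i 0) := by
  refine (exec_loop' (fun x => update (update v j (v j + (v i - x))) i x) (v i) (by simp)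
    (fun x hx => ?_) (v i) le_rfl).cast (by simp) (by simp)
  refine (Exec.inc _ _).cast rfl ?_
  funext k
  by_cases hk : k = j
  · subst hk; simp [h.symm]; omega
  · by_cases hk' : k = i
    · subst hk'; simp [h]
    · simp [hk, hk']

/-- Add register `i` to register `j`, using the scratch register `s`. -/
def copy (i j s : ℕ) : Prog := .seq (.loop i (.seq (.inc j) (.inc s))) (move s i)

theorem exec_copy {i j s} (hij : i ≠ j) (his : i ≠ s) (hjs : j ≠ s) (v) (hs : v s = 0) :
    Exec (copy i j s) v (update v j (v j + v i)) := by
  refine Exec.seq (u := update (update (update v j (v j + v i)) s (v i)) i 0)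
    ((exec_loop' (fun x => update (update (update v j (v j + (v i - x))) s (v i - x)) i x) (v i)
      (by simp) (fun x hx => ?_) (v i) le_rfl).cast ?_ (by simp)) ((exec_move his.symm _).cast rfl ?_)
  · refine ((Exec.inc _ _).seq (Exec.inc _ _)).cast rfl ?_
    funext k
    by_cases hk : k = j
    · subst hk; simp [hij.symm, hjs]; omega
    · by_cases hk' : k = i
      · subst hk'; simp [his, hij]
      · by_cases hk2 : k = s
        · subst hk2; simp [hjs.symm, his.symm]; omega
        · simp [hk, hk', hk2]
  · funext k
    simp only [update_apply]
    split_ifs <;> simp_all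
  · funext k
    simp only [update_apply]
    split_ifs <;> simp_all

/-- `P` computes `f` from the registers `inp`, into the register `base`; all the registers from
`base` on are supposed to be zero and are restored. -/
def Computes {n : ℕ} (f : List.Vector ℕ n → ℕ) (inp : Fin n → ℕ) (base : ℕ) (P : Prog) : Prop :=
  ∀ v : ℕ → ℕ, (∀ j, base ≤ j → v j = 0) →
    Exec P v (update v base (f (List.Vector.ofFn fun i => v (inp i))))

/-- Compute finitely many functions in turn. -/
theorem exists_family {m n : ℕ} (g : Fin n → List.Vector ℕ m → ℕ) (inp : Fin m → ℕ) (base : ℕ)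
    (hinp : ∀ i, inp i < base)
    (hg : ∀ i (b : ℕ), (∀ i, inp i < b) → ∃ P, Computes (g i) inp b P) (k : ℕ) (hk : k ≤ n) :
    ∃ P, ∀ v : ℕ → ℕ, (∀ j, base ≤ j → v j = 0) →
      Exec P v (fun j => if h : base ≤ j ∧ j < base + k then
        g ⟨j - base, by omega⟩ (List.Vector.ofFn fun i => v (inp i)) else v j) := by
  induction k with
  | zero => exact ⟨.skip, fun v _ => (Exec.skip v).cast rfl (by funext j; simp)⟩
  | succ k ih =>
    obtain ⟨P, hP⟩ := ih (by omega)
    obtain ⟨Q, hQ⟩ := hg ⟨k, by omega⟩ (base + k) (fun i => by have := hinp i; omega)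
    refine ⟨.seq P Q, fun v hv => (hP v hv).seq ((hQ _ ?_).cast rfl ?_)⟩
    · intro j hj
      rw [dif_neg (by omega)]; exact hv j (by omega)
    · have e : ∀ i, (if h : base ≤ inp i ∧ inp i < base + k then
          g ⟨inp i - base, by omega⟩ (List.Vector.ofFn fun i => v (inp i)) else v (inp i))
          = v (inp i) := fun i => dif_neg (by have := hinp i; omega)
      simp only [e]
      funext j
      by_cases hj : j = base + k
      · subst hj; simp
      · rw [update_of_ne hj]
        by_cases h : base ≤ j ∧ j < base + k
        · rw [dif_pos h, dif_pos (by omega)]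
        · rw [dif_neg h, dif_neg (by omega)]

/-- Clear the registers `b, …, b + k - 1`. -/
theorem exists_clear (b k : ℕ) : ∃ P, ∀ v : ℕ → ℕ,
    Exec P v (fun j => if b ≤ j ∧ j < b + k then 0 else v j) := by
  induction k with
  | zero => exact ⟨.skip, fun v => (Exec.skip v).cast rfl (by funext j; simp)⟩
  | succ k ih =>
    obtain ⟨P, hP⟩ := ih
    refine ⟨.seq P (clear (b + k)), fun v => (hP v).seq ((exec_clear _ _).cast rfl ?_)⟩
    funext j
    by_cases hj : j = b + k
    · subst hj; simp
    · rw [update_of_ne hj]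
      by_cases h : b ≤ j ∧ j < b + k
      · rw [if_pos h, if_pos (by omega)]
      · rw [if_neg h, if_neg (by omega)]

theorem exists_prog {n : ℕ} {f : List.Vector ℕ n → ℕ} (hf : Nat.Primrec' f) :
    ∀ (inp : Fin n → ℕ) (base : ℕ), (∀ i, inp i < base) → ∃ P, Computes f inp base P := by
  induction hf with
  | zero =>
    intro inp base _
    refine ⟨.skip, fun v hv => (Exec.skip v).cast rfl ?_⟩
    have h0 := hv base le_rfl
    funext j
    by_cases hj : j = base
    · subst hj; simp [h0]
    · simp [hj]
  | succ =>
    intro inp base hi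
    have := hi 0
    refine ⟨.seq (copy (inp 0) base (base + 1)) (.inc base), fun v hv =>
      (exec_copy (by omega) (by omega) (by omega) v (hv _ (by omega))).seq
        ((Exec.inc _ _).cast rfl ?_)⟩
    simp [hv base le_rfl]
  | get i =>
    intro inp base hi
    have := hi i
    refine ⟨copy (inp i) base (base + 1), fun v hv =>
      (exec_copy (by omega) (by omega) (by omega) v (hv _ (by omega))).cast rfl ?_⟩
    simp [hv base le_rfl]
  | @comp m n f g hf hg ihf ihg =>
    intro inp base hi
    obtain ⟨P, hP⟩ := exists_family g inp (base + 1) (fun i => by have := hi i; omega)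
      (fun i b hb => ihg i inp b hb) n le_rfl
    obtain ⟨Q, hQ⟩ := ihf (fun i => base + 1 + i) (base + 1 + n) (fun i => by have := i.2; omega)
    obtain ⟨R, hR⟩ := exists_clear (base + 1) n
    refine ⟨.seq P (.seq Q (.seq (move (base + 1 + n) base) R)), fun v hv =>
      (hP v fun j hj => hv j (by omega)).seq ((hQ _ ?_).seq
        ((exec_move (by omega) _).seq ((hR _).cast rfl ?_)))⟩
    · intro j hj
      rw [dif_neg (by omega)]; exact hv j (by omega)
    · funext j
      have hb := hv base le_rfl
      by_cases hj : j = base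
      · subst hj
        have hne : j ≠ j + 1 + n := by omega
        simp [hb, hne]
      · rw [update_of_ne hj]
        by_cases h : base + 1 ≤ j ∧ j < base + 1 + n
        · rw [if_pos h, hv j (by omega)]
        · rw [if_neg h]
          by_cases hj2 : j = base + 1 + n
          · subst hj2; simp [hv (base + 1 + n) (by omega)]
          · rw [update_of_ne hj2, update_of_ne hj, update_of_ne hj2, dif_neg h]
  | @prec n f g hf hg ihf ihg =>
    intro inp base hi
    obtain ⟨P, hP⟩ := ihf (fun i => inp i.succ) base (fun i => hi _)
    obtain ⟨Q, hQ⟩ := ihg (Fin.cons (base + 1) (Fin.cons base (fun i => inp i.succ))) (base + 3)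
      (by
        intro i
        refine Fin.cases ?_ (fun i => Fin.cases ?_ (fun i => ?_) i) i
        · simp
        · simp
        · have := hi i.succ; simp; omega)
    have hi0 := hi 0
    refine ⟨.seq P (.seq (copy (inp 0) (base + 2) (base + 3)) (.seq
      (.loop (base + 2) (.seq Q (.seq (clear base) (.seq (move (base + 3) base) (.inc (base + 1))))))
      (clear (base + 1)))), fun v hv => ?_⟩
    set tl := List.Vector.ofFn fun i : Fin n => v (inp i.succ) with htl
    set F : ℕ → ℕ := fun x => Nat.rec (f tl) (fun y IH => g (y ::ᵥ IH ::ᵥ tl)) x with hF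
    have hv0 := hv base le_rfl
    have hv1 := hv (base + 1) (by omega)
    have hv2 := hv (base + 2) (by omega)
    have hv3 := hv (base + 3) (by omega)
    refine (hP v hv).seq ((exec_copy (by omega) (by omega) (by omega) _ (by simp [hv3])).seq
      (Exec.seq (u := update (update v (base + 1) (v (inp 0))) base (F (v (inp 0))))
        ((exec_loop' (fun x => update (update (update v (base + 1) (v (inp 0) - x)) base
          (F (v (inp 0) - x))) (base + 2) x) (v (inp 0)) (by simp) (fun x hx => ?_)
          (v (inp 0)) le_rfl).cast ?_ ?_) ((exec_clear _ _).cast rfl ?_)))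
    · refine (hQ _ ?_).seq ((exec_clear _ _).seq ((exec_move (by omega) _).seq
        ((Exec.inc _ _).cast rfl ?_)))
      · intro j hj
        rw [update_of_ne (by omega), update_of_ne (by omega), update_of_ne (by omega),
          update_of_ne (by omega)]
        exact hv j (by omega)
      · have e : v (inp 0) - x = (v (inp 0) - (x + 1)) + 1 := by omega
        have eF : F (v (inp 0) - x) = g ((v (inp 0) - (x + 1)) ::ᵥ (F (v (inp 0) - (x + 1))) ::ᵥ tl)
          := by rw [e]
        have e3 : ∀ i : Fin n, inp i.succ ≠ base ∧ inp i.succ ≠ base + 1 ∧ inp i.succ ≠ base + 2 :=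
          fun i => by have := hi i.succ; omega
        have eo : (List.Vector.ofFn fun i : Fin (n + 2) =>
            (update (update (update (update v (base + 1) (v (inp 0) - (x + 1))) base
              (F (v (inp 0) - (x + 1)))) (base + 2) (x + 1)) (base + 2) x)
              ((Fin.cons (base + 1) (Fin.cons base (fun i => inp i.succ)) : Fin (n + 2) → ℕ) i))
            = ((v (inp 0) - (x + 1)) ::ᵥ (F (v (inp 0) - (x + 1))) ::ᵥ tl) := by
          simp [List.Vector.ofFn, htl, e3]
        rw [eo, ← eF]
        funext j
        by_cases j0 : j = base
        · subst j0; simp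
        by_cases j1 : j = base + 1
        · subst j1; simp; omega
        by_cases j2 : j = base + 2
        · subst j2; simp
        by_cases j3 : j = base + 3
        · subst j3; simp [hv3]
        simp [j0, j1, j2, j3]
    · funext j
      by_cases j0 : j = base
      · subst j0; simp [hF, htl]
      by_cases j1 : j = base + 1
      · subst j1; simp [hv1]
      by_cases j2 : j = base + 2
      · subst j2; simp [hv2, hi0.ne]
      simp [j0, j1, j2]
    · funext j
      by_cases j2 : j = base + 2
      · subst j2; simp [hv2]
      simp [j2]
    · funext j
      by_cases j0 : j = base
      · subst j0; simp [hF, htl, List.Vector.ofFn]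
      by_cases j1 : j = base + 1
      · subst j1; simp [hv1]
      simp [j0, j1]

/-- The search program. -/
theorem exists_search {F : List.Vector ℕ 2 → ℕ} (hF : Nat.Primrec' F) : ∃ P : Prog, ∀ x : ℕ,
    Exec P (update 0 0 x) 0 ↔ ∃ k, F (x ::ᵥ k ::ᵥ .nil) = 0 := by
  obtain ⟨P, hP⟩ := exists_prog hF ![0, 1] 2 (by intro i; fin_cases i <;> simp)
  let st : ℕ → ℕ → ℕ → ℕ → ℕ := fun x k y j =>
    if j = 0 then x else if j = 1 then k else if j = 2 then y else 0
  have hP' : ∀ x k, Exec P (st x k 0) (st x k (F (x ::ᵥ k ::ᵥ .nil))) := by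
    intro x k
    refine (hP (st x k 0) ?_).cast rfl ?_
    · intro j hj; simp only [st]; split_ifs <;> omega
    · funext j
      by_cases h : j = 2
      · subst h; simp [st, List.Vector.ofFn]
      · simp [h, st]
  have hB : ∀ x k y, Exec (.seq (clear 2) (.seq (.inc 1) P)) (st x k y)
      (st x (k + 1) (F (x ::ᵥ (k + 1) ::ᵥ .nil))) := by
    intro x k y
    refine (exec_clear _ _).seq ((Exec.inc _ _).seq ((hP' x (k+1)).cast ?_ rfl))
    funext j
    simp only [st, update_apply]
    split_ifs <;> simp_all
  have hupd : ∀ x k y z, update (st x k y) 2 z = st x k z := by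
    intro x k y z; funext j; simp only [st, update_apply]; split_ifs <;> simp_all
  refine ⟨.seq P (.seq (.loop 2 (.seq (clear 2) (.seq (.inc 1) P))) (.seq (clear 0) (clear 1))),
    fun x => ⟨fun h => ?_, fun h => ?_⟩⟩
  · have h0 : (update 0 0 x : ℕ → ℕ) = st x 0 0 := by
      funext j; simp only [st, update_apply]; split_ifs <;> simp_all
    rw [h0] at h
    cases h with
    | seq h1 h2 =>
      obtain rfl := (hP' x 0).det h1
      cases h2 with
      | @seq _ _ _ w _ h2 h3 =>
        obtain ⟨⟨k, hk⟩, hw⟩ := h2.loop_inv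
          (fun v => ∃ k, v = st x k (F (x ::ᵥ k ::ᵥ .nil))) (by
            rintro v z u ⟨k, rfl⟩ _ hu
            rw [hupd] at hu
            exact ⟨k + 1, hu.det (hB _ _ _)⟩) ⟨0, rfl⟩
        subst hk
        exact ⟨k, hw⟩
  · obtain ⟨k0, hk0⟩ := h
    have key : ∀ d k, k + d = k0 → ∃ w, Exec (.loop 2 (.seq (clear 2) (.seq (.inc 1) P)))
        (st x k (F (x ::ᵥ k ::ᵥ .nil))) w ∧ ∃ k' , w = st x k' 0 := by
      intro d
      induction d with
      | zero =>
        intro k hk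
        obtain rfl : k = k0 := by omega
        rw [hk0]
        exact ⟨_, .loop0 rfl, _, rfl⟩
      | succ d ih =>
        intro k hk
        obtain ⟨w, hw, hw'⟩ := ih (k + 1) (by omega)
        rcases h : F (x ::ᵥ k ::ᵥ .nil) with _ | y
        · exact ⟨_, .loop0 rfl, _, rfl⟩
        · exact ⟨w, .loopS (x := y) rfl ((hB x k y).cast (hupd _ _ _ _).symm rfl) hw, hw'⟩
    obtain ⟨w, hw, k', rfl⟩ := key k0 0 (by omega)
    refine ((hP' x 0).cast ?_ rfl).seq (hw.seq ((exec_clear _ _).seq ((exec_clear _ _).cast rfl ?_)))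
    · funext j; simp only [st, update_apply]; split_ifs <;> simp_all
    · funext j; simp only [st, update_apply]; split_ifs <;> simp_all

end SM

namespace SM

open Function Relation

/-- An affine rule `(src, p k + r) ⟶ (tgt, α k + β)`. -/
structure Edge (S : Type) where
  src : S
  p : ℕ
  r : ℕ
  α : ℕ
  β : ℕ
  tgt : S

/-- One step of the affine machine with edge list `E`. -/
def Step {S : Type} (E : List (Edge S)) (x y : S × ℕ) : Prop :=
  ∃ e ∈ E, ∃ k, x = (e.src, e.r + e.p * k) ∧ y = (e.tgt, e.β + e.α * k)

/-- The `i`-th prime. -/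
noncomputable def pr (i : ℕ) : ℕ := Nat.nth Nat.Prime i

theorem pr_prime (i : ℕ) : (pr i).Prime := Nat.prime_nth_prime i

theorem pr_inj {i j : ℕ} : pr i = pr j ↔ i = j :=
  (Nat.nth_injective Nat.infinite_setOfPred_prime).eq_iff

/-- The register contents coded by `n`. -/
noncomputable def dec (n : ℕ) : ℕ → ℕ := fun i => n.factorization (pr i)

theorem dec_mul (i : ℕ) {n : ℕ} (hn : n ≠ 0) :
    dec (pr i * n) = update (dec n) i (dec n i + 1) := by
  funext j
  simp only [dec, Nat.factorization_mul (pr_prime i).ne_zero hn, (pr_prime i).factorization]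
  by_cases h : j = i
  · subst h; simp; omega
  · have : pr i ≠ pr j := fun e => h (pr_inj.1 e).symm
    simp [h, this, dec]

theorem dec_eq_zero_iff (i : ℕ) {n : ℕ} (hn : n ≠ 0) : dec n i = 0 ↔ ¬ pr i ∣ n := by
  have := (pr_prime i).dvd_iff_one_le_factorization hn
  simp only [dec]; rw [this]; omega

theorem dec_eq_zero {n : ℕ} (hn : n ≠ 0) (h : dec n = 0) : n = 1 := by
  by_contra h1
  obtain ⟨q, hq, hqn⟩ := Nat.exists_prime_and_dvd h1
  obtain ⟨i, hi⟩ : ∃ i, pr i = q := ⟨_, Nat.nth_count hq⟩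
  subst hi
  exact (dec_eq_zero_iff i hn).1 (congrFun h i) hqn

theorem dec_one : dec 1 = 0 := by funext i; simp [dec]

theorem dec_two_pow (x : ℕ) : dec (2 ^ x) = update (0 : ℕ → ℕ) 0 x := by
  have h2 : pr 0 = 2 := Nat.nth_prime_zero_eq_two
  induction x with
  | zero => rw [pow_zero, dec_one]; simp
  | succ x ih => rw [pow_succ', ← h2, dec_mul, h2, ih]; simp; simp [h2]

/-- The continuations and edges of a program. -/
noncomputable def edges : Prog → List Prog → List (Edge (List Prog))
  | .skip, k => [⟨.skip :: k, 1, 0, 1, 0, k⟩]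
  | .inc i, k => [⟨.inc i :: k, 1, 0, pr i, 0, k⟩]
  | .seq P Q, k => ⟨.seq P Q :: k, 1, 0, 1, 0, P :: Q :: k⟩ :: (edges P (Q :: k) ++ edges Q k)
  | .loop i P, k => ⟨.loop i P :: k, pr i, 0, 1, 0, P :: .loop i P :: k⟩ ::
      ((List.range (pr i - 1)).map (fun r => ⟨.loop i P :: k, pr i, r + 1, pr i, r + 1, k⟩) ++
        edges P (.loop i P :: k))

/-- Denotation of a continuation. -/
def Den : List Prog → (ℕ → ℕ) → (ℕ → ℕ) → Prop
  | [], v, w => v = w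
  | P :: k, v, w => ∃ u, Exec P v u ∧ Den k u w

theorem edges_sound (P : Prog) : ∀ (k : List Prog), ∀ e ∈ edges P k, ∀ x w,
    e.r + e.p * x ≠ 0 → (e.β + e.α * x ≠ 0 ∧
      (Den e.tgt (dec (e.β + e.α * x)) w → Den e.src (dec (e.r + e.p * x)) w)) := by
  induction P with
  | skip =>
    intro k e he x w hx
    simp only [edges, List.mem_singleton] at he
    subst he
    simp only at hx ⊢
    exact ⟨hx, fun h => ⟨_, .skip _, h⟩⟩
  | inc i =>
    intro k e he x w hx
    simp only [edges, List.mem_singleton] at he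
    subst he
    simp only [zero_add, one_mul] at hx ⊢
    refine ⟨mul_ne_zero (pr_prime i).ne_zero hx, fun h => ⟨_, .inc _ _, ?_⟩⟩
    rwa [← dec_mul i hx]
  | seq P Q ihP ihQ =>
    intro k e he x w hx
    simp only [edges, List.mem_cons, List.mem_append] at he
    rcases he with rfl | he | he
    · simp only at hx ⊢
      refine ⟨hx, ?_⟩
      rintro ⟨u, hu, u', hu', h⟩
      exact ⟨u', hu.seq hu', h⟩
    · exact ihP _ e he x w hx
    · exact ihQ _ e he x w hx
  | loop i P ih =>
    intro k e he x w hx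
    simp only [edges, List.mem_cons, List.mem_append, List.mem_map, List.mem_range] at he
    rcases he with rfl | ⟨r, hr, rfl⟩ | he
    · simp only [zero_add, one_mul] at hx ⊢
      have hx0 : x ≠ 0 := by rintro rfl; simp at hx
      refine ⟨hx0, ?_⟩
      rintro ⟨u, hu, u', hu', h⟩
      refine ⟨u', .loopS (x := dec x i) ?_ ?_ hu', h⟩
      · rw [dec_mul i hx0]; simp
      · rw [dec_mul i hx0]; simpa using hu
    · simp only at hx ⊢
      refine ⟨hx, fun h => ⟨_, .loop0 ?_, h⟩⟩
      rw [dec_eq_zero_iff i hx]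
      intro hd
      rw [(Nat.dvd_add_left (dvd_mul_right _ _))] at hd
      have := Nat.le_of_dvd (by omega) hd
      omega
    · exact ih _ e he x w hx

theorem edges_complete {P v u} (h : Exec P v u) : ∀ (k : List Prog) (E : List (Edge (List Prog))),
    edges P k ⊆ E → ∀ n, n ≠ 0 → dec n = v →
      ∃ n', n' ≠ 0 ∧ dec n' = u ∧ ReflTransGen (Step E) (P :: k, n) (k, n') := by
  induction h with
  | skip v =>
    intro k E hE n hn hv
    exact ⟨n, hn, hv, .single ⟨_, hE (by simp [edges]; rfl), n, by simp, by simp⟩⟩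
  | inc i v =>
    intro k E hE n hn hv
    refine ⟨pr i * n, mul_ne_zero (pr_prime i).ne_zero hn, by rw [dec_mul i hn, hv],
      .single ⟨_, hE (by simp [edges]; rfl), n, by simp, by simp⟩⟩
  | @seq P Q v u w _ _ ih1 ih2 =>
    intro k E hE n hn hv
    obtain ⟨n1, hn1, hv1, hs1⟩ := ih1 (Q :: k) E
      (fun e he => hE (by simp [edges, he])) n hn hv
    obtain ⟨n2, hn2, hv2, hs2⟩ := ih2 k E
      (fun e he => hE (by simp [edges, he])) n1 hn1 hv1
    refine ⟨n2, hn2, hv2, .head ?_ (hs1.trans hs2)⟩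
    exact ⟨⟨.seq P Q :: k, 1, 0, 1, 0, P :: Q :: k⟩, hE (by simp [edges]), n, by simp, by simp⟩
  | @loop0 i P v h0 =>
    intro k E hE n hn hv
    refine ⟨n, hn, hv, .single ?_⟩
    subst hv
    rw [dec_eq_zero_iff i hn] at h0
    have h1 : n % pr i ≠ 0 := fun h => h0 (Nat.dvd_of_mod_eq_zero h)
    have h2 : n % pr i < pr i := Nat.mod_lt _ (pr_prime i).pos
    have h3 := Nat.mod_add_div n (pr i)
    refine ⟨⟨.loop i P :: k, pr i, (n % pr i - 1) + 1, pr i, (n % pr i - 1) + 1, k⟩, hE ?_,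
      n / pr i, ?_, ?_⟩
    · simp only [edges, List.mem_cons, List.mem_append, List.mem_map, List.mem_range]
      exact Or.inr (Or.inl ⟨n % pr i - 1, by omega, rfl⟩)
    · simp only [Prod.mk.injEq, true_and]; omega
    · simp only [Prod.mk.injEq, true_and]; omega
  | @loopS i P v x u w h0 _ _ ih1 ih2 =>
    intro k E hE n hn hv
    subst hv
    have hd : pr i ∣ n := by
      by_contra h; rw [← dec_eq_zero_iff i hn] at h; omega
    obtain ⟨n0, rfl⟩ := hd
    have hn0 : n0 ≠ 0 := by rintro rfl; simp at hn
    rw [dec_mul i hn0] at h0 ih1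
    have hx : x = dec n0 i := by simpa using h0.symm
    obtain ⟨n1, hn1, hv1, hs1⟩ := ih1 (.loop i P :: k) E
      (fun e he => hE (by simp [edges, he])) n0 hn0 (by simp [hx])
    obtain ⟨n2, hn2, hv2, hs2⟩ := ih2 k E hE n1 hn1 hv1
    refine ⟨n2, hn2, hv2, .head ?_ (hs1.trans hs2)⟩
    exact ⟨⟨.loop i P :: k, pr i, 0, 1, 0, P :: .loop i P :: k⟩, hE (by simp [edges]), n0,
      by simp, by simp⟩

theorem machine_iff (P : Prog) (x : ℕ) :
    ReflTransGen (Step (edges P [])) ([P], 2 ^ x) ([], 1) ↔ Exec P (update 0 0 x) 0 := by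
  constructor
  · intro h
    have key : ∀ a : List Prog × ℕ, ReflTransGen (Step (edges P [])) a ([], 1) → a.2 ≠ 0 →
        Den a.1 (dec a.2) 0 := by
      intro a ha
      induction ha using ReflTransGen.head_induction_on with
      | refl => intro _; exact dec_one
      | head hab _ ih =>
        obtain ⟨e, he, k, rfl, rfl⟩ := hab
        intro h0
        have := edges_sound P [] e he k 0 h0
        exact this.2 (ih this.1)
    obtain ⟨u, hu, hu'⟩ := key _ h (by simp)
    simp only [dec_two_pow] at hu
    have : u = 0 := hu'
    rwa [this] at hu
  · intro h
    obtain ⟨n', hn', hd, hs⟩ := edges_complete h [] _ (List.Subset.refl _) (2 ^ x) (by simp)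
      (dec_two_pow x)
    rwa [dec_eq_zero hn' hd] at hs

/-- A numbering of the programs. -/
def codeP : Prog → ℕ
  | .skip => 0
  | .inc i => 4 * i + 1
  | .seq P Q => 4 * Nat.pair (codeP P) (codeP Q) + 2
  | .loop i P => 4 * Nat.pair i (codeP P) + 3

theorem codeP_inj : Injective codeP := by
  intro P
  induction P with
  | skip => intro Q h; cases Q <;> simp only [codeP] at h <;> first | rfl | omega
  | inc i =>
    intro Q h
    cases Q <;> simp only [codeP] at h <;> first | omega | skip
    congr 1; omega
  | seq P1 P2 ih1 ih2 =>
    intro Q h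
    cases Q <;> simp only [codeP] at h <;> first | omega | skip
    have h' := Nat.pair_eq_pair.1 (Nat.eq_of_mul_eq_mul_left (by omega : 0 < 4) (Nat.add_right_cancel h))
    rw [ih1 h'.1, ih2 h'.2]
  | loop i P ih =>
    intro Q h
    cases Q <;> simp only [codeP] at h <;> first | omega | skip
    have h' := Nat.pair_eq_pair.1 (Nat.eq_of_mul_eq_mul_left (by omega : 0 < 4) (Nat.add_right_cancel h))
    rw [h'.1, ih h'.2]

/-- An affine machine with an undecidable reachability problem. -/
theorem exists_machine : ∃ (E : List (Edge (List Prog))) (q0 : List Prog),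
    ¬ ComputablePred (fun x : ℕ => ReflTransGen (Step E) (q0, 2 ^ x) ([], 1)) := by
  let F : List.Vector ℕ 2 → ℕ := fun v =>
    if (Nat.Partrec.Code.evaln v.tail.head (Denumerable.ofNat Nat.Partrec.Code v.head) 0).isSome
    then 0 else 1
  have hF : Primrec F := by
    refine Primrec.ite (Primrec.eq.comp (Primrec.option_isSome.comp
      (Nat.Partrec.Code.primrec_evaln.comp (g := fun v : List.Vector ℕ 2 =>
        ((v.tail.head, Denumerable.ofNat Nat.Partrec.Code v.head), 0)) ?_)) (Primrec.const true))
      (Primrec.const 0) (Primrec.const 1)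
    exact ((Primrec.vector_head.comp Primrec.vector_tail).pair
      ((Primrec.ofNat _).comp Primrec.vector_head)).pair (Primrec.const 0)
  obtain ⟨P, hP⟩ := exists_search (Nat.Primrec'.of_prim hF)
  refine ⟨edges P [], [P], fun h => ?_⟩
  refine ComputablePred.halting_problem 0 (ComputablePred.computable_of_manyOneReducible
    ⟨Encodable.encode, Computable.encode, fun c => ?_⟩ h)
  rw [machine_iff, hP]
  simp only [F, List.Vector.head_cons, List.Vector.tail_cons, Denumerable.ofNat_encode,
    Part.dom_iff_mem, Nat.Partrec.Code.evaln_complete]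
  constructor
  · rintro ⟨y, k, hk⟩
    refine ⟨k, ?_⟩
    rw [Option.mem_def.1 hk]; rfl
  · rintro ⟨k, hk⟩
    by_cases h : (Nat.Partrec.Code.evaln k c 0).isSome
    · obtain ⟨y, hy⟩ := Option.isSome_iff_exists.1 h
      exact ⟨y, k, hy⟩
    · rw [if_neg h] at hk; omega

end SM

namespace SM

open Monoid

section Blocks

variable {S A : Type} [Group A]

/-- The factors of the free product of `A` and a free group on `S`. -/
def Fac (S A : Type) : Option S → Type
  | none => A
  | some _ => Multiplicative ℤ

instance instGroupFac : ∀ o : Option S, Group (Fac S A o)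
  | none => inferInstanceAs (Group A)
  | some _ => inferInstanceAs (Group (Multiplicative ℤ))

/-- The free product of `A` and a free group on `S`. -/
abbrev FP (S A : Type) [Group A] : Type := CoprodI (Fac S A)

/-- The inclusion of `A`. -/
def inA : A →* FP S A := CoprodI.of (M := Fac S A) (i := none)

/-- The positive generator of a free factor. -/
def gn (s : S) : Fac S A (some s) := Multiplicative.ofAdd (1 : ℤ)

theorem gn_ne (s : S) : (gn s : Fac S A (some s)) ≠ 1 := by
  intro h
  have : (1 : ℤ) = 0 := Multiplicative.ofAdd.injective h
  omega

/-- The free generators. -/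
def inS (s : S) : FP S A := CoprodI.of (gn s)

/-- The element of a block. -/
def blk (b : S × A × S) : FP S A := inS b.1 * inA b.2.1 * (inS b.2.2)⁻¹

/-- The syllable of an element of `A`. -/
def syA (g : A) : Σ o, Fac S A o := ⟨none, g⟩

theorem syA_inj {g g' : A} (h : (syA g : Σ o, Fac S A o) = syA g') : g = g' := by
  unfold syA at h
  exact eq_of_heq (Sigma.mk.inj h).2

theorem of_syA (g : A) : CoprodI.of (syA g : Σ o, Fac S A o).2 = inA g := rfl

theorem syA_ne (g : A) (x : S) (y : Fac S A (some x)) : (syA g : Σ o, Fac S A o) ≠ ⟨some x, y⟩ := by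
  intro h
  have := congrArg Sigma.fst h
  exact absurd this (by simp [syA])

open Classical in
/-- The syllables of a block. -/
noncomputable def blkL (b : S × A × S) : List (Σ o, Fac S A o) :=
  if b.2.1 = 1 then [⟨some b.1, gn b.1⟩, ⟨some b.2.2, (gn b.2.2)⁻¹⟩]
  else [⟨some b.1, gn b.1⟩, syA b.2.1, ⟨some b.2.2, (gn b.2.2)⁻¹⟩]

theorem blkL_prod (b : S × A × S) :
    ((blkL b).map fun l : Σ o, Fac S A o => CoprodI.of l.2).prod = blk b := by
  unfold blkL blk inS
  split_ifs with h
  · simp [h]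
  · simp [mul_assoc, of_syA]

/-- A nontrivial block. -/
def NT (b : S × A × S) : Prop := ¬ (b.1 = b.2.2 ∧ b.2.1 = 1)

/-- A reduced list of blocks. -/
def Red (B : List (S × A × S)) : Prop :=
  (∀ b ∈ B, NT b) ∧ B.IsChain (fun b b' => b.2.2 ≠ b'.1)

theorem flat_head (B : List (S × A × S)) (x : Σ o, Fac S A o)
    (hx : x ∈ (B.flatMap blkL).head?) : ∃ b ∈ B.head?, x.1 = some b.1 := by
  cases B with
  | nil => simp at hx
  | cons b B =>
    refine ⟨b, by simp, ?_⟩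
    unfold blkL at hx
    simp only [List.flatMap_cons] at hx
    split_ifs at hx <;> simp at hx <;> rw [← hx]

theorem flat_chain (B : List (S × A × S)) (hB : Red B) :
    (B.flatMap blkL).IsChain (fun l l' => l.1 ≠ l'.1) := by
  induction B with
  | nil => simp
  | cons b B ih =>
    have hR : Red B := ⟨fun x hx => hB.1 x (by simp [hx]), hB.2.tail⟩
    have hnt := hB.1 b (by simp)
    rw [List.flatMap_cons]
    refine List.isChain_append.2 ⟨?_, ih hR, ?_⟩
    · unfold blkL
      split_ifs with h
      · simp only [List.isChain_cons_cons, List.isChain_singleton, and_true]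
        intro e
        exact hnt ⟨Option.some.inj e, h⟩
      · simp [syA]
    · intro x hx y hy
      obtain ⟨b', hb', e⟩ := flat_head B y hy
      have hxe : x.1 = some b.2.2 := by
        unfold blkL at hx
        split_ifs at hx <;> simp at hx <;> rw [← hx]
      rw [hxe, e]
      cases B with
      | nil => simp at hb'
      | cons c B =>
        simp at hb'
        subst hb'
        have := hB.2
        rw [List.isChain_cons_cons] at this
        intro h
        exact this.1 (Option.some.inj h)

/-- The reduced word of a reduced list of blocks. -/
noncomputable def toW (B : List (S × A × S)) (hB : Red B) : CoprodI.Word (Fac S A) where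
  toList := B.flatMap blkL
  ne_one := by
    intro l hl
    obtain ⟨b, _, hl⟩ := List.mem_flatMap.1 hl
    unfold blkL at hl
    split_ifs at hl with h
    · simp only [List.mem_cons, List.not_mem_nil, or_false] at hl
      rcases hl with rfl | rfl
      · exact gn_ne _
      · exact inv_ne_one.2 (gn_ne _)
    · simp only [List.mem_cons, List.not_mem_nil, or_false] at hl
      rcases hl with rfl | rfl | rfl
      · exact gn_ne _
      · exact h
      · exact inv_ne_one.2 (gn_ne _)
  chain_ne := flat_chain B hB

theorem toW_prod (B : List (S × A × S)) (hB : Red B) : (toW B hB).prod = (B.map blk).prod := by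
  unfold CoprodI.Word.prod toW
  simp only
  clear hB
  induction B with
  | nil => simp
  | cons b B ih => rw [List.flatMap_cons, List.map_append, List.prod_append, ih, blkL_prod]; simp

theorem red_unique (B : List (S × A × S)) (hB : Red B) (b : S × A × S) (hb : NT b)
    (h : (B.map blk).prod = blk b) : b ∈ B := by
  classical
  have hb' : Red [b] := ⟨by simpa using hb, by simp⟩
  have h1 : toW B hB = toW [b] hb' := by
    apply CoprodI.Word.equiv.symm.injective
    change (toW B hB).prod = (toW [b] hb').prod
    rw [toW_prod, toW_prod, h]; simp
  have h2 : B.flatMap blkL = blkL b := by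
    have := congrArg CoprodI.Word.toList h1
    simpa [toW] using this
  obtain ⟨p, g, q⟩ := b
  cases B with
  | nil =>
    exfalso
    unfold blkL at h2
    split_ifs at h2 <;> simp at h2
  | cons c B =>
    obtain ⟨p', g', q'⟩ := c
    rw [List.flatMap_cons] at h2
    unfold blkL at h2
    simp only at h2
    split_ifs at h2 with e1 e2 e2
    · simp only [List.cons_append, List.nil_append, List.cons.injEq, Sigma.mk.injEq,
        Option.some.injEq] at h2
      obtain ⟨⟨rfl, _⟩, ⟨rfl, _⟩, _⟩ := h2
      subst e1; subst e2; simp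
    · simp only [List.cons_append, List.nil_append, List.cons.injEq] at h2
      exact absurd h2.2.1.symm (syA_ne _ _ _)
    · simp only [List.cons_append, List.nil_append, List.cons.injEq] at h2
      exact absurd h2.2.1 (syA_ne _ _ _)
    · simp only [List.cons_append, List.nil_append, List.cons.injEq, Sigma.mk.injEq,
        Option.some.injEq] at h2
      obtain ⟨⟨rfl, _⟩, hg, ⟨rfl, _⟩, _⟩ := h2
      obtain rfl := syA_inj hg
      simp

/-- Labelled paths. -/
inductive Path (Ed : S × A × S → Prop) : S → A → S → Prop
  | nil (p) : Path Ed p 1 p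
  | cons {p u q g r} : Ed (p, u, q) → Path Ed q g r → Path Ed p (u * g) r

theorem reduce (Ed : S × A × S → Prop) (l : List (S × A × S)) (hl : ∀ b ∈ l, Ed b) :
    ∃ B : List (S × A × S), Red B ∧ (∀ b ∈ B, Path Ed b.1 b.2.1 b.2.2) ∧
      (l.map blk).prod = (B.map blk).prod := by
  classical
  induction l with
  | nil => exact ⟨[], ⟨by simp, by simp⟩, by simp, rfl⟩
  | cons e l ih =>
    obtain ⟨B, hR, hP, hprod⟩ := ih fun b hb => hl b (by simp [hb])
    obtain ⟨p, u, q⟩ := e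
    have he : Ed (p, u, q) := hl _ (by simp)
    have he' : Path Ed p u q := by simpa using Path.cons he (.nil q)
    rw [List.map_cons, List.prod_cons, hprod]
    have triv : ∀ b : S × A × S, ¬ NT b → blk b = 1 := by
      rintro ⟨x, g, y⟩ h
      have h2 : x = y ∧ g = 1 := not_not.1 h
      simp [blk, h2.1, h2.2]
    by_cases hm : ∃ c B', B = c :: B' ∧ q = c.1
    · obtain ⟨⟨q1, g, r⟩, B', rfl, hq⟩ := hm
      obtain rfl : q = q1 := hq
      have hm : blk (p, u, q) * (List.map blk ((q, g, r) :: B')).prod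
          = blk (p, u * g, r) * (List.map blk B').prod := by
        simp [blk, mul_assoc]
      have hR' : Red B' := ⟨fun x hx => hR.1 x (by simp [hx]), hR.2.tail⟩
      by_cases hn : NT (p, u * g, r)
      · refine ⟨(p, u * g, r) :: B', ⟨?_, ?_⟩, ?_, ?_⟩
        · intro b hb
          rcases List.mem_cons.1 hb with rfl | hb
          · exact hn
          · exact hR'.1 b hb
        · have := hR.2
          rw [List.isChain_cons] at this ⊢
          exact this
        · intro b hb
          rcases List.mem_cons.1 hb with rfl | hb
          · exact Path.cons he (hP (q, g, r) (by simp))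
          · exact hP b (by simp [hb])
        · rw [hm]; simp
      · refine ⟨B', hR', fun b hb => hP b (by simp [hb]), ?_⟩
        rw [hm, triv _ hn, one_mul]
    · by_cases hn : NT (p, u, q)
      · refine ⟨(p, u, q) :: B, ⟨?_, ?_⟩, ?_, by simp⟩
        · intro b hb
          rcases List.mem_cons.1 hb with rfl | hb
          · exact hn
          · exact hR.1 b hb
        · rw [List.isChain_cons]
          refine ⟨?_, hR.2⟩
          intro y hy e
          cases B with
          | nil => simp at hy
          | cons c B =>
            simp at hy
            subst hy
            exact hm ⟨c, B, rfl, e⟩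
        · intro b hb
          rcases List.mem_cons.1 hb with rfl | hb
          · exact he'
          · exact hP b hb
      · exact ⟨B, hR, hP, by rw [triv _ hn, one_mul]⟩

/-- Products of edge blocks that equal a single block come from paths. -/
theorem path_of_prod (Ed : S × A × S → Prop) (l : List (S × A × S)) (hl : ∀ b ∈ l, Ed b)
    {p g q} (hpq : p ≠ q) (h : (l.map blk).prod = blk (p, g, q)) : Path Ed p g q := by
  obtain ⟨B, hR, hP, hB⟩ := reduce Ed l hl
  exact hP _ (red_unique B hR (p, g, q) (fun e => hpq e.1) (hB ▸ h))

end Blocks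

end SM

namespace SM

open Function Relation

/-- The control states of the submonoid. -/
inductive St (S : Type) : Type
  | main : S → St S
  | mid : ℕ → ℕ → S → St S
  | nxt : S → St S
  | fin : St S

section Group

variable {S : Type}

/-- The letters. -/
def X (i : ℤ) : FreeGroup ℤ := FreeGroup.of i

/-- The generators belonging to an edge. -/
def lab1 (e : Edge S) : List (St S × FreeGroup ℤ × St S) :=
  [(.main e.src, (X 1)⁻¹ ^ e.r * X 2 ^ e.β, .mid e.p e.α e.tgt),
   (.mid e.p e.α e.tgt, (X 1)⁻¹ ^ e.p * X 2 ^ e.α, .mid e.p e.α e.tgt),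
   (.mid e.p e.α e.tgt, X 3, .nxt e.tgt),
   (.nxt e.tgt, (X 2)⁻¹ * X 1, .nxt e.tgt),
   (.nxt e.tgt, X 0, .main e.tgt)]

/-- The labelled edges of the automaton. -/
def labs (E : List (Edge S)) (hlt : S) : List (St S × FreeGroup ℤ × St S) :=
  E.flatMap lab1 ++ [(.main hlt, (X 1)⁻¹, .fin), (.fin, (X 0)⁻¹ * (X 3)⁻¹, .fin)]

/-- The element of a labelled edge. -/
def gen (idx : St S → ℤ) (e : St S × FreeGroup ℤ × St S) : FreeGroup ℤ :=
  X (idx e.1) * e.2.1 * (X (idx e.2.2))⁻¹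

theorem complete {K : Type} [Group K] (f : ℤ → K) (hab : Commute (f 0) (f 1))
    (hbc : Commute (f 1) (f 2)) (hcd : Commute (f 2) (f 3)) (idx : St S → ℤ)
    (E : List (Edge S)) (hlt : S) (M : Submonoid K)
    (hM : ∀ e ∈ labs E hlt, FreeGroup.lift f (gen idx e) ∈ M) {q0 : S} {n0 : ℕ}
    (h : ReflTransGen (Step E) (q0, n0) (hlt, 1)) :
    FreeGroup.lift f (gen idx (.main q0, (X 1)⁻¹ ^ n0, .fin)) ∈ M := by
  generalize ha : f 0 = a at *
  generalize hb : f 1 = b at *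
  generalize hc : f 2 = c at *
  generalize hd : f 3 = d at *
  let J : St S → K → St S → Prop := fun p g q => f (idx p) * g * (f (idx q))⁻¹ ∈ M
  have Jt : ∀ {p g q g' r}, J p g q → J q g' r → J p (g * g') r := by
    intro p g q g' r h1 h2
    have := M.mul_mem h1 h2
    simpa [J, mul_assoc] using this
  have J1 : ∀ p, J p 1 p := fun p => by simp [J]
  have Jp : ∀ {p g}, J p g p → ∀ k, J p (g ^ k) p := by
    intro p g h1 k
    induction k with
    | zero => simpa using J1 p
    | succ k ih => rw [pow_succ]; exact Jt ih h1
  have Je : ∀ {p u q}, (p, u, q) ∈ labs E hlt → J p (FreeGroup.lift f u) q := by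
    intro p u q he
    have := hM _ he
    simpa [gen, J, X] using this
  have key : ∀ y : S × ℕ, ReflTransGen (Step E) (q0, n0) y →
      ∃ N, J (.main q0) (b⁻¹ ^ n0 * (d * a) ^ N * b ^ y.2) (.main y.1) := by
    intro y hy
    induction hy with
    | refl => exact ⟨0, by simpa using J1 (.main q0)⟩
    | tail _ hs ih =>
      obtain ⟨N, ih⟩ := ih
      obtain ⟨e, he, k, rfl, rfl⟩ := hs
      have hmem : ∀ x ∈ lab1 e, x ∈ labs E hlt := fun x hx => by
        simp only [labs, List.mem_append, List.mem_flatMap]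
        exact Or.inl ⟨e, he, hx⟩
      have e1 := Je (hmem (.main e.src, (X 1)⁻¹ ^ e.r * X 2 ^ e.β, .mid e.p e.α e.tgt)
        (by simp [lab1]))
      have e2 := Je (hmem (.mid e.p e.α e.tgt, (X 1)⁻¹ ^ e.p * X 2 ^ e.α, .mid e.p e.α e.tgt)
        (by simp [lab1]))
      have e3 := Je (hmem (.mid e.p e.α e.tgt, X 3, .nxt e.tgt) (by simp [lab1]))
      have e4 := Je (hmem (.nxt e.tgt, (X 2)⁻¹ * X 1, .nxt e.tgt) (by simp [lab1]))
      have e5 := Je (hmem (.nxt e.tgt, X 0, .main e.tgt) (by simp [lab1]))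
      simp only [X, map_mul, map_pow, map_inv, FreeGroup.lift_apply_of, ha, hb, hc, hd]
        at e1 e2 e3 e4 e5
      refine ⟨N + 1, ?_⟩
      have tot := Jt ih (Jt (Jt e1 (Jp e2 k)) (Jt (Jt e3 (Jp e4 (e.β + e.α * k))) e5))
      convert tot using 1
      simp only
      have U1 : b⁻¹ ^ e.r * c ^ e.β * (b⁻¹ ^ e.p * c ^ e.α) ^ k
          = b⁻¹ ^ (e.r + e.p * k) * c ^ (e.β + e.α * k) := by
        have hbc' : Commute b⁻¹ c := hbc.inv_left
        rw [(hbc'.pow_pow _ _).mul_pow, ← pow_mul, ← pow_mul, pow_add, pow_add]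
        rw [mul_assoc, ← mul_assoc (c ^ e.β), ((hbc'.pow_pow (e.p * k) e.β).eq).symm]
        simp only [mul_assoc]
      rw [U1]
      generalize e.β + e.α * k = l
      generalize e.r + e.p * k = n
      have U2 : d * (c⁻¹ * b) ^ l * a = c⁻¹ ^ l * (d * a * b ^ l) := by
        have h1 : Commute c⁻¹ b := hbc.symm.inv_left
        have h2 : Commute (c⁻¹ ^ l) d := (hcd.inv_left).pow_left l
        have h3 : Commute a (b ^ l) := hab.pow_right l
        rw [h1.mul_pow, mul_assoc d a, h3.eq, ← mul_assoc d (c⁻¹ ^ l), ← h2.eq]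
        simp only [mul_assoc]
      rw [U2, pow_succ]
      simp only [mul_assoc, inv_pow, inv_mul_cancel_left, mul_inv_cancel_left]
  obtain ⟨N, hN⟩ := key _ h
  have e6 := Je (show (St.main hlt, (X 1)⁻¹, St.fin) ∈ labs E hlt by simp [labs])
  have e7 := Je (show (St.fin, (X 0)⁻¹ * (X 3)⁻¹, St.fin) ∈ labs E hlt by simp [labs])
  simp only [X, map_mul, map_inv, FreeGroup.lift_apply_of, ha, hb, hd] at e6 e7
  have tot := Jt (Jt hN e6) (Jp e7 N)
  have e8 : b⁻¹ ^ n0 * (d * a) ^ N * b ^ 1 * b⁻¹ * (a⁻¹ * d⁻¹) ^ N = b⁻¹ ^ n0 := by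
    rw [← mul_inv_rev, inv_pow (d * a)]; group
  simp only at tot
  rw [e8] at tot
  simpa [gen, X, J, hb] using tot

end Group

end SM

namespace SM

open Function Relation

/-- Two integer tapes with heads. -/
@[ext] structure LX : Type where
  l1 : ℤ → ℤ
  p1 : ℤ
  l2 : ℤ → ℤ
  p2 : ℤ

/-- Add at the first head. -/
def pb : Equiv.Perm LX where
  toFun x := ⟨x.l1 + Pi.single x.p1 1, x.p1, x.l2, x.p2⟩
  invFun x := ⟨x.l1 - Pi.single x.p1 1, x.p1, x.l2, x.p2⟩
  left_inv x := by ext <;> simp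
  right_inv x := by ext <;> simp

/-- Add at the second head. -/
def pc : Equiv.Perm LX where
  toFun x := ⟨x.l1, x.p1, x.l2 + Pi.single x.p2 1, x.p2⟩
  invFun x := ⟨x.l1, x.p1, x.l2 - Pi.single x.p2 1, x.p2⟩
  left_inv x := by ext <;> simp
  right_inv x := by ext <;> simp

/-- Move the first head. -/
def pd : Equiv.Perm LX where
  toFun x := ⟨x.l1, x.p1 + 1, x.l2, x.p2⟩
  invFun x := ⟨x.l1, x.p1 - 1, x.l2, x.p2⟩
  left_inv x := by ext <;> simp
  right_inv x := by ext <;> simp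

/-- Move the second head. -/
def pa : Equiv.Perm LX where
  toFun x := ⟨x.l1, x.p1, x.l2, x.p2 + 1⟩
  invFun x := ⟨x.l1, x.p1, x.l2, x.p2 - 1⟩
  left_inv x := by ext <;> simp
  right_inv x := by ext <;> simp

/-- The group acting from the right. -/
abbrev AA : Type := (Equiv.Perm LX)ᵐᵒᵖ

/-- The images of the letters. -/
def fA (i : ℤ) : AA :=
  if i = 0 then .op pa else if i = 1 then .op pb else if i = 2 then .op pc else
    if i = 3 then .op pd else 1

/-- Evaluation in `AA`. -/
def evA : FreeGroup ℤ →* AA := FreeGroup.lift fA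

/-- The right action. -/
def act (g : AA) (x : LX) : LX := g.unop x

theorem act_mul (g h : AA) (x : LX) : act (g * h) x = act h (act g x) := rfl

theorem act_one (x : LX) : act 1 x = x := rfl

theorem commA : ∀ i : ℤ, (i = 0 ∨ i = 1 ∨ i = 2) → Commute (fA i) (fA (i + 1)) := by
  have h1 : Commute pa pb := by
    ext x <;> simp [pa, pb, Equiv.Perm.mul_apply]
  have h2 : Commute pb pc := by
    ext x <;> simp [pc, pb, Equiv.Perm.mul_apply]
  have h3 : Commute pc pd := by
    ext x <;> simp [pc, pd, Equiv.Perm.mul_apply]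
  rintro i (rfl | rfl | rfl)
  · exact h1.op
  · exact h2.op
  · exact h3.op

theorem evA_X (i : ℤ) : evA (X i) = fA i := by simp [evA, X]

theorem act0 (x : LX) : act (evA (X 0)) x = ⟨x.l1, x.p1, x.l2, x.p2 + 1⟩ := by
  rw [evA_X]; rfl
theorem act1 (x : LX) : act (evA (X 1)) x = ⟨x.l1 + Pi.single x.p1 1, x.p1, x.l2, x.p2⟩ := by
  rw [evA_X]; rfl
theorem act2 (x : LX) : act (evA (X 2)) x = ⟨x.l1, x.p1, x.l2 + Pi.single x.p2 1, x.p2⟩ := by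
  rw [evA_X]; rfl
theorem act3 (x : LX) : act (evA (X 3)) x = ⟨x.l1, x.p1 + 1, x.l2, x.p2⟩ := by
  rw [evA_X]; rfl
theorem act0' (x : LX) : act (evA (X 0)⁻¹) x = ⟨x.l1, x.p1, x.l2, x.p2 - 1⟩ := by
  rw [map_inv, evA_X]; rfl
theorem act1' (x : LX) : act (evA (X 1)⁻¹) x = ⟨x.l1 - Pi.single x.p1 1, x.p1, x.l2, x.p2⟩ := by
  rw [map_inv, evA_X]; rfl
theorem act2' (x : LX) : act (evA (X 2)⁻¹) x = ⟨x.l1, x.p1, x.l2 - Pi.single x.p2 1, x.p2⟩ := by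
  rw [map_inv, evA_X]; rfl
theorem act3' (x : LX) : act (evA (X 3)⁻¹) x = ⟨x.l1, x.p1 - 1, x.l2, x.p2⟩ := by
  rw [map_inv, evA_X]; rfl

theorem act1pow (n : ℕ) (x : LX) :
    act (evA ((X 1)⁻¹ ^ n)) x = ⟨x.l1 - Pi.single x.p1 (n : ℤ), x.p1, x.l2, x.p2⟩ := by
  induction n generalizing x with
  | zero => ext <;> simp [act_one]
  | succ n ih =>
    rw [pow_succ, map_mul, act_mul, ih, act1']
    ext <;> simp [Pi.single_add, sub_sub]

theorem act2pow (n : ℕ) (x : LX) :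
    act (evA ((X 2) ^ n)) x = ⟨x.l1, x.p1, x.l2 + Pi.single x.p2 (n : ℤ), x.p2⟩ := by
  induction n generalizing x with
  | zero => ext <;> simp [act_one]
  | succ n ih =>
    rw [pow_succ, map_mul, act_mul, ih, act2]
    ext <;> simp [Pi.single_add, add_assoc]

/-- A garbage cell has been left behind. -/
def Dead (x : LX) : Prop := (∃ i < x.p1, x.l1 i ≠ 0) ∨ (∃ i < x.p2, x.l2 i ≠ 0)

theorem dead_of {x y : LX} (h : Dead x) (h1 : x.p1 ≤ y.p1) (h2 : x.p2 ≤ y.p2)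
    (h3 : ∀ i < x.p1, y.l1 i = x.l1 i) (h4 : ∀ i < x.p2, y.l2 i = x.l2 i) : Dead y := by
  rcases h with ⟨i, hi, h⟩ | ⟨i, hi, h⟩
  · exact Or.inl ⟨i, by omega, by rwa [h3 i hi]⟩
  · exact Or.inr ⟨i, by omega, by rwa [h4 i hi]⟩

/-- The invariant. -/
def Inv {S : Type} (E : List (Edge S)) (hlt : S) (s0 : S × ℕ) : St S → LX → Prop
  | .main q, x => Dead x ∨ ∃ (N : ℤ) (n : ℕ), ReflTransGen (Step E) s0 (q, n) ∧
      x = ⟨Pi.single N (n : ℤ), N, 0, N⟩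
  | .mid p α q', x => Dead x ∨ ∃ (N : ℤ) (n r β k : ℕ) (q : S), ⟨q, p, r, α, β, q'⟩ ∈ E ∧
      ReflTransGen (Step E) s0 (q, n) ∧
      x = ⟨Pi.single N ((n : ℤ) - r - p * k), N, Pi.single N ((β : ℤ) + α * k), N⟩
  | .nxt q', x => Dead x ∨ ∃ (N : ℤ) (m : ℕ) (l : ℤ), ReflTransGen (Step E) s0 (q', m) ∧
      x = ⟨Pi.single (N + 1) l, N + 1, Pi.single N (m - l), N⟩
  | .fin, x => ReflTransGen (Step E) s0 (hlt, 1) ∨ ∃ i, x.l1 i ≠ 0 ∨ x.l2 i ≠ 0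

theorem inv_step {S : Type} (E : List (Edge S)) (hlt : S) (s0 : S × ℕ)
    {p q : St S} {u : FreeGroup ℤ} (he : (p, u, q) ∈ labs E hlt) {x : LX}
    (hx : Inv E hlt s0 p x) : Inv E hlt s0 q (act (evA u) x) := by
  have sub_aux : ∀ i j c : ℤ, i < j → (Pi.single j c : ℤ → ℤ) i = 0 := fun i j c h =>
    Pi.single_eq_of_ne (by omega) _
  simp only [labs, List.mem_append, List.mem_flatMap, lab1, List.mem_cons, List.not_mem_nil,
    or_false, Prod.mk.injEq] at he
  rcases he with ⟨e, he, h | h | h | h | h⟩ | h | h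
  · obtain ⟨rfl, rfl, rfl⟩ := h
    rw [map_mul, act_mul, act1pow, act2pow]
    rcases hx with hx | ⟨N, n, hr, rfl⟩
    · left
      refine dead_of hx le_rfl le_rfl ?_ ?_ <;> intro i hi <;> simp [sub_aux _ _ _ hi]
    · right
      refine ⟨N, n, e.r, e.β, 0, e.src, he, hr, ?_⟩
      ext <;> simp [Pi.single_sub]
  · obtain ⟨rfl, rfl, rfl⟩ := h
    rw [map_mul, act_mul, act1pow, act2pow]
    rcases hx with hx | ⟨N, n, r, β, k, q, he', hr, rfl⟩
    · left
      refine dead_of hx le_rfl le_rfl ?_ ?_ <;> intro i hi <;> simp [sub_aux _ _ _ hi]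
    · right
      refine ⟨N, n, r, β, k + 1, q, he', hr, ?_⟩
      simp only [LX.mk.injEq, true_and, and_true]
      rw [← Pi.single_sub, ← Pi.single_add]
      constructor <;> congr 1 <;> push_cast <;> ring
  · obtain ⟨rfl, rfl, rfl⟩ := h
    rw [act3]
    rcases hx with hx | ⟨N, n, r, β, k, q, he', hr, rfl⟩
    · left
      exact dead_of hx (by simp) le_rfl (by simp) (by simp)
    · by_cases h0 : (n : ℤ) - r - e.p * k = 0
      · right
        refine ⟨N, β + e.α * k, 0, hr.tail ⟨_, he', k, ?_, rfl⟩, ?_⟩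
        · congr 1; zify; linarith
        · rw [h0]; simp
      · left; left
        exact ⟨N, by simp, by simpa using h0⟩
  · obtain ⟨rfl, rfl, rfl⟩ := h
    rw [map_mul, act_mul, act2', act1]
    rcases hx with hx | ⟨N, m, l, hr, rfl⟩
    · left
      refine dead_of hx le_rfl le_rfl ?_ ?_ <;> intro i hi <;> simp [sub_aux _ _ _ hi]
    · right
      refine ⟨N, m, l + 1, hr, ?_⟩
      simp only [LX.mk.injEq, true_and, and_true]
      rw [← Pi.single_sub, ← Pi.single_add, sub_sub]
      exact ⟨rfl, rfl⟩
  · obtain ⟨rfl, rfl, rfl⟩ := h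
    rw [act0]
    rcases hx with hx | ⟨N, m, l, hr, rfl⟩
    · left
      exact dead_of hx le_rfl (by simp) (by simp) (by simp)
    · by_cases h0 : (m : ℤ) - l = 0
      · right
        refine ⟨N + 1, m, hr, ?_⟩
        have : l = m := by omega
        subst this; simp
      · left; right
        exact ⟨N, by simp, by simpa using h0⟩
  · obtain ⟨rfl, rfl, rfl⟩ := h
    rw [act1']
    rcases hx with hx | ⟨N, n, hr, rfl⟩
    · right
      rcases hx with ⟨i, hi, h⟩ | ⟨i, hi, h⟩
      · exact ⟨i, Or.inl (by simpa [sub_aux _ _ _ hi] using h)⟩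
      · exact ⟨i, Or.inr h⟩
    · by_cases h0 : n = 1
      · subst h0; exact Or.inl hr
      · right
        refine ⟨N, Or.inl ?_⟩
        simp; omega
  · obtain ⟨rfl, rfl, rfl⟩ := h
    rw [map_mul, act_mul, act0', act3']
    exact hx

theorem inv_path {S : Type} (E : List (Edge S)) (hlt : S) (s0 : S × ℕ)
    {p q : St S} {g : AA}
    (h : Path (fun b => ∃ e ∈ labs E hlt, b = (e.1, evA e.2.1, e.2.2)) p g q) {x : LX}
    (hx : Inv E hlt s0 p x) : Inv E hlt s0 q (act g x) := by
  induction h generalizing x with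
  | nil p => exact hx
  | cons he _ ih =>
    obtain ⟨⟨p', u, q'⟩, he, heq⟩ := he
    simp only [Prod.mk.injEq] at heq
    obtain ⟨rfl, rfl, rfl⟩ := heq
    rw [act_mul]
    exact ih (inv_step E hlt s0 he hx)

theorem sound {S : Type} (E : List (Edge S)) (hlt q0 : S) (n0 : ℕ)
    (h : Path (fun b => ∃ e ∈ labs E hlt, b = (e.1, evA e.2.1, e.2.2))
      (.main q0) (evA ((X 1)⁻¹ ^ n0)) .fin) :
    ReflTransGen (Step E) (q0, n0) (hlt, 1) := by
  have := inv_path E hlt (q0, n0) h (x := ⟨Pi.single 0 (n0 : ℤ), 0, 0, 0⟩)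
    (Or.inr ⟨0, n0, .refl, rfl⟩)
  rw [act1pow] at this
  rcases this with h | ⟨i, h⟩
  · exact h
  · simp at h

end SM

namespace SM

open Function Relation

/-- A code for a list of programs. -/
def cd (k : List Prog) : ℕ := Encodable.encode (k.map codeP)

theorem cd_inj : Injective cd := fun _ _ h =>
  List.map_injective_iff.2 codeP_inj (Encodable.encode_injective h)

/-- A code for the states. -/
def cst : St (List Prog) → ℕ
  | .main s => 4 * cd s
  | .nxt s => 4 * cd s + 1
  | .mid p α s => 4 * Nat.pair p (Nat.pair α (cd s)) + 2
  | .fin => 3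

theorem cst_inj : Injective cst := by
  intro x y h
  cases x <;> cases y <;> simp only [cst] at h <;> first | omega | rfl | skip
  · congr 1; exact cd_inj (by omega)
  · have h' := Nat.pair_eq_pair.1 (show Nat.pair _ _ = Nat.pair _ _ by
      apply Nat.eq_of_mul_eq_mul_left (show 0 < 4 by norm_num); exact Nat.add_right_cancel h)
    have h2 := Nat.pair_eq_pair.1 h'.2
    rw [h'.1, h2.1, cd_inj h2.2]
  · congr 1; exact cd_inj (by omega)

/-- The exponents used for the states. -/
def idx (s : St (List Prog)) : ℤ := 5 + 2 * (cst s : ℤ)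

theorem idx_inj : Injective idx := fun x y h => cst_inj (by simp only [idx] at h; omega)

/-- The target group. -/
abbrev HH : Type := FP (St (List Prog)) AA

open Classical in
/-- The images of the letters in the target group. -/
noncomputable def eta (n : ℤ) : HH :=
  if h : ∃ s, idx s = n then inS h.choose else inA (fA n)

theorem eta_idx (s : St (List Prog)) : eta (idx s) = inS s := by
  have h : ∃ s', idx s' = idx s := ⟨s, rfl⟩
  rw [eta, dif_pos h, idx_inj h.choose_spec]

theorem eta_lt {n : ℤ} (hn : n < 4) : eta n = inA (fA n) := by
  rw [eta, dif_neg]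
  rintro ⟨s, rfl⟩
  simp only [idx] at hn; omega

theorem eta_neg {n : ℤ} (hn : n < 0) : eta n = 1 := by
  rw [eta_lt (by omega), fA]
  rw [if_neg (by omega), if_neg (by omega), if_neg (by omega), if_neg (by omega), map_one]

theorem eta_even {n : ℤ} (hn : 4 ≤ n) (h2 : n % 2 = 0) : eta n = 1 := by
  rw [eta, dif_neg, fA]
  · rw [if_neg (by omega), if_neg (by omega), if_neg (by omega), if_neg (by omega), map_one]
  · rintro ⟨s, rfl⟩
    simp only [idx] at h2; omega

theorem eta_comm (n : ℤ) : Commute (eta n) (eta (n + 1)) := by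
  rcases lt_or_ge n 0 with h | h
  · rw [eta_neg h]; exact Commute.one_left _
  rcases lt_or_ge n 3 with h' | h'
  · rw [eta_lt (by omega), eta_lt (by omega)]
    exact (commA n (by omega)).map inA
  rcases Int.emod_two_eq_zero_or_one n with h2 | h2
  · rw [eta_even (by omega) h2]; exact Commute.one_left _
  · rw [eta_even (n := n + 1) (by omega) (by omega)]; exact Commute.one_right _

/-- Evaluation in the target group. -/
noncomputable def evH : FreeGroup ℤ →* HH := FreeGroup.lift eta

/-- The permutation of `a`. -/
noncomputable def qa : Equiv.Perm (HH × ℤ) where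
  toFun x := (eta x.2 * x.1, x.2)
  invFun x := ((eta x.2)⁻¹ * x.1, x.2)
  left_inv x := by simp
  right_inv x := by simp

/-- The permutation of `t`. -/
def qt : Equiv.Perm (HH × ℤ) where
  toFun x := (x.1, x.2 - 1)
  invFun x := (x.1, x.2 + 1)
  left_inv x := by simp
  right_inv x := by simp

/-- The letters go to permutations. -/
noncomputable def qf (i : Fin 2) : Equiv.Perm (HH × ℤ) := if i = 0 then qa else qt

theorem qf_rel : ∀ r ∈ ({oneRel} : Set (FreeGroup (Fin 2))), FreeGroup.lift qf r = 1 := by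
  intro r hr
  rw [Set.mem_singleton_iff] at hr
  subst hr
  have hc : Commute qa (qt * qa * qt⁻¹) := by
    ext x : 1
    have : eta x.2 * (eta (x.2 + 1) * x.1) = eta (x.2 + 1) * (eta x.2 * x.1) := by
      rw [← mul_assoc, (eta_comm x.2).eq, mul_assoc]
    have h1 : (qt * qa * qt⁻¹) x = (eta (x.2 + 1) * x.1, x.2) := by
      change (_, x.2 + 1 - 1) = _
      rw [add_sub_cancel_right]; rfl
    have h2 : (qt * qa * qt⁻¹) (qa x) = (eta (x.2 + 1) * (eta x.2 * x.1), x.2) := by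
      change (_, x.2 + 1 - 1) = _
      rw [add_sub_cancel_right]; rfl
    rw [Equiv.Perm.mul_apply qa, Equiv.Perm.mul_apply _ qa, h1, h2, ← this]
    rfl
  have h0 : qf 0 = qa := rfl
  have h1 : qf 1 = qt := rfl
  simp only [oneRel, map_mul, map_inv, FreeGroup.lift_apply_of, h0, h1]
  have := hc.eq
  calc qa * qt * qa * qt⁻¹ * qa⁻¹ * qt * qa⁻¹ * qt⁻¹
      = qa * (qt * qa * qt⁻¹) * qa⁻¹ * (qt * qa * qt⁻¹)⁻¹ := by group
    _ = 1 := by rw [this]; group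

/-- The action of `G`. -/
noncomputable def Phi : G →* Equiv.Perm (HH × ℤ) := PresentedGroup.toGroup qf_rel

/-- The letters of `G`. -/
def gA : G := PresentedGroup.of 0
/-- The letters of `G`. -/
def gT : G := PresentedGroup.of 1

/-- The conjugates of `a`. -/
def fG (i : ℤ) : G := gT ^ i * gA * (gT ^ i)⁻¹

/-- Evaluation in `G`. -/
def evG : FreeGroup ℤ →* G := FreeGroup.lift fG

theorem fG_comm (i : ℤ) : Commute (fG i) (fG (i + 1)) := by
  have hrel : gA * gT * gA * gT⁻¹ * gA⁻¹ * gT * gA⁻¹ * gT⁻¹ = 1 := by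
    have := PresentedGroup.one_of_mem (rels := {oneRel}) (x := oneRel) rfl
    exact this
  have h0 : gA * (gT * gA * gT⁻¹) = (gT * gA * gT⁻¹) * gA := by
    have : gA * (gT * gA * gT⁻¹) * ((gT * gA * gT⁻¹) * gA)⁻¹ = 1 := by
      rw [← hrel]; group
    exact mul_inv_eq_one.1 this
  have e1 : fG (i + 1) = gT ^ i * (gT * gA * gT⁻¹) * (gT ^ i)⁻¹ := by
    rw [fG, zpow_add_one]; group
  rw [e1, fG]
  exact Commute.conj_iff (gT ^ i) |>.2 h0

theorem Phi_fG (i : ℤ) (x : HH) : Phi (fG i) (x, 0) = (eta i * x, 0) := by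
  have hA : Phi gA = qa := PresentedGroup.toGroup.of qf_rel
  have hT : Phi gT = qt := PresentedGroup.toGroup.of qf_rel
  have hz : ∀ (i : ℤ) (y : HH) (m : ℤ), (qt ^ i) (y, m) = (y, m - i) := by
    intro i
    induction i using Int.induction_on with
    | zero => simp
    | succ i ih =>
      intro y m
      rw [zpow_add_one, Equiv.Perm.mul_apply, show qt (y, m) = (y, m - 1) from rfl, ih]
      congr 1; ring
    | pred i ih =>
      intro y m
      rw [zpow_sub_one, Equiv.Perm.mul_apply, show qt⁻¹ (y, m) = (y, m + 1) from rfl, ih]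
      congr 1; ring
  rw [fG, map_mul, map_mul, map_inv, map_zpow, hA, hT, Equiv.Perm.mul_apply,
    Equiv.Perm.mul_apply, ← zpow_neg, hz (-i)]
  rw [show qa (x, 0 - -i) = (eta (0 - -i) * x, 0 - -i) from rfl, hz]
  simp

theorem Phi_evG (w : FreeGroup ℤ) (x : HH) : Phi (evG w) (x, 0) = (evH w * x, 0) := by
  induction w using FreeGroup.induction_on generalizing x with
  | C1 => simp
  | of i => simpa [evG, evH] using Phi_fG i x
  | inv_of i ih =>
    rw [map_inv, map_inv, map_inv, Equiv.Perm.inv_eq_iff_eq, ih]; simp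
  | mul y z hy hz => simp only [map_mul, Equiv.Perm.mul_apply, hz, hy, mul_assoc]

theorem evH_of_evG {y y' : FreeGroup ℤ} (h : evG y = evG y') : evH y = evH y' := by
  have h1 := Phi_evG y 1
  rw [h, Phi_evG] at h1
  simpa using (Prod.ext_iff.1 h1).1.symm

/-- The words over the four special letters. -/
def small : Subgroup (FreeGroup ℤ) := Subgroup.closure (X '' {i | i < 4})

theorem X_small {i : ℤ} (h : i < 4) : X i ∈ small := Subgroup.subset_closure ⟨i, h, rfl⟩

theorem evH_small {u : FreeGroup ℤ} (hu : u ∈ small) : evH u = inA (evA u) := by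
  have : small ≤ MonoidHom.eqLocus evH (inA.comp evA) := by
    rw [small, Subgroup.closure_le]
    rintro _ ⟨i, hi, rfl⟩
    change evH (X i) = inA (evA (X i))
    rw [evA_X, ← eta_lt hi]
    simp [evH, X]
  exact this hu

theorem evH_gen (e : St (List Prog) × FreeGroup ℤ × St (List Prog)) (he : e.2.1 ∈ small) :
    evH (gen idx e) = blk (e.1, evA e.2.1, e.2.2) := by
  rw [gen, map_mul, map_mul, map_inv, evH_small he, blk]
  simp [evH, X, eta_idx]

theorem labs_small {E : List (Edge (List Prog))} {hlt : List Prog}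
    {e : St (List Prog) × FreeGroup ℤ × St (List Prog)} (he : e ∈ labs E hlt) :
    e.2.1 ∈ small := by
  have h0 : X 0 ∈ small := X_small (by norm_num)
  have h1 : X 1 ∈ small := X_small (by norm_num)
  have h2 : X 2 ∈ small := X_small (by norm_num)
  have h3 : X 3 ∈ small := X_small (by norm_num)
  simp only [labs, List.mem_append, List.mem_flatMap, lab1, List.mem_cons, List.not_mem_nil,
    or_false] at he
  rcases he with ⟨e, he, rfl | rfl | rfl | rfl | rfl⟩ | rfl | rfl
  · exact mul_mem (pow_mem (inv_mem h1) _) (pow_mem h2 _)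
  · exact mul_mem (pow_mem (inv_mem h1) _) (pow_mem h2 _)
  · exact h3
  · exact mul_mem (inv_mem h2) h1
  · exact h0
  · exact inv_mem h1
  · exact mul_mem (inv_mem h0) (inv_mem h3)

theorem mem_iff (E : List (Edge (List Prog))) (q0 : List Prog) (n0 : ℕ) :
    evG (gen idx (.main q0, (X 1)⁻¹ ^ n0, .fin)) ∈
      Submonoid.closure {g : G | ∃ e ∈ labs E [], evG (gen idx e) = g} ↔
    ReflTransGen (Step E) (q0, n0) ([], 1) := by
  constructor
  · intro h
    obtain ⟨l, hl, hp⟩ := Submonoid.exists_list_of_mem_closure h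
    have key : ∀ l : List G, (∀ y ∈ l, ∃ e ∈ labs E [], evG (gen idx e) = y) →
        ∃ L : List (St (List Prog) × FreeGroup ℤ × St (List Prog)),
          (∀ e ∈ L, e ∈ labs E []) ∧ l = L.map (fun e => evG (gen idx e)) := by
      intro l
      induction l with
      | nil => intro _; exact ⟨[], by simp, rfl⟩
      | cons y l ih =>
        intro h
        obtain ⟨e, he, hy⟩ := h y (by simp)
        obtain ⟨L, hL, hl⟩ := ih (fun z hz => h z (by simp [hz]))
        refine ⟨e :: L, ?_, by simp [hy, hl]⟩
        intro z hz
        rcases List.mem_cons.1 hz with rfl | hz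
        · exact he
        · exact hL z hz
    obtain ⟨L, hL, rfl⟩ := key l hl
    have hp' : evG ((L.map (gen idx)).prod) = evG (gen idx (.main q0, (X 1)⁻¹ ^ n0, .fin)) := by
      rw [← hp, map_list_prod, List.map_map]; rfl
    have hH := evH_of_evG hp'
    rw [map_list_prod, List.map_map,
      evH_gen _ (pow_mem (inv_mem (X_small (by norm_num))) _)] at hH
    refine sound E [] q0 n0 (path_of_prod _ (L.map fun e => (e.1, evA e.2.1, e.2.2)) ?_
      (by simp) (Eq.trans ?_ hH))
    · intro b hb
      obtain ⟨e, he, rfl⟩ := List.mem_map.1 hb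
      exact ⟨e, hL e he, rfl⟩
    · rw [List.map_map]
      congr 1
      apply List.map_congr_left
      intro e he
      exact (evH_gen e (labs_small (hL e he))).symm
  · intro h
    exact complete fG (fG_comm 0) (fG_comm 1) (fG_comm 2) idx E []
      (Submonoid.closure {g : G | ∃ e ∈ labs E [], evG (gen idx e) = g})
      (fun e he => Submonoid.subset_closure ⟨e, he, rfl⟩) h

theorem pi_append (l l' : List (Fin 2 × Bool)) : π (l ++ l') = π l * π l' := by
  rw [π, ← FreeGroup.mul_mk, map_mul]; rfl

theorem exists_word (g : G) : ∃ l, π l = g := by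
  obtain ⟨w, rfl⟩ := PresentedGroup.mk_surjective _ g
  exact ⟨w.toWord, by rw [π, FreeGroup.mk_toWord]⟩

/-- A word for an element. -/
noncomputable def wordOf (g : G) : List (Fin 2 × Bool) := (exists_word g).choose

theorem pi_wordOf (g : G) : π (wordOf g) = g := (exists_word g).choose_spec

/-- Repetition of a word. -/
def rep (B : List (Fin 2 × Bool)) (n : ℕ) : List (Fin 2 × Bool) :=
  Nat.rec [] (fun _ l => l ++ B) n

theorem pi_rep (B : List (Fin 2 × Bool)) (n : ℕ) : π (rep B n) = π B ^ n := by
  induction n with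
  | zero => rw [pow_zero]; rfl
  | succ n ih =>
    rw [pow_succ, ← ih, ← pi_append]; rfl

theorem rep_primrec (B : List (Fin 2 × Bool)) : Primrec (rep B) := by
  unfold rep
  exact Primrec.nat_rec₁ [] (Primrec.list_append.comp Primrec.snd (Primrec.const B)).to₂

theorem undecidable_aux : ¬ ComputablePred
      (fun p : List (List (Fin 2 × Bool)) × List (Fin 2 × Bool) =>
        π p.2 ∈ Submonoid.closure {g : G | ∃ u ∈ p.1, π u = g}) := by
  obtain ⟨E, q0, hE⟩ := exists_machine
  intro h
  apply hE
  let W := (labs E []).map (fun e => wordOf (evG (gen idx e)))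
  let L1 := wordOf (evG (X (idx (.main q0))))
  let L2 := wordOf (evG (X (idx .fin))⁻¹)
  let B := wordOf (evG (X 1)⁻¹)
  have hpow : Primrec (fun x : ℕ => 2 ^ x) :=
    (Primrec.nat_rec₁ (f := fun _ m => m * 2) 1
      (Primrec.nat_mul.comp Primrec.snd (Primrec.const 2)).to₂).of_eq (fun n => by
        induction n with
        | zero => rfl
        | succ n ih => rw [pow_succ, ← ih])
  refine ComputablePred.computable_of_manyOneReducible
    ⟨fun x : ℕ => (W, L1 ++ rep B (2 ^ x) ++ L2), ?_, fun x => ?_⟩ h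
  · apply Primrec.to_comp
    exact Primrec.pair (Primrec.const W) (Primrec.list_append.comp
      (Primrec.list_append.comp (Primrec.const L1) ((rep_primrec B).comp hpow))
      (Primrec.const L2))
  · refine (mem_iff E q0 (2 ^ x)).symm.trans ?_
    have e1 : {g : G | ∃ u ∈ W, π u = g} = {g : G | ∃ e ∈ labs E [], evG (gen idx e) = g} := by
      ext g
      simp [W, pi_wordOf]
    simp only [e1]
    rw [pi_append, pi_append, pi_rep, pi_wordOf, pi_wordOf, pi_wordOf, gen, map_mul, map_mul,
      map_pow]

end SM

/-- The (uniform) submonoid membership problem for the one-relator group `G` is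
undecidable: no algorithm decides, given words `W = {w₁, …, w_m}` and a word `w`, whether
`π w` lies in the submonoid of `G` generated by `{π w₁, …, π w_m}`. -/
theorem submonoid_membership_undecidable :
    ¬ ComputablePred
      (fun p : List (List (Fin 2 × Bool)) × List (Fin 2 × Bool) =>
        π p.2 ∈ Submonoid.closure {g : G | ∃ u ∈ p.1, π u = g}) :=
  SM.undecidable_aux
end

section
/- There is a one-relator group with undecidable rational subset membership problem: there exists a regular expression ρ over the alphabet Fin 2 × Bool such that the predicate on words l : List (Fin 2 × Bool) given by 'π(l) belongs to the image π(L(ρ)) ⊆ G of the regular language L(ρ) matched by ρ' is not ComputablePred, where G = Gp⟨a, t | a(tat⁻¹) = (tat⁻¹)a⟩. -/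
namespace RSM

/-! ### Part 1: nondeterministic register programs -/

/-- Regular programs over counters. -/
inductive RP : Type
  | inc : ℕ → RP
  | dec : ℕ → RP
  | tz : ℕ → RP
  | seq : RP → RP → RP
  | star : RP → RP

/-- Relational semantics of register programs. -/
def RP.sem : RP → (ℕ → ℕ) → (ℕ → ℕ) → Prop
  | .inc i => fun σ τ => τ = Function.update σ i (σ i + 1)
  | .dec i => fun σ τ => σ i ≠ 0 ∧ τ = Function.update σ i (σ i - 1)
  | .tz i => fun σ τ => σ i = 0 ∧ τ = σ
  | .seq P Q => fun σ τ => ∃ υ, P.sem σ υ ∧ Q.sem υ τ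
  | .star P => Relation.ReflTransGen P.sem

/-- Strict upper bound on the registers used. -/
def RP.bd : RP → ℕ
  | .inc i => i + 1
  | .dec i => i + 1
  | .tz i => i + 1
  | .seq P Q => max P.bd Q.bd
  | .star P => P.bd

/-- `P` run from `σ` ends exactly in `τ`. -/
def Det (P : RP) (σ τ : ℕ → ℕ) : Prop := ∀ σ', P.sem σ σ' ↔ σ' = τ

theorem Det.inc (i : ℕ) (σ : ℕ → ℕ) : Det (.inc i) σ (Function.update σ i (σ i + 1)) :=
  fun _ => Iff.rfl

theorem Det.dec (i : ℕ) (σ : ℕ → ℕ) (h : σ i ≠ 0) :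
    Det (.dec i) σ (Function.update σ i (σ i - 1)) :=
  fun _ => by simp [RP.sem, h]

theorem Det.tz (i : ℕ) (σ : ℕ → ℕ) (h : σ i = 0) : Det (.tz i) σ σ :=
  fun _ => by simp [RP.sem, h]

theorem Det.seq {P Q : RP} {σ τ υ : ℕ → ℕ} (h1 : Det P σ τ) (h2 : Det Q τ υ) :
    Det (.seq P Q) σ υ := by
  intro σ'
  simp only [RP.sem]
  constructor
  · rintro ⟨x, hx, hx'⟩
    rw [(h1 x).1 hx] at hx'
    exact (h2 _).1 hx'
  · rintro rfl
    exact ⟨τ, (h1 _).2 rfl, (h2 _).2 rfl⟩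

theorem Det.congr {P : RP} {σ τ τ' : ℕ → ℕ} (h1 : Det P σ τ) (h : τ = τ') : Det P σ τ' := h ▸ h1

theorem Det.seq_sem {P Q : RP} {σ τ : ℕ → ℕ} (h1 : Det P σ τ) (σ' : ℕ → ℕ) :
    (RP.seq P Q).sem σ σ' ↔ Q.sem τ σ' := by
  simp only [RP.sem]
  constructor
  · rintro ⟨x, hx, hx'⟩
    rwa [(h1 x).1 hx] at hx'
  · intro h
    exact ⟨τ, (h1 _).2 rfl, h⟩

/-- The loop `while i ≠ 0 do (decrement i; P)`. -/
def loop (i : ℕ) (P : RP) : RP := .seq (.star (.seq (.dec i) P)) (.tz i)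

theorem loop_det (i : ℕ) (P : RP) (S : ℕ → ℕ → ℕ) (m : ℕ) (h0 : ∀ k ≤ m, S k i = m - k)
    (hs : ∀ k < m, Det P (Function.update (S k) i (m - k - 1)) (S (k + 1))) :
    Det (loop i P) (S 0) (S m) := by
  have step : ∀ k < m, Det (.seq (.dec i) P) (S k) (S (k + 1)) := by
    intro k hk
    have h1 := Det.dec i (S k) (by rw [h0 k hk.le]; omega)
    rw [h0 k hk.le] at h1
    exact h1.seq (hs k hk)
  have reach : ∀ x, Relation.ReflTransGen (RP.seq (.dec i) P).sem (S 0) x →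
      ∃ k ≤ m, x = S k := by
    intro x hx
    induction hx with
    | refl => exact ⟨0, Nat.zero_le _, rfl⟩
    | tail _ hbc ih =>
      obtain ⟨k, hk, rfl⟩ := ih
      rcases hk.lt_or_eq with hk | rfl
      · exact ⟨k + 1, hk, (step k hk _).1 hbc⟩
      · obtain ⟨_, hd, _⟩ := hbc
        exact absurd (by rw [h0 k le_rfl]; omega) hd.1
  have reach2 : ∀ k ≤ m, Relation.ReflTransGen (RP.seq (.dec i) P).sem (S 0) (S k) := by
    intro k hk
    induction k with
    | zero => exact .refl
    | succ k ih => exact (ih (by omega)).tail ((step k hk _).2 rfl)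
  intro σ'
  constructor
  · rintro ⟨x, hx, hz, rfl⟩
    obtain ⟨k, hk, rfl⟩ := reach _ hx
    rw [h0 k hk] at hz
    rw [show k = m by omega]
  · rintro rfl
    exact ⟨S m, reach2 m le_rfl, by rw [h0 m le_rfl]; omega, rfl⟩

/-- Do nothing. -/
def skip : RP := .star (.tz 0)

theorem skip_det (σ : ℕ → ℕ) : Det skip σ σ := by
  intro σ'
  constructor
  · intro h
    change Relation.ReflTransGen (RP.tz 0).sem σ σ' at h
    induction h with
    | refl => rfl
    | tail _ h ih => rw [h.2, ih]
  · rintro rfl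
    exact Relation.ReflTransGen.refl

/-- Set register `i` to zero. -/
def clear (i : ℕ) : RP := .seq (.star (.dec i)) (.tz i)

theorem clear_det (i : ℕ) (σ : ℕ → ℕ) : Det (clear i) σ (Function.update σ i 0) := by
  have reach : ∀ x, Relation.ReflTransGen (RP.dec i).sem σ x →
      ∃ k, x = Function.update σ i k := by
    intro x hx
    induction hx with
    | refl => exact ⟨σ i, by simp⟩
    | tail _ hbc ih =>
      obtain ⟨k, rfl⟩ := ih
      obtain ⟨_, rfl⟩ := hbc
      exact ⟨k - 1, by simp⟩
  have reach2 : ∀ n, ∀ σ : ℕ → ℕ, σ i = n →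
      Relation.ReflTransGen (RP.dec i).sem σ (Function.update σ i 0) := by
    intro n
    induction n with
    | zero => intro σ h; rw [← h, Function.update_eq_self]
    | succ n ih =>
      intro σ h
      refine Relation.ReflTransGen.head (b := Function.update σ i n) ⟨by omega, by rw [h]; rfl⟩ ?_
      have := ih (Function.update σ i n) (by simp)
      simpa using this
  intro σ'
  constructor
  · rintro ⟨x, hx, hz, rfl⟩
    obtain ⟨k, rfl⟩ := reach _ hx
    simp at hz
    rw [hz]
  · rintro rfl
    exact ⟨_, reach2 _ σ rfl, by simp, rfl⟩

/-- Add register `i` to register `j`, clearing `i`. -/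
def move (i j : ℕ) : RP := loop i (.inc j)

theorem move_det (i j : ℕ) (hij : i ≠ j) (σ : ℕ → ℕ) :
    Det (move i j) σ (Function.update (Function.update σ i 0) j (σ j + σ i)) := by
  have := loop_det i (.inc j)
    (fun k => Function.update (Function.update σ i (σ i - k)) j (σ j + k)) (σ i)
    (by intro k hk; simp [hij]) (by
      intro k hk
      refine (Det.inc _ _).congr ?_
      funext r
      simp only [Function.update_apply]
      split_ifs <;> omega)
  simpa [move] using this

/-- Add register `i` to register `j`, using scratch register `s`. -/
def copy (i j s : ℕ) : RP := .seq (loop i (.seq (.inc j) (.inc s))) (move s i)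

theorem copy_det (i j s : ℕ) (hij : i ≠ j) (his : i ≠ s) (hjs : j ≠ s) (σ : ℕ → ℕ)
    (hs : σ s = 0) :
    Det (copy i j s) σ (Function.update σ j (σ j + σ i)) := by
  have := loop_det i (.seq (.inc j) (.inc s))
    (fun k => Function.update (Function.update (Function.update σ i (σ i - k)) j (σ j + k)) s k)
    (σ i)
    (by intro k hk; simp [hij, his]) (by
      intro k hk
      refine ((Det.inc _ _).seq (Det.inc _ _)).congr ?_
      funext r
      simp only [Function.update_apply]
      split_ifs <;> omega)
  have h2 := this.seq (move_det s i his.symm _)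
  have e : (fun k => Function.update (Function.update (Function.update σ i (σ i - k)) j (σ j + k)) s k) 0
      = σ := by
    funext r
    simp only [Function.update_apply]
    split_ifs <;> simp_all
  simp only at e
  rw [e] at h2
  refine Det.congr h2 ?_
  funext r
  simp only [Function.update_apply]
  split_ifs <;> simp_all

/-! ### Part 2: compiling partial recursive functions -/

/-- `F` can be computed by register programs in any register layout. -/
def Comp {n : ℕ} (F : List.Vector ℕ n →. ℕ) : Prop :=
  ∀ (args : Fin n → ℕ) (o b : ℕ), (∀ i, args i < b) → (∀ i, args i ≠ o) → o < b →
    ∃ P : RP, ∀ σ : ℕ → ℕ, σ o = 0 → (∀ j, b ≤ j → σ j = 0) →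
      ∀ σ', P.sem σ σ' ↔
        ∃ y ∈ F (List.Vector.ofFn fun i => σ (args i)), σ' = Function.update σ o y

/-- Total version. -/
def CompT {n : ℕ} (F : List.Vector ℕ n → ℕ) : Prop :=
  ∀ (args : Fin n → ℕ) (o b : ℕ), (∀ i, args i < b) → (∀ i, args i ≠ o) → o < b →
    ∃ P : RP, ∀ σ : ℕ → ℕ, σ o = 0 → (∀ j, b ≤ j → σ j = 0) →
      Det P σ (Function.update σ o (F (List.Vector.ofFn fun i => σ (args i))))

theorem comp_coe_iff {n : ℕ} (F : List.Vector ℕ n → ℕ) :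
    Comp (F : List.Vector ℕ n →. ℕ) ↔ CompT F := by
  unfold Comp CompT Det
  simp

theorem compT_zero : @CompT 0 fun _ => 0 := by
  intro args o b _ _ _
  refine ⟨clear o, fun σ ho _ => ?_⟩
  exact clear_det o σ

theorem compT_get {n : ℕ} (i : Fin n) : CompT fun v : List.Vector ℕ n => v.get i := by
  intro args o b h1 h2 h3
  refine ⟨copy (args i) o b, fun σ ho hb => ?_⟩
  refine (copy_det _ _ _ (h2 i) (h1 i).ne h3.ne σ (hb b le_rfl)).congr ?_
  simp [ho]

theorem compT_succ : @CompT 1 fun v => Nat.succ v.head := by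
  intro args o b h1 h2 h3
  refine ⟨.seq (copy (args 0) o b) (.inc o), fun σ ho hb => ?_⟩
  refine ((copy_det _ _ _ (h2 0) (h1 0).ne h3.ne σ (hb b le_rfl)).seq (Det.inc _ _)).congr ?_
  simp [ho, List.Vector.ofFn]

theorem mem_mOfFn {n : ℕ} (g : Fin n → Part ℕ) (w : List.Vector ℕ n) :
    w ∈ (List.Vector.mOfFn g) ↔ ∀ i, w.get i ∈ g i := by
  induction n with
  | zero =>
    have : w = List.Vector.nil := List.Vector.eq_nil w
    subst this
    simp [List.Vector.mOfFn, pure]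
  | succ n ih =>
    simp only [List.Vector.mOfFn, Part.bind_eq_bind, Part.mem_bind_iff, pure, Part.mem_some_iff]
    constructor
    · rintro ⟨a, ha, v, hv, rfl⟩ i
      refine Fin.cases ?_ (fun j => ?_) i
      · simpa using ha
      · simpa using (ih _ v).1 hv j
    · intro h
      refine ⟨w.head, by simpa using h 0, w.tail, (ih _ _).2 ?_, by simp⟩
      intro i
      simpa using h i.succ

/-- State with registers `b..b+n-1` filled by `ys`. -/
def fill (σ : ℕ → ℕ) (b : ℕ) (n : ℕ) (ys : ℕ → ℕ) : ℕ → ℕ :=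
  fun r => if b ≤ r ∧ r < b + n then ys (r - b) else σ r

/-- Clear registers `b..b+n-1`. -/
def clears (b : ℕ) : ℕ → RP
  | 0 => skip
  | n + 1 => .seq (clears b n) (clear (b + n))

theorem clears_det (b n : ℕ) (σ : ℕ → ℕ) (hb : ∀ j, b ≤ j → σ j = 0) (ys : ℕ → ℕ) (y o : ℕ)
    (ho : o < b) :
    Det (clears b n) (Function.update (fill σ b n ys) o y) (Function.update σ o y) := by
  suffices H : ∀ m ≤ n, Det (clears b m) (Function.update (fill σ b n ys) o y)
      (Function.update (fun r => if r < b + m then σ r else fill σ b n ys r) o y) by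
    refine (H n le_rfl).congr ?_
    funext r
    simp only [Function.update_apply, fill]
    split_ifs <;> first | rfl | omega
  intro m
  induction m with
  | zero =>
    intro _
    refine (skip_det _).congr ?_
    funext r
    simp only [Function.update_apply, fill]
    split_ifs <;> first | rfl | omega
  | succ m ih =>
    intro hm
    refine ((ih (by omega)).seq (clear_det _ _)).congr ?_
    funext r
    have := hb (b + m) (by omega)
    simp only [Function.update_apply, fill]
    split_ifs <;> first | rfl | omega | (subst_vars; simp_all)

theorem comp_fill {n m : ℕ} (g : Fin n → List.Vector ℕ m →. ℕ) (hg : ∀ i, Comp (g i))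
    (args : Fin m → ℕ) (b : ℕ) (h1 : ∀ i, args i < b) (k : ℕ) (hk : k ≤ n) :
    ∃ P : RP, ∀ σ : ℕ → ℕ, (∀ j, b ≤ j → σ j = 0) →
      ∀ σ', P.sem σ σ' ↔
        ∃ ys : ℕ → ℕ, (∀ i : Fin n, i.1 < k →
          ys i ∈ g i (List.Vector.ofFn fun i => σ (args i))) ∧ σ' = fill σ b k ys := by
  induction k with
  | zero =>
    refine ⟨skip, fun σ hσ σ' => ?_⟩
    rw [skip_det σ σ']
    have e : ∀ ys, fill σ b 0 ys = σ := by
      intro ys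
      funext r
      simp only [fill]
      split_ifs <;> first | rfl | omega
    simp [e]
  | succ k ih =>
    obtain ⟨P, hP⟩ := ih (by omega)
    obtain ⟨Q, hQ⟩ := hg ⟨k, hk⟩ args (b + k) (b + n) (fun i => by have := h1 i; omega)
      (fun i => by have := h1 i; omega) (by omega)
    refine ⟨.seq P Q, fun σ hσ σ' => ?_⟩
    have hargs : ∀ ys i, fill σ b k ys (args i) = σ (args i) := by
      intro ys i
      have := h1 i
      simp only [fill]
      split_ifs <;> first | rfl | omega
    have hQ' : ∀ ys, _ := fun ys => hQ (fill σ b k ys)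
      (by simp only [fill]; split_ifs <;> first | omega | exact hσ _ (by omega))
      (by intro j hj; simp only [fill]; split_ifs <;> first | omega | exact hσ _ (by omega))
    simp only [RP.sem]
    constructor
    · rintro ⟨τ, h2, h3⟩
      obtain ⟨ys, hys, rfl⟩ := (hP σ hσ τ).1 h2
      obtain ⟨y, hy, rfl⟩ := (hQ' ys σ').1 h3
      simp only [hargs] at hy
      refine ⟨Function.update ys k y, ?_, ?_⟩
      · intro i hi
        by_cases hik : i.1 = k
        · have : i = ⟨k, hk⟩ := Fin.ext hik
          subst this
          simpa using hy
        · rw [Function.update_of_ne hik]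
          exact hys i (by omega)
      · funext r
        simp only [Function.update_apply, fill]
        split_ifs <;> first | rfl | omega
    · rintro ⟨ys, hys, rfl⟩
      refine ⟨fill σ b k ys, (hP σ hσ _).2 ⟨ys, fun i hi => hys i (by omega), rfl⟩,
        (hQ' ys _).2 ⟨ys k, ?_, ?_⟩⟩
      · simp only [hargs]
        exact hys ⟨k, hk⟩ (by simp)
      · funext r
        simp only [Function.update_apply, fill]
        split_ifs <;> first | rfl | omega | (subst_vars; simp)

theorem comp_comp {n m : ℕ} {f : List.Vector ℕ n →. ℕ} (g : Fin n → List.Vector ℕ m →. ℕ)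
    (hf : Comp f) (hg : ∀ i, Comp (g i)) :
    Comp fun v => (List.Vector.mOfFn fun i => g i v) >>= f := by
  intro args o b h1 h2 h3
  obtain ⟨P, hP⟩ := comp_fill g hg args b h1 n le_rfl
  obtain ⟨Q, hQ⟩ := hf (fun i => b + i) o (b + n) (fun i => by have := i.2; omega)
    (fun i => by omega) (by omega)
  refine ⟨.seq P (.seq Q (clears b n)), fun σ ho hσ σ' => ?_⟩
  have hQ' : ∀ ys, _ := fun ys => hQ (fill σ b n ys)
    (by simp only [fill]; split_ifs <;> omega)
    (by intro j hj; simp only [fill]; split_ifs <;> first | omega | exact hσ _ (by omega))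
  have e : ∀ ys, (List.Vector.ofFn fun i : Fin n => fill σ b n ys (b + i)) =
      List.Vector.ofFn fun i : Fin n => ys i := by
    intro ys
    congr 1
    funext i
    simp [fill]
  simp only [e] at hQ'
  simp only [RP.sem]
  have hmem : ∀ v y, y ∈ ((List.Vector.mOfFn fun i => g i v) >>= f) ↔
      ∃ w, (∀ i, List.Vector.get w i ∈ g i v) ∧ y ∈ f w := by
    intro v y
    refine Part.mem_bind_iff.trans ?_
    constructor
    · rintro ⟨w, hw, hy⟩
      exact ⟨w, (mem_mOfFn _ _).1 hw, hy⟩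
    · rintro ⟨w, hw, hy⟩
      exact ⟨w, (mem_mOfFn _ _).2 hw, hy⟩
  constructor
  · rintro ⟨τ, h4, υ, h5, h6⟩
    obtain ⟨ys, hys, rfl⟩ := (hP σ hσ τ).1 h4
    obtain ⟨y, hy, rfl⟩ := (hQ' ys υ).1 h5
    refine ⟨y, (hmem _ _).2 ⟨_, ?_, hy⟩, (clears_det b n σ hσ ys y o h3 _).1 h6⟩
    intro i
    simpa using hys i i.2
  · rintro ⟨y, hy', rfl⟩
    obtain ⟨w, hw, hy⟩ := (hmem _ _).1 hy'
    let ys : ℕ → ℕ := fun i => if h : i < n then w.get ⟨i, h⟩ else 0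
    refine ⟨fill σ b n ys, (hP σ hσ _).2 ⟨ys, ?_, rfl⟩, Function.update (fill σ b n ys) o y,
      (hQ' ys _).2 ⟨y, ?_, rfl⟩, (clears_det b n σ hσ ys y o h3 _).2 rfl⟩
    · intro i _
      simpa [ys] using hw i
    · simpa [ys] using hy

theorem compT_comp {n m : ℕ} {f : List.Vector ℕ n → ℕ} (g : Fin n → List.Vector ℕ m → ℕ)
    (hf : CompT f) (hg : ∀ i, CompT (g i)) :
    CompT fun v => f (List.Vector.ofFn fun i => g i v) := by
  rw [← comp_coe_iff] at hf ⊢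
  have := comp_comp (fun i => (g i : List.Vector ℕ m →. ℕ)) hf
    (fun i => (comp_coe_iff _).2 (hg i))
  have e : (fun v => (List.Vector.mOfFn fun i => (g i : List.Vector ℕ m →. ℕ) v) >>=
      (f : List.Vector ℕ n →. ℕ) : List.Vector ℕ m →. ℕ) =
      ((fun v => f (List.Vector.ofFn fun i => g i v) : List.Vector ℕ m → ℕ) :
        List.Vector ℕ m →. ℕ) := by
    funext v
    simp only [PFun.coe_val, Vector.mOfFn_part_some]
    exact Part.bind_some _ _
  rwa [e] at this

theorem compT_prec {n : ℕ} {f : List.Vector ℕ n → ℕ} {g : List.Vector ℕ (n + 2) → ℕ}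
    (hf : CompT f) (hg : CompT g) :
    CompT fun v : List.Vector ℕ (n + 1) =>
      v.head.rec (f v.tail) fun y IH => g (y ::ᵥ IH ::ᵥ v.tail) := by
  intro args o b h1 h2 h3
  obtain ⟨P, hP⟩ := hf (fun i => args i.succ) o (b + 3) (fun i => by have := h1 i.succ; omega)
    (fun i => h2 _) (by omega)
  obtain ⟨Q, hQ⟩ := hg (Fin.cons (b + 1) (Fin.cons o fun i => args i.succ)) (b + 2) (b + 3)
    (fun i => by
      refine Fin.cases ?_ (fun j => Fin.cases ?_ (fun k => ?_) j) i
      · simp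
      · simp; omega
      · have := h1 k.succ
        simp; omega)
    (fun i => by
      refine Fin.cases ?_ (fun j => Fin.cases ?_ (fun k => ?_) j) i
      · simp
      · simp; omega
      · have := h1 k.succ
        simp; omega) (by omega)
  refine ⟨.seq (copy (args 0) b (b + 3)) (.seq P (.seq (loop b
    (.seq Q (.seq (clear o) (.seq (move (b + 2) o) (.inc (b + 1)))))) (clear (b + 1)))),
    fun σ ho hσ => ?_⟩
  let w : List.Vector ℕ n := List.Vector.ofFn fun i => σ (args i.succ)
  let m := σ (args 0)
  let R : ℕ → ℕ := fun k => Nat.rec (f w) (fun y IH => g (y ::ᵥ IH ::ᵥ w)) k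
  let S : ℕ → ℕ → ℕ := fun k =>
    Function.update (Function.update (Function.update σ b (m - k)) (b + 1) k) o (R k)
  have a0 := h1 0
  have s0 := hσ b le_rfl
  have s1 := hσ (b + 1) (by omega)
  have s2 := hσ (b + 2) (by omega)
  have A : Det (copy (args 0) b (b + 3)) σ (Function.update σ b m) := by
    refine (copy_det _ _ _ (by omega) (by omega) (by omega) σ (hσ _ (by omega))).congr ?_
    simp [s0, m]
  have B : Det P (Function.update σ b m) (S 0) := by
    refine (hP _ ?_ ?_).congr ?_
    · rw [Function.update_of_ne (by omega), ho]
    · intro j hj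
      rw [Function.update_of_ne (by omega), hσ j (by omega)]
    · have e : (List.Vector.ofFn fun i : Fin n => Function.update σ b m (args i.succ)) = w := by
        congr 1
        funext i
        have := h1 i.succ
        rw [Function.update_of_ne (by omega)]
      rw [e]
      funext r
      simp only [S, R, Function.update_apply]
      split_ifs <;> first | rfl | (subst_vars; omega)
  have C : Det (loop b (.seq Q (.seq (clear o) (.seq (move (b + 2) o) (.inc (b + 1))))))
      (S 0) (S m) := by
    apply loop_det
    · intro k hk
      simp only [S, Function.update_apply]
      split_ifs <;> omega
    · intro k hk
      have q := hQ (Function.update (S k) b (m - k - 1)) (by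
          simp only [S, Function.update_apply]
          split_ifs <;> omega) (by
          intro j hj
          have := hσ j (by omega)
          simp only [S, Function.update_apply]
          split_ifs <;> omega)
      have e : (List.Vector.ofFn fun i => Function.update (S k) b (m - k - 1)
          ((Fin.cons (b + 1) (Fin.cons o fun i => args i.succ) : Fin (n + 2) → ℕ) i)) =
            (k ::ᵥ R k ::ᵥ w) := by
        apply List.Vector.ext
        intro i
        rw [List.Vector.get_ofFn]
        refine Fin.cases ?_ (fun j => Fin.cases ?_ (fun l => ?_) j) i
        · simp only [Fin.cons_zero, List.Vector.get_zero, List.Vector.head_cons, S,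
            Function.update_apply]
          split_ifs <;> omega
        · simp only [Fin.cons_zero, Fin.cons_succ, List.Vector.get_cons_succ,
            List.Vector.get_zero, List.Vector.head_cons, S,
            Function.update_apply]
          split_ifs <;> omega
        · have := h1 l.succ
          have := h2 l.succ
          simp only [Fin.cons_succ, List.Vector.get_cons_succ, S,
            Function.update_apply, w, List.Vector.get_ofFn]
          split_ifs <;> omega
      rw [e] at q
      refine (q.seq ((clear_det _ _).seq ((move_det _ _ (by omega) _).seq
        (Det.inc _ _)))).congr ?_
      have e2 : R (k + 1) = g (k ::ᵥ R k ::ᵥ w) := rfl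
      rw [← e2]
      funext r
      simp only [S, Function.update_apply]
      split_ifs <;> first | omega | (subst_vars; omega)
  refine (A.seq (B.seq (C.seq (clear_det _ _)))).congr ?_
  have e3 : List.Vector.head (List.Vector.ofFn fun i => σ (args i)) = m := by
    rw [← List.Vector.get_zero, List.Vector.get_ofFn]
  have e4 : List.Vector.tail (List.Vector.ofFn fun i => σ (args i)) = w := by
    apply List.Vector.ext
    intro i
    rw [List.Vector.get_tail_succ, List.Vector.get_ofFn, List.Vector.get_ofFn]
  beta_reduce
  rw [e3, e4]
  change _ = Function.update σ o (R m)
  funext r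
  simp only [S, Function.update_apply]
  split_ifs <;> first | rfl | omega | (subst_vars; omega)

theorem compT_primrec {n : ℕ} {f : List.Vector ℕ n → ℕ} (h : Nat.Primrec' f) : CompT f := by
  induction h with
  | zero => exact compT_zero
  | succ => exact compT_succ
  | get i => exact compT_get i
  | comp g _ _ hf hg => exact compT_comp g hf hg
  | prec _ _ hf hg => exact compT_prec hf hg

theorem comp_rfind {n : ℕ} {f : List.Vector ℕ (n + 1) → ℕ} (hf : CompT f) :
    Comp fun v : List.Vector ℕ n => Nat.rfind fun k => Part.some (decide (f (k ::ᵥ v) = 0)) := by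
  intro args o b h1 h2 h3
  obtain ⟨P, hP⟩ := hf (Fin.cons o args) b (b + 1)
    (fun i => by
      refine Fin.cases ?_ (fun j => ?_) i
      · simp; omega
      · have := h1 j
        simp; omega)
    (fun i => by
      refine Fin.cases ?_ (fun j => ?_) i
      · simp; omega
      · have := h1 j
        simp; omega) (by omega)
  let body : RP := .seq (.dec b) (.seq (clear b) (.seq (.inc o) P))
  refine ⟨.seq P (.seq (.star body) (.tz b)), fun σ ho hσ σ' => ?_⟩
  let w : List.Vector ℕ n := List.Vector.ofFn fun i => σ (args i)
  let S : ℕ → ℕ → ℕ := fun k => Function.update (Function.update σ o k) b (f (k ::ᵥ w))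
  have s0 := hσ b le_rfl
  have hP' : ∀ k, Det P (Function.update σ o k) (S k) := by
    intro k
    refine (hP _ ?_ ?_).congr ?_
    · rw [Function.update_of_ne (by omega), s0]
    · intro j hj
      rw [Function.update_of_ne (by omega), hσ j (by omega)]
    · simp only [S]
      congr 2
      apply List.Vector.ext
      intro i
      rw [List.Vector.get_ofFn]
      refine Fin.cases ?_ (fun l => ?_) i
      · simp
      · have := h2 l
        simp [w, this]
  have hbody : ∀ k τ, body.sem (S k) τ ↔ f (k ::ᵥ w) ≠ 0 ∧ τ = S (k + 1) := by
    intro k τ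
    have hb : S k b = f (k ::ᵥ w) := by simp [S]
    by_cases hk : f (k ::ᵥ w) = 0
    · simp only [hk, ne_eq, not_true_eq_false, false_and, iff_false]
      rintro ⟨x, hx, _⟩
      exact hx.1 (by rw [hb, hk])
    · have d := (Det.dec b (S k) (by rwa [hb])).seq ((clear_det b _).seq
        ((Det.inc o _).congr (τ' := Function.update σ o (k + 1)) (by
          funext r
          simp only [S, Function.update_apply]
          split_ifs <;> first | omega | (subst_vars; omega)) |>.seq (hP' (k + 1))))
      rw [d τ]
      simp [hk]
  have reach : ∀ τ, Relation.ReflTransGen body.sem (S 0) τ ↔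
      ∃ k, (∀ j < k, f (j ::ᵥ w) ≠ 0) ∧ τ = S k := by
    intro τ
    constructor
    · intro h
      induction h with
      | refl => exact ⟨0, by simp, rfl⟩
      | tail _ h ih =>
        obtain ⟨k, hk, rfl⟩ := ih
        obtain ⟨h4, rfl⟩ := (hbody _ _).1 h
        refine ⟨k + 1, fun j hj => ?_, rfl⟩
        rcases Nat.lt_succ_iff_lt_or_eq.1 hj with hj | rfl
        · exact hk j hj
        · exact h4
    · rintro ⟨k, hk, rfl⟩
      induction k with
      | zero => exact .refl
      | succ k ih =>
        exact (ih fun j hj => hk j (by omega)).tail ((hbody _ _).2 ⟨hk k (by omega), rfl⟩)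
  have P0 := hP' 0
  rw [← ho, Function.update_eq_self] at P0
  rw [P0.seq_sem, ho]
  have hmem : ∀ k, k ∈ (Nat.rfind fun k => Part.some (decide (f (k ::ᵥ w) = 0))) ↔
      f (k ::ᵥ w) = 0 ∧ ∀ j < k, f (j ::ᵥ w) ≠ 0 := by
    intro k
    refine Nat.mem_rfind.trans ?_
    simp [Part.mem_some_iff]
  change (∃ υ, Relation.ReflTransGen body.sem (S 0) υ ∧ υ b = 0 ∧ σ' = υ) ↔
    ∃ y ∈ (Nat.rfind fun k => Part.some (decide (f (k ::ᵥ w) = 0))), _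
  simp only [hmem, reach]
  have hS : ∀ k, f (k ::ᵥ w) = 0 → S k = Function.update σ o k := by
    intro k hk
    funext r
    simp only [S, hk, Function.update_apply]
    split_ifs <;> first | rfl | omega | (subst_vars; omega)
  constructor
  · rintro ⟨υ, ⟨k, hk, rfl⟩, hz, rfl⟩
    have hz : f (k ::ᵥ w) = 0 := by simpa [S] using hz
    exact ⟨k, ⟨hz, hk⟩, hS k hz⟩
  · rintro ⟨k, ⟨hz, hk⟩, rfl⟩
    exact ⟨S k, ⟨k, hk, rfl⟩, by simpa [S] using hz, (hS k hz).symm⟩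

theorem comp_partrec {n : ℕ} {f : List.Vector ℕ n →. ℕ} (h : Nat.Partrec' f) : Comp f := by
  induction h with
  | prim h => exact (comp_coe_iff _).2 (compT_primrec h)
  | comp g _ _ hf hg => exact comp_comp g hf hg
  | rfind _ hf => exact comp_rfind ((comp_coe_iff _).1 hf)

end RSM
namespace RSM

/-! ### Part 3: register programs as sequences of arithmetic steps on a single number -/

/-- The `i`-th prime. -/
noncomputable def pr (i : ℕ) : ℕ := Nat.nth Nat.Prime i

theorem pr_prime (i : ℕ) : (pr i).Prime := Nat.prime_nth_prime i

theorem pr_inj {i j : ℕ} (h : pr i = pr j) : i = j :=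
  Nat.nth_injective Nat.infinite_setOfPred_prime h

/-- Prime power encoding of the first `K` registers. -/
noncomputable def enc (K : ℕ) (σ : ℕ → ℕ) : ℕ := ∏ i ∈ Finset.range K, pr i ^ σ i

theorem enc_split (K : ℕ) (σ : ℕ → ℕ) (i : ℕ) (hi : i < K) :
    ∃ c, ¬ pr i ∣ c ∧ ∀ k, enc K (Function.update σ i k) = pr i ^ k * c := by
  refine ⟨∏ j ∈ Finset.range K \ {i}, pr j ^ σ j, ?_, ?_⟩
  · intro h
    rw [(pr_prime i).prime.dvd_finsetProd_iff] at h
    obtain ⟨j, hj, h⟩ := h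
    have h1 := (pr_prime i).dvd_of_dvd_pow h
    have h2 := pr_inj ((Nat.prime_dvd_prime_iff_eq (pr_prime i) (pr_prime j)).1 h1)
    simp [h2] at hj
  · intro k
    unfold enc
    rw [← Finset.mul_prod_erase _ _ (Finset.mem_range.2 hi), Function.update_self,
      Finset.sdiff_singleton_eq_erase]
    congr 1
    refine Finset.prod_congr rfl fun j hj => ?_
    rw [Function.update_of_ne (Finset.ne_of_mem_erase hj)]

/-- The possible sequences of elementary arithmetic steps of a program. -/
noncomputable def runs : RP → Language (ℕ × ℕ)
  | .inc i => {l | ∃ k, l = [(k, pr i * k)]}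
  | .dec i => {l | ∃ k, l = [(pr i * k, k)]}
  | .tz i => {l | ∃ k, ¬ pr i ∣ k ∧ l = [(k, k)]}
  | .seq P Q => runs P * runs Q
  | .star P => KStar.kstar (runs P)

/-- The steps in the list can be chained, from `n` to `m`. -/
def path : ℕ → List (ℕ × ℕ) → ℕ → Prop
  | n, [], m => n = m
  | n, q :: l, m => n = q.1 ∧ path q.2 l m

theorem path_append (l₁ l₂ : List (ℕ × ℕ)) (n m : ℕ) :
    path n (l₁ ++ l₂) m ↔ ∃ k, path n l₁ k ∧ path k l₂ m := by
  induction l₁ generalizing n with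
  | nil => simp [path]
  | cons q l ih => simp [path, ih, and_assoc]

theorem sim (K : ℕ) (P : RP) (hP : P.bd ≤ K) (σ : ℕ → ℕ) (m : ℕ) :
    (∃ l ∈ runs P, path (enc K σ) l m) ↔ ∃ τ, P.sem σ τ ∧ m = enc K τ := by
  induction P generalizing σ m with
  | inc i =>
    obtain ⟨c, hc, h⟩ := enc_split K σ i hP
    have h0 := h (σ i)
    rw [Function.update_eq_self] at h0
    have e : enc K (Function.update σ i (σ i + 1)) = pr i * enc K σ := by
      rw [h, h0]; ring
    constructor
    · rintro ⟨_, ⟨k, rfl⟩, h1, h2⟩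
      refine ⟨_, rfl, ?_⟩
      simp only [path] at h1 h2
      rw [e, h1, h2]
    · rintro ⟨_, rfl, rfl⟩
      exact ⟨_, ⟨_, rfl⟩, rfl, e.symm⟩
  | dec i =>
    obtain ⟨c, hc, h⟩ := enc_split K σ i hP
    have h0 := h (σ i)
    rw [Function.update_eq_self] at h0
    have e : σ i ≠ 0 → enc K σ = pr i * enc K (Function.update σ i (σ i - 1)) := by
      intro hi
      obtain ⟨s, hs⟩ := Nat.exists_eq_succ_of_ne_zero hi
      rw [h, h0, hs, Nat.succ_eq_add_one, Nat.add_sub_cancel, pow_succ]; ring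
    constructor
    · rintro ⟨_, ⟨k, rfl⟩, h1, h2⟩
      simp only [path] at h1 h2
      subst h2
      have hi : σ i ≠ 0 := by
        intro hi
        rw [hi, pow_zero, one_mul] at h0
        exact hc ⟨k, by rw [← h0, h1]⟩
      refine ⟨_, ⟨hi, rfl⟩, ?_⟩
      exact Nat.eq_of_mul_eq_mul_left (pr_prime i).pos (h1.symm.trans (e hi))
    · rintro ⟨_, ⟨hi, rfl⟩, rfl⟩
      exact ⟨_, ⟨_, rfl⟩, e hi, rfl⟩
  | tz i =>
    obtain ⟨c, hc, h⟩ := enc_split K σ i hP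
    have h0 := h (σ i)
    rw [Function.update_eq_self] at h0
    have e : σ i = 0 ↔ ¬ pr i ∣ enc K σ := by
      constructor
      · intro hi
        rw [h0, hi, pow_zero, one_mul]
        exact hc
      · intro hd
        by_contra hi
        exact hd (h0 ▸ Dvd.dvd.mul_right (dvd_pow_self _ hi) _)
    constructor
    · rintro ⟨_, ⟨k, hk, rfl⟩, h1, h2⟩
      simp only [path] at h1 h2
      subst h2
      exact ⟨σ, ⟨e.2 (h1 ▸ hk), rfl⟩, h1.symm⟩
    · rintro ⟨_, ⟨hi, rfl⟩, rfl⟩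
      exact ⟨_, ⟨_, e.1 hi, rfl⟩, rfl, rfl⟩
  | seq P Q ihP ihQ =>
    have hP1 : P.bd ≤ K := le_trans (le_max_left _ _) hP
    have hP2 : Q.bd ≤ K := le_trans (le_max_right _ _) hP
    simp only [runs, Language.mem_mul, RP.sem]
    constructor
    · rintro ⟨_, ⟨l₁, h1, l₂, h2, rfl⟩, h3⟩
      obtain ⟨k, h4, h5⟩ := (path_append _ _ _ _).1 h3
      obtain ⟨υ, h6, rfl⟩ := (ihP hP1 _ _).1 ⟨l₁, h1, h4⟩
      obtain ⟨τ, h7, rfl⟩ := (ihQ hP2 _ _).1 ⟨l₂, h2, h5⟩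
      exact ⟨τ, ⟨υ, h6, h7⟩, rfl⟩
    · rintro ⟨τ, ⟨υ, h6, h7⟩, rfl⟩
      obtain ⟨l₁, h1, h4⟩ := (ihP hP1 _ _).2 ⟨υ, h6, rfl⟩
      obtain ⟨l₂, h2, h5⟩ := (ihQ hP2 _ _).2 ⟨τ, h7, rfl⟩
      exact ⟨_, ⟨l₁, h1, l₂, h2, rfl⟩, (path_append _ _ _ _).2 ⟨_, h4, h5⟩⟩
  | star P ih =>
    have hP1 : P.bd ≤ K := hP
    simp only [runs, Language.mem_kstar, RP.sem]
    constructor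
    · rintro ⟨_, ⟨L, rfl, hL⟩, h3⟩
      induction L generalizing σ with
      | nil => exact ⟨σ, .refl, h3.symm⟩
      | cons l L ihL =>
        rw [List.flatten_cons, path_append] at h3
        obtain ⟨k, h4, h5⟩ := h3
        obtain ⟨υ, h6, rfl⟩ := (ih hP1 _ _).1 ⟨l, hL l (by simp), h4⟩
        obtain ⟨τ, h7, rfl⟩ := ihL υ (fun y hy => hL y (by simp [hy])) h5
        exact ⟨τ, .head h6 h7, rfl⟩
    · rintro ⟨τ, h, rfl⟩
      induction h using Relation.ReflTransGen.head_induction_on with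
      | refl => exact ⟨[], ⟨[], rfl, by simp⟩, rfl⟩
      | head h1 _ ih2 =>
        obtain ⟨_, ⟨L, rfl, hL⟩, h5⟩ := ih2
        obtain ⟨l₁, h1, h4⟩ := (ih hP1 _ _).2 ⟨_, h1, rfl⟩
        refine ⟨_, ⟨l₁ :: L, rfl, ?_⟩, ?_⟩
        · intro y hy
          rcases List.mem_cons.1 hy with rfl | hy
          · exact h1
          · exact hL y hy
        · rw [List.flatten_cons, path_append]
          exact ⟨_, h4, h5⟩

/-! ### Part 4: images of regular languages in `G` -/

theorem pi_nil : π [] = 1 := rfl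

theorem pi_append (l₁ l₂ : List (Fin 2 × Bool)) : π (l₁ ++ l₂) = π l₁ * π l₂ := by
  unfold π
  rw [← FreeGroup.mul_mk, map_mul]

theorem pi_flatten (L : List (List (Fin 2 × Bool))) : π L.flatten = (L.map π).prod := by
  induction L with
  | nil => rfl
  | cons l L ih => simp [pi_append, ih]

/-- Image of a regular language in `G`. -/
def Img (ρ : RegularExpression (Fin 2 × Bool)) : Set G :=
  π '' (ρ.matches' : Set (List (Fin 2 × Bool)))

theorem mem_img_mul (ρ τ : RegularExpression (Fin 2 × Bool)) (g : G) :
    g ∈ Img (ρ * τ) ↔ ∃ x ∈ Img ρ, ∃ y ∈ Img τ, g = x * y := by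
  constructor
  · rintro ⟨l, hl, rfl⟩
    obtain ⟨l₁, h1, l₂, h2, rfl⟩ := Language.mem_mul.1 hl
    exact ⟨_, ⟨l₁, h1, rfl⟩, _, ⟨l₂, h2, rfl⟩, pi_append _ _⟩
  · rintro ⟨_, ⟨l₁, h1, rfl⟩, _, ⟨l₂, h2, rfl⟩, rfl⟩
    exact ⟨l₁ ++ l₂, Language.mem_mul.2 ⟨l₁, h1, l₂, h2, rfl⟩, pi_append _ _⟩

theorem mem_img_add (ρ τ : RegularExpression (Fin 2 × Bool)) (g : G) :
    g ∈ Img (ρ + τ) ↔ g ∈ Img ρ ∨ g ∈ Img τ := by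
  constructor
  · rintro ⟨l, hl, rfl⟩
    rcases (Language.mem_add _ _ _).1 hl with h | h
    · exact Or.inl ⟨l, h, rfl⟩
    · exact Or.inr ⟨l, h, rfl⟩
  · rintro (⟨l, h, rfl⟩ | ⟨l, h, rfl⟩)
    · exact ⟨l, (Language.mem_add _ _ _).2 (Or.inl h), rfl⟩
    · exact ⟨l, (Language.mem_add _ _ _).2 (Or.inr h), rfl⟩

theorem mem_img_star (ρ : RegularExpression (Fin 2 × Bool)) (g : G) :
    g ∈ Img ρ.star ↔ ∃ L : List G, (∀ x ∈ L, x ∈ Img ρ) ∧ g = L.prod := by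
  constructor
  · rintro ⟨l, hl, rfl⟩
    obtain ⟨L, rfl, h⟩ := Language.mem_kstar.1 hl
    refine ⟨L.map π, ?_, pi_flatten L⟩
    intro x hx
    obtain ⟨y, hy, rfl⟩ := List.mem_map.1 hx
    exact ⟨y, h y hy, rfl⟩
  · rintro ⟨L, hL, rfl⟩
    choose! f hf hf' using hL
    refine ⟨(L.map f).flatten, Language.mem_kstar.2 ⟨_, rfl, ?_⟩, ?_⟩
    · intro y hy
      obtain ⟨x, hx, rfl⟩ := List.mem_map.1 hy
      exact hf x hx
    · rw [pi_flatten, List.map_map]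
      congr 1
      conv_rhs => rw [← List.map_id L]
      exact List.map_congr_left hf'

/-- Regular expression matching exactly one word. -/
def lit : List (Fin 2 × Bool) → RegularExpression (Fin 2 × Bool)
  | [] => 1
  | x :: l => RegularExpression.char x * lit l

theorem lit_matches (w : List (Fin 2 × Bool)) : (lit w).matches' = {w} := by
  induction w with
  | nil => rfl
  | cons x l ih =>
    rw [lit, RegularExpression.matches'_mul, ih, RegularExpression.matches'_char]
    ext y
    rw [Language.mem_mul]
    constructor
    · rintro ⟨_, rfl, _, rfl, rfl⟩
      rfl
    · rintro rfl
      exact ⟨_, rfl, _, rfl, rfl⟩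

theorem mem_img_lit (w : List (Fin 2 × Bool)) (g : G) : g ∈ Img (lit w) ↔ g = π w := by
  unfold Img
  rw [lit_matches]
  change g ∈ π '' {w} ↔ _
  simp

theorem mem_img_star_lit (w : List (Fin 2 × Bool)) (g : G) :
    g ∈ Img (lit w).star ↔ ∃ k : ℕ, g = π w ^ k := by
  rw [mem_img_star]
  constructor
  · rintro ⟨L, hL, rfl⟩
    refine ⟨L.length, List.prod_eq_pow_card _ _ fun x hx => ?_⟩
    exact (mem_img_lit _ _).1 (hL x hx)
  · rintro ⟨k, rfl⟩
    refine ⟨List.replicate k (π w), fun x hx => ?_, by simp⟩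
    rw [mem_img_lit]
    exact List.eq_of_mem_replicate hx

/-- The word `w` repeated `n` times. -/
def rep (n : ℕ) (w : List (Fin 2 × Bool)) : List (Fin 2 × Bool) := (List.replicate n w).flatten

theorem pi_rep (n : ℕ) (w : List (Fin 2 × Bool)) : π (rep n w) = π w ^ n := by
  simp [rep, pi_flatten]

/-! ### Part 5: the elements `t^i a t^{-i}` -/

/-- The word `t^i a^{±1} t^{-i}`. -/
def wd (i : ℕ) (e : Bool) : List (Fin 2 × Bool) :=
  rep i [(1, true)] ++ ([(0, e)] ++ rep i [(1, false)])

/-- The element `t^i a t^{-i}`. -/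
def el (i : ℕ) : G := π (wd i true)

/-- The generator `a`. -/
def ga : G := PresentedGroup.of 0
/-- The generator `t`. -/
def gt : G := PresentedGroup.of 1

theorem pi_a : π [(0, true)] = ga := rfl
theorem pi_t : π [(1, true)] = gt := rfl
theorem pi_a' : π [(0, false)] = ga⁻¹ := rfl
theorem pi_t' : π [(1, false)] = gt⁻¹ := rfl

theorem el_eq (i : ℕ) : el i = gt ^ i * (ga * (gt ^ i)⁻¹) := by
  simp only [el, wd, pi_append, pi_rep, pi_a, pi_t, pi_t', inv_pow]

theorem pi_wd_false (i : ℕ) : π (wd i false) = (el i)⁻¹ := by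
  simp only [el_eq, wd, pi_append, pi_rep, pi_a', pi_t, pi_t', inv_pow]
  group

theorem comm01 : Commute ga (el 1) := by
  have h : PresentedGroup.mk {oneRel} oneRel = 1 := PresentedGroup.one_of_mem rfl
  have h' : ga * gt * ga * gt⁻¹ * ga⁻¹ * gt * ga⁻¹ * gt⁻¹ = 1 := h
  rw [el_eq]
  change _ = _
  have e : ga * (gt ^ 1 * (ga * (gt ^ 1)⁻¹)) =
      (ga * gt * ga * gt⁻¹ * ga⁻¹ * gt * ga⁻¹ * gt⁻¹) * (gt ^ 1 * (ga * (gt ^ 1)⁻¹) * ga) := by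
    group
  rw [e, h', one_mul]

theorem comm_el (i : ℕ) : Commute (el i) (el (i + 1)) := by
  have h := comm01
  rw [el_eq] at h ⊢
  rw [el_eq]
  have e : gt ^ (i + 1) * (ga * (gt ^ (i + 1))⁻¹) =
      gt ^ i * (gt ^ 1 * (ga * (gt ^ 1)⁻¹)) * (gt ^ i)⁻¹ := by
    simp [pow_succ, mul_assoc]
  rw [e, ← mul_assoc]
  exact (Commute.conj_iff (gt ^ i)).2 h

/-! ### Part 6: the rational subset attached to a program -/

/-- `U`-elements. -/
def U {H : Type*} [Group H] (a b c d : H) (l : List (ℕ × ℕ)) : H :=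
  (l.map fun q => c ^ q.1 * b ^ q.2 * (a * d)).prod

/-- `V`-elements. -/
def V {H : Type*} [Group H] (a b c d : H) (l : List ℕ) : H :=
  (l.map fun m => a * c ^ m * b ^ m * d).prod

theorem U_append {H : Type*} [Group H] (a b c d : H) (l₁ l₂ : List (ℕ × ℕ)) :
    U a b c d (l₁ ++ l₂) = U a b c d l₁ * U a b c d l₂ := by
  simp [U]

theorem UV_of_path {H : Type*} [Group H] (a b c d : H) (hab : Commute a b) (hbc : Commute b c)
    (hcd : Commute c d) (l : List (ℕ × ℕ)) (n m : ℕ) (h : path n l m) :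
    c ^ n * V a b c d (l.map Prod.snd) = U a b c d l * c ^ m := by
  induction l generalizing n with
  | nil => simp [U, V, show n = m from h]
  | cons q l ih =>
    obtain ⟨rfl, h⟩ := h
    have := ih _ h
    simp only [U, V, List.map_cons, List.prod_cons] at this ⊢
    rw [mul_assoc _ (List.prod _) (c ^ m), ← this]
    have e : a * c ^ q.2 * b ^ q.2 * d = b ^ q.2 * (a * d) * c ^ q.2 := by
      have e1 : Commute a (b ^ q.2) := hab.pow_right _
      have e2 : Commute (b ^ q.2) (c ^ q.2) := hbc.pow_pow _ _
      have e3 : Commute (c ^ q.2) d := hcd.pow_left _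
      calc a * c ^ q.2 * b ^ q.2 * d = a * (c ^ q.2 * b ^ q.2) * d := by group
        _ = (a * b ^ q.2) * (c ^ q.2 * d) := by rw [← e2.eq]; group
        _ = _ := by rw [e1.eq, e3.eq]; group
    rw [e]
    group

/-- The regular expression for `{c^r b^r | 1 ≤ r ≤ n}`. -/
def up : ℕ → RegularExpression (Fin 2 × Bool)
  | 0 => 0
  | n + 1 => up n + lit (rep (n + 1) (wd 2 true) ++ rep (n + 1) (wd 1 true))

theorem mem_img_up (n : ℕ) (g : G) :
    g ∈ Img (up n) ↔ ∃ r, 1 ≤ r ∧ r ≤ n ∧ g = el 2 ^ r * el 1 ^ r := by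
  induction n with
  | zero =>
    constructor
    · rintro ⟨l, hl, _⟩
      exact hl.elim
    · rintro ⟨r, h1, h2, _⟩
      omega
  | succ n ih =>
    rw [up, mem_img_add, ih, mem_img_lit, pi_append, pi_rep, pi_rep]
    constructor
    · rintro (⟨r, h1, h2, rfl⟩ | rfl)
      · exact ⟨r, h1, by omega, rfl⟩
      · exact ⟨n + 1, by omega, le_rfl, rfl⟩
    · rintro ⟨r, h1, h2, rfl⟩
      rcases h2.lt_or_eq with h | rfl
      · exact Or.inl ⟨r, h1, by omega, rfl⟩
      · exact Or.inr rfl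

/-- The word `c^x b^y`. -/
def cb (x y : ℕ) : List (Fin 2 × Bool) := rep x (wd 2 true) ++ rep y (wd 1 true)

/-- The word `a d`. -/
def ad : List (Fin 2 × Bool) := wd 0 true ++ wd 3 true

/-- The regular expression of a program. -/
noncomputable def tr : RP → RegularExpression (Fin 2 × Bool)
  | .inc i => (lit (cb 1 (pr i))).star * lit ad
  | .dec i => (lit (cb (pr i) 1)).star * lit ad
  | .tz i => (lit (cb (pr i) (pr i))).star * (up (pr i - 1) * lit ad)
  | .seq P Q => tr P * tr Q
  | .star P => (tr P).star

theorem pi_cb (x y : ℕ) : π (cb x y) = el 2 ^ x * el 1 ^ y := by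
  simp [cb, pi_append, pi_rep, el]

theorem pi_cb_pow (x y k : ℕ) : π (cb x y) ^ k = el 2 ^ (x * k) * el 1 ^ (y * k) := by
  rw [pi_cb, ((comm_el 1).symm.pow_pow x y).mul_pow, pow_mul, pow_mul]

theorem pi_ad : π ad = el 0 * el 3 := pi_append _ _

theorem mem_img_tr (P : RP) (g : G) :
    g ∈ Img (tr P) ↔ ∃ l ∈ runs P, g = U (el 0) (el 1) (el 2) (el 3) l := by
  induction P generalizing g with
  | inc i =>
    simp only [tr, mem_img_mul, mem_img_star_lit, mem_img_lit, pi_cb_pow, pi_ad]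
    constructor
    · rintro ⟨_, ⟨k, rfl⟩, _, rfl, rfl⟩
      exact ⟨_, ⟨k, rfl⟩, by simp [U]⟩
    · rintro ⟨_, ⟨k, rfl⟩, rfl⟩
      exact ⟨_, ⟨k, rfl⟩, _, rfl, by simp [U]⟩
  | dec i =>
    simp only [tr, mem_img_mul, mem_img_star_lit, mem_img_lit, pi_cb_pow, pi_ad]
    constructor
    · rintro ⟨_, ⟨k, rfl⟩, _, rfl, rfl⟩
      exact ⟨_, ⟨k, rfl⟩, by simp [U]⟩
    · rintro ⟨_, ⟨k, rfl⟩, rfl⟩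
      exact ⟨_, ⟨k, rfl⟩, _, rfl, by simp [U]⟩
  | tz i =>
    simp only [tr, mem_img_mul, mem_img_star_lit, mem_img_lit, pi_cb_pow, pi_ad, mem_img_up]
    have key : ∀ k r : ℕ, el 2 ^ (pr i * k) * el 1 ^ (pr i * k) *
        (el 2 ^ r * el 1 ^ r * (el 0 * el 3)) =
        U (el 0) (el 1) (el 2) (el 3) [(pr i * k + r, pr i * k + r)] := by
      intro k r
      have e2 : Commute (el 1 ^ (pr i * k)) (el 2 ^ r) := (comm_el 1).pow_pow _ _
      simp only [U, List.map_cons, List.map_nil, List.prod_cons, List.prod_nil, mul_one, pow_add]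
      calc _ = el 2 ^ (pr i * k) * (el 1 ^ (pr i * k) * el 2 ^ r) * el 1 ^ r * (el 0 * el 3) := by
            group
        _ = _ := by rw [e2.eq]; group
    constructor
    · rintro ⟨_, ⟨k, rfl⟩, _, ⟨_, ⟨r, h1, h2, rfl⟩, _, rfl, rfl⟩, rfl⟩
      refine ⟨_, ⟨pr i * k + r, ?_, rfl⟩, key k r⟩
      intro h
      have h3 := (Nat.dvd_add_right (dvd_mul_right _ _)).1 h
      have := Nat.le_of_dvd (by omega) h3
      have := (pr_prime i).pos
      omega
    · rintro ⟨_, ⟨k, hk, rfl⟩, rfl⟩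
      refine ⟨_, ⟨k / pr i, rfl⟩, _, ⟨_, ⟨k % pr i, ?_, ?_, rfl⟩, _, rfl, rfl⟩, ?_⟩
      · rw [Nat.one_le_iff_ne_zero]
        exact fun h => hk (Nat.dvd_of_mod_eq_zero h)
      · have := Nat.mod_lt k (pr_prime i).pos
        omega
      · rw [key, Nat.div_add_mod]
  | seq P Q ihP ihQ =>
    simp only [tr, mem_img_mul, ihP, ihQ, runs, Language.mem_mul]
    constructor
    · rintro ⟨_, ⟨l₁, h1, rfl⟩, _, ⟨l₂, h2, rfl⟩, rfl⟩
      exact ⟨_, ⟨l₁, h1, l₂, h2, rfl⟩, (U_append _ _ _ _ _ _).symm⟩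
    · rintro ⟨_, ⟨l₁, h1, l₂, h2, rfl⟩, rfl⟩
      exact ⟨_, ⟨l₁, h1, rfl⟩, _, ⟨l₂, h2, rfl⟩, U_append _ _ _ _ _ _⟩
  | star P ih =>
    simp only [tr, mem_img_star, ih, runs, Language.mem_kstar]
    have hfl : ∀ L : List (List (ℕ × ℕ)), U (el 0) (el 1) (el 2) (el 3) L.flatten =
        (L.map (U (el 0) (el 1) (el 2) (el 3))).prod := by
      intro L
      induction L with
      | nil => rfl
      | cons l L ih => simp [U_append, ih]
    constructor
    · rintro ⟨L, hL, rfl⟩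
      choose! f hf hf' using hL
      refine ⟨_, ⟨L.map f, rfl, ?_⟩, ?_⟩
      · intro y hy
        obtain ⟨x, hx, rfl⟩ := List.mem_map.1 hy
        exact hf x hx
      · rw [hfl, List.map_map]
        congr 1
        conv_lhs => rw [← List.map_id L]
        exact List.map_congr_left hf'
    · rintro ⟨_, ⟨L, rfl, hL⟩, rfl⟩
      refine ⟨_, ?_, hfl L⟩
      intro x hx
      obtain ⟨y, hy, rfl⟩ := List.mem_map.1 hx
      exact ⟨y, hL y hy, rfl⟩

/-- The regular expression for the inverses of `V`-elements. -/
def vinv : RegularExpression (Fin 2 × Bool) :=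
  (lit (wd 3 false) * ((lit (wd 1 false ++ wd 2 false)).star * lit (wd 0 false))).star

theorem mem_img_vinv (g : G) :
    g ∈ Img vinv ↔ ∃ ms, g = (V (el 0) (el 1) (el 2) (el 3) ms)⁻¹ := by
  have key : ∀ k : ℕ, (el 3)⁻¹ * (((el 1)⁻¹ * (el 2)⁻¹) ^ k * (el 0)⁻¹) =
      (el 0 * el 2 ^ k * el 1 ^ k * el 3)⁻¹ := by
    intro k
    have : Commute (el 1)⁻¹ (el 2)⁻¹ := (comm_el 1).inv_inv
    rw [this.mul_pow]
    group
  have blk : ∀ x, x ∈ Img (lit (wd 3 false) *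
      ((lit (wd 1 false ++ wd 2 false)).star * lit (wd 0 false))) ↔
      ∃ k : ℕ, x = (el 0 * el 2 ^ k * el 1 ^ k * el 3)⁻¹ := by
    intro x
    simp only [mem_img_mul, mem_img_lit, mem_img_star_lit, pi_append, pi_wd_false, ← key]
    constructor
    · rintro ⟨_, rfl, _, ⟨_, ⟨k, rfl⟩, _, rfl, rfl⟩, rfl⟩
      exact ⟨k, rfl⟩
    · rintro ⟨k, rfl⟩
      exact ⟨_, rfl, _, ⟨_, ⟨k, rfl⟩, _, rfl, rfl⟩, rfl⟩
  rw [vinv, mem_img_star]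
  simp only [blk]
  constructor
  · rintro ⟨L, hL, rfl⟩
    choose! f hf using hL
    refine ⟨(L.map f).reverse, ?_⟩
    rw [V, List.prod_inv_reverse, List.map_map, ← List.map_reverse, List.reverse_reverse,
      List.map_map]
    congr 1
    conv_lhs => rw [← List.map_id L]
    exact List.map_congr_left hf
  · rintro ⟨ms, rfl⟩
    refine ⟨_, ?_, List.prod_inv_reverse _⟩
    intro x hx
    simp only [List.map_map, List.mem_reverse, List.mem_map] at hx
    obtain ⟨k, _, rfl⟩ := hx
    exact ⟨k, rfl⟩

/-- The rational subset. -/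
noncomputable def rat (P : RP) : RegularExpression (Fin 2 × Bool) :=
  tr P * ((lit (wd 2 true)).star * vinv)

theorem mem_img_rat (P : RP) (n : ℕ) :
    el 2 ^ n ∈ Img (rat P) ↔ ∃ l ∈ runs P, ∃ ms, ∃ e : ℕ,
      el 2 ^ n * V (el 0) (el 1) (el 2) (el 3) ms =
        U (el 0) (el 1) (el 2) (el 3) l * el 2 ^ e := by
  simp only [rat, mem_img_mul, mem_img_tr, mem_img_star_lit, mem_img_vinv]
  constructor
  · rintro ⟨_, ⟨l, hl, rfl⟩, _, ⟨_, ⟨e, rfl⟩, _, ⟨ms, rfl⟩, rfl⟩, h⟩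
    refine ⟨l, hl, ms, e, ?_⟩
    rw [h]
    change _ * (el 2 ^ e * _) * _ = _
    group
  · rintro ⟨l, hl, ms, e, h⟩
    refine ⟨_, ⟨l, hl, rfl⟩, _, ⟨_, ⟨e, rfl⟩, _, ⟨ms, rfl⟩, rfl⟩, ?_⟩
    change _ = _ * (el 2 ^ e * _)
    rw [← mul_assoc, ← h]
    group

/-! ### Part 7: soundness via an action of `G` -/

/-- Positive elements of the free group. -/
def pos (l : List Bool) : FreeGroup Bool := FreeGroup.mk (l.map fun x => (x, true))

theorem pos_append (l₁ l₂ : List Bool) : pos (l₁ ++ l₂) = pos l₁ * pos l₂ := by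
  simp [pos, FreeGroup.mul_mk]

theorem pos_nil : pos [] = 1 := rfl

theorem pos_replicate (n : ℕ) (x : Bool) : pos (List.replicate n x) = pos [x] ^ n := by
  induction n with
  | zero => rfl
  | succ n ih => rw [List.replicate_succ', pos_append, ih, pow_succ]

theorem pos_inj {l₁ l₂ : List Bool} (h : pos l₁ = pos l₂) : l₁ = l₂ := by
  have red : ∀ l : List Bool, FreeGroup.IsReduced (l.map fun x => (x, true)) := by
    intro l
    unfold FreeGroup.IsReduced
    rw [List.isChain_map]
    induction l with
    | nil => simp
    | cons x l ih => cases l <;> simp_all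
  have h2 := congrArg FreeGroup.toWord h
  simp only [pos, FreeGroup.toWord_mk, (red _).reduce_eq] at h2
  exact List.map_injective_iff.2 (fun x y hxy => (Prod.ext_iff.1 hxy).1) h2

/-- The cocycle. -/
def al (s : ℤ) : FreeGroup Bool := if s = 0 then pos [true] else if s = 2 then pos [false] else 1

/-- Action of the generator `a`. -/
def actA : Equiv.Perm (ℤ × FreeGroup Bool) :=
  Equiv.prodShear (Equiv.refl ℤ) fun s => Equiv.mulLeft (al s)

/-- Action of the generator `t`. -/
def actT : Equiv.Perm (ℤ × FreeGroup Bool) :=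
  Equiv.prodCongr (Equiv.addRight 1) (Equiv.refl _)

theorem actA_apply (s : ℤ) (w : FreeGroup Bool) : actA (s, w) = (s, al s * w) := rfl
theorem actT_apply (s : ℤ) (w : FreeGroup Bool) : actT (s, w) = (s + 1, w) := rfl
theorem actT_inv_apply (s : ℤ) (w : FreeGroup Bool) : actT⁻¹ (s, w) = (s - 1, w) := rfl

theorem al_comm (s : ℤ) : al s * al (s - 1) = al (s - 1) * al s := by
  unfold al
  split_ifs <;> first | omega | simp

/-- The action of `G`. -/
def act : G →* Equiv.Perm (ℤ × FreeGroup Bool) :=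
  PresentedGroup.toGroup (f := ![actA, actT]) (by
    intro r hr
    rw [Set.mem_singleton_iff] at hr
    subst hr
    simp only [oneRel, map_mul, map_inv, FreeGroup.lift_apply_of, Matrix.cons_val_zero,
      Matrix.cons_val_one]
    have h : actA * (actT * actA * actT⁻¹) = (actT * actA * actT⁻¹) * actA := by
      ext1 ⟨s, w⟩
      simp only [Equiv.Perm.mul_apply, actA_apply, actT_apply, actT_inv_apply, sub_add_cancel]
      rw [← mul_assoc, ← mul_assoc, al_comm]
    have e : actA * actT * actA * actT⁻¹ * actA⁻¹ * actT * actA⁻¹ * actT⁻¹ =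
        (actA * (actT * actA * actT⁻¹)) * ((actT * actA * actT⁻¹) * actA)⁻¹ := by group
    rw [e, h, mul_inv_cancel])

theorem act_a : act ga = actA := PresentedGroup.toGroup.of _
theorem act_t : act gt = actT := PresentedGroup.toGroup.of _

theorem act_el (i : ℕ) (s : ℤ) (w : FreeGroup Bool) :
    act (el i) (s, w) = (s, al (s - i) * w) := by
  have h1 : ∀ (i : ℕ) (s : ℤ) (w : FreeGroup Bool), (actT ^ i) (s, w) = (s + i, w) := by
    intro i
    induction i with
    | zero => intro s w; simp
    | succ i ih =>
      intro s w
      rw [pow_succ, Equiv.Perm.mul_apply, actT_apply, ih]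
      push_cast
      congr 1
      ring
  have h2 : (actT ^ i)⁻¹ (s, w) = (s - i, w) := by
    rw [Equiv.Perm.inv_eq_iff_eq, h1]
    simp
  rw [el_eq]
  simp only [map_mul, map_inv, map_pow, act_a, act_t, Equiv.Perm.mul_apply, h2, actA_apply, h1,
    sub_add_cancel]

/-- `g` acts on the fibre over `s` by left multiplication by `u`. -/
def D (s : ℤ) (g : G) (u : FreeGroup Bool) : Prop := ∀ w, act g (s, w) = (s, u * w)

theorem D.mul {s : ℤ} {g h : G} {u v : FreeGroup Bool} (h1 : D s g u) (h2 : D s h v) :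
    D s (g * h) (u * v) := by
  intro w
  rw [map_mul, Equiv.Perm.mul_apply, h2, h1, mul_assoc]

theorem D.one (s : ℤ) : D s 1 1 := by
  intro w
  simp

theorem D.pow {s : ℤ} {g : G} {u : FreeGroup Bool} (h : D s g u) (n : ℕ) :
    D s (g ^ n) (u ^ n) := by
  induction n with
  | zero => simpa using D.one s
  | succ n ih => simpa [pow_succ] using ih.mul h

theorem D.uniq {s : ℤ} {g : G} {u v : FreeGroup Bool} (h1 : D s g u) (h2 : D s g v) : u = v := by
  have := (h1 1).symm.trans (h2 1)
  simpa using this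

theorem D.list {ι : Type*} {s : ℤ} (f : ι → G) (f' : ι → FreeGroup Bool)
    (h : ∀ i, D s (f i) (f' i)) (l : List ι) : D s (l.map f).prod (l.map f').prod := by
  induction l with
  | nil => exact D.one s
  | cons x l ih => simpa using (h x).mul ih

theorem D.UV {s : ℤ} {a b c d : G} {a' b' c' d' : FreeGroup Bool} (ha : D s a a') (hb : D s b b')
    (hc : D s c c') (hd : D s d d') {l : List (ℕ × ℕ)} {ms : List ℕ} {n e : ℕ}
    (h : c ^ n * V a b c d ms = U a b c d l * c ^ e) :
    c' ^ n * V a' b' c' d' ms = U a' b' c' d' l * c' ^ e := by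
  have h1 : D s (c ^ n * V a b c d ms) (c' ^ n * V a' b' c' d' ms) :=
    (hc.pow n).mul (D.list _ _ (fun m => ((ha.mul (hc.pow m)).mul (hb.pow m)).mul hd) ms)
  have h2 : D s (U a b c d l * c ^ e) (U a' b' c' d' l * c' ^ e) :=
    (D.list _ _ (fun q : ℕ × ℕ => ((hc.pow q.1).mul (hb.pow q.2)).mul (ha.mul hd)) l).mul
      (hc.pow e)
  rw [h] at h1
  exact h1.uniq h2

theorem block {n m : ℕ} {x y : Bool} (hxy : x ≠ y) {A B : List Bool}
    (h : List.replicate n x ++ y :: A = List.replicate m x ++ y :: B) : n = m ∧ A = B := by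
  induction n generalizing m with
  | zero =>
    cases m with
    | zero => simpa using h
    | succ m => simp [List.replicate_succ, hxy.symm] at h
  | succ n ih =>
    cases m with
    | zero => simp [List.replicate_succ, hxy] at h
    | succ m =>
      simp only [List.replicate_succ, List.cons_append, List.cons.injEq, true_and] at h
      obtain ⟨h1, h2⟩ := ih h
      exact ⟨by rw [h1], h2⟩

theorem sound_aux (l : List (ℕ × ℕ)) (ms : List ℕ) (n e : ℕ)
    (h1 : List.replicate n true ++ ms.flatMap (fun m => false :: List.replicate m true) =
      l.flatMap (fun q => List.replicate q.1 true ++ [false]) ++ List.replicate e true)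
    (h2 : ms.flatMap (fun m => List.replicate m false ++ [true]) =
      l.flatMap (fun q => List.replicate q.2 false ++ [true])) : ∃ m, path n l m := by
  induction l generalizing n ms with
  | nil => exact ⟨n, rfl⟩
  | cons q l ih =>
    cases ms with
    | nil =>
      have := congrArg List.length h2
      simp at this
    | cons m ms =>
      simp only [List.flatMap_cons, List.append_assoc, List.cons_append, List.nil_append]
        at h1 h2
      obtain ⟨rfl, h3⟩ := block (by simp) h1
      obtain ⟨rfl, h4⟩ := block (by simp) h2
      obtain ⟨k, hk⟩ := ih ms _ h3 h4
      exact ⟨k, rfl, hk⟩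

theorem pos_flatMap {ι : Type*} (f : ι → List Bool) (l : List ι) :
    pos (l.flatMap f) = (l.map fun i => pos (f i)).prod := by
  induction l with
  | nil => rfl
  | cons x l ih => simp [pos_append, ih]

theorem sound (l : List (ℕ × ℕ)) (ms : List ℕ) (n e : ℕ)
    (h : el 2 ^ n * V (el 0) (el 1) (el 2) (el 3) ms =
        U (el 0) (el 1) (el 2) (el 3) l * el 2 ^ e) : ∃ m, path n l m := by
  have H1 := D.UV (s := 2) (a' := pos [false]) (b' := 1) (c' := pos [true]) (d' := 1)
    (fun w => by rw [act_el]; rfl) (fun w => by rw [act_el]; rfl)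
    (fun w => by rw [act_el]; rfl) (fun w => by rw [act_el]; rfl) h
  have H2 := D.UV (s := 3) (a' := 1) (b' := pos [false]) (c' := 1) (d' := pos [true])
    (fun w => by rw [act_el]; rfl) (fun w => by rw [act_el]; rfl)
    (fun w => by rw [act_el]; rfl) (fun w => by rw [act_el]; rfl) h
  refine sound_aux l ms n e (pos_inj ?_) (pos_inj ?_)
  · have e1 : ∀ m, pos (false :: List.replicate m true) = pos [false] * pos [true] ^ m := by
      intro m
      rw [← pos_replicate, ← pos_append]
      rfl
    simp only [pos_append, pos_replicate, pos_flatMap, e1]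
    simpa [U, V] using H1
  · simp only [pos_append, pos_replicate, pos_flatMap]
    simpa [U, V] using H2

theorem mem_rat_iff (P : RP) (n : ℕ) :
    el 2 ^ n ∈ Img (rat P) ↔ ∃ m, ∃ l ∈ runs P, path n l m := by
  rw [mem_img_rat]
  constructor
  · rintro ⟨l, hl, ms, e, h⟩
    obtain ⟨m, hm⟩ := sound l ms n e h
    exact ⟨m, l, hl, hm⟩
  · rintro ⟨m, l, hl, hm⟩
    exact ⟨l, hl, _, m, UV_of_path _ _ _ _ (comm_el 0) (comm_el 1) (comm_el 2) l n m hm⟩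

/-! ### Part 8: conclusion -/

theorem exists_prog (f : ℕ →. ℕ) (hf : Partrec f) :
    ∃ P : RP, ∀ x : ℕ, (∃ τ, P.sem (Function.update (fun _ => 0) 0 x) τ) ↔ (f x).Dom := by
  have hc := comp_partrec (Nat.Partrec'.part_iff₁.2 hf)
  obtain ⟨P, hP⟩ := hc (fun _ => 0) 1 2 (by simp) (by simp) (by simp)
  refine ⟨P, fun x => ?_⟩
  have := hP (Function.update (fun _ => 0) 0 x) (by simp) (by
    intro j hj
    rw [Function.update_of_ne (by omega)])
  simp only [this]
  have e : (List.Vector.ofFn fun _ : Fin 1 => Function.update (fun _ => 0) 0 x 0).head = x := by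
    rw [← List.Vector.get_zero, List.Vector.get_ofFn]
    simp
  constructor
  · rintro ⟨τ, y, hy, _⟩
    have hy' : y ∈ f (List.Vector.head _) := hy
    rw [e] at hy'
    exact Part.dom_iff_mem.2 ⟨y, hy'⟩
  · intro hd
    obtain ⟨y, hy⟩ := Part.dom_iff_mem.1 hd
    refine ⟨_, y, ?_, rfl⟩
    rwa [e]

theorem enc_init (K x : ℕ) (hK : 0 < K) :
    enc K (Function.update (fun _ => 0) 0 x) = pr 0 ^ x := by
  obtain ⟨K, rfl⟩ := Nat.exists_eq_succ_of_ne_zero hK.ne'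
  simp [enc, Finset.prod_range_succ']

theorem primrec_word : Primrec fun x : ℕ => rep (pr 0 ^ x) (wd 2 true) := by
  have h1 : Primrec fun x : ℕ => pr 0 ^ x := by
    have : Primrec (Nat.rec (motive := fun _ => ℕ) 1 fun _ y => y * pr 0) :=
      Primrec.nat_rec₁ (f := fun _ y => y * pr 0) 1
        (Primrec.nat_mul.comp Primrec.snd (Primrec.const _))
    refine this.of_eq fun n => ?_
    induction n with
    | zero => rfl
    | succ n ih => rw [pow_succ, ← ih]
  have h2 : Primrec fun x : ℕ => (List.range (pr 0 ^ x)).flatMap fun _ => wd 2 true :=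
    Primrec.list_flatMap (Primrec.list_range.comp h1) (Primrec.const _).to₂
  refine h2.of_eq fun n => ?_
  generalize pr 0 ^ n = k
  rw [rep, List.flatMap, List.map_const', List.length_range]

end RSM

/-- The one-relator group `G` has undecidable rational subset membership problem:
there is a fixed regular expression `ρ` over the alphabet `Fin 2 × Bool` such that
membership of `π l` in the image in `G` of the language of `ρ` is undecidable. -/
theorem rational_subset_membership_undecidable :
    ∃ ρ : RegularExpression (Fin 2 × Bool),
      ¬ ComputablePred
        (fun l : List (Fin 2 × Bool) => π l ∈ π '' (ρ.matches' : Set (List (Fin 2 × Bool)))) := by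
  have hf : Partrec fun x : ℕ => Nat.Partrec.Code.eval (Nat.Partrec.Code.ofNatCode x) 0 :=
    Nat.Partrec.Code.eval_part.comp
      ((Computable.ofNat Nat.Partrec.Code).comp Computable.id) (Computable.const 0)
  obtain ⟨P, hP⟩ := RSM.exists_prog _ hf
  refine ⟨RSM.rat P, fun h => ComputablePred.halting_problem 0 ?_⟩
  refine ComputablePred.computable_of_manyOneReducible ?_ h
  refine ⟨fun c => RSM.rep (RSM.pr 0 ^ (Encodable.encode c)) (RSM.wd 2 true),
    (RSM.primrec_word.comp Primrec.encode).to_comp, fun c => ?_⟩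
  have e : Nat.Partrec.Code.ofNatCode (Encodable.encode c) = c :=
    Denumerable.ofNat_encode (α := Nat.Partrec.Code) c
  have h1 := hP (Encodable.encode c)
  rw [e] at h1
  refine h1.symm.trans ?_
  beta_reduce
  rw [RSM.pi_rep]
  refine Iff.trans ?_ (RSM.mem_rat_iff P _).symm
  have h2 := RSM.sim (P.bd + 1) P (by omega) (Function.update (fun _ => 0) 0 (Encodable.encode c))
  rw [RSM.enc_init _ _ (by omega)] at h2
  simp only [h2]
  constructor
  · rintro ⟨τ, hτ⟩
    exact ⟨_, τ, hτ, rfl⟩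
  · rintro ⟨_, τ, hτ, _⟩
    exact ⟨τ, hτ⟩
end
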